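/- arXiv:math/0409349 — 2 statements merged into one kernel-verified Lean document; each statement's English description precedes it below -/
import Mathlib

section
/- If X and Y are compact absolute retracts contained in the plane ℝ², then every connected component of X ∩ Y is a compact absolute retract (in particular, X ∩ Y is nonempty or the statement holds vacuously: each component, if any, is an AR). -/
open Topology

/-- A (nonempty compact metrizable) topological space is an absolute retract if,
whenever it is embedded as a closed subspace of a metrizable space, its image is
a retract of that space. -/
def IsAbsoluteRetract (X : Type) [TopologicalSpace X] : Prop :=
  Nonempty X ∧
    ∀ (Z : Type) (_ : TopologicalSpace Z), TopologicalSpace.MetrizableSpace Z →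
      ∀ f : X → Z, Topology.IsClosedEmbedding f →
        ∃ r : Z → X, Continuous r ∧ ∀ x : X, r (f x) = x

namespace PlaneAR
open Set Filter Topology Metric Complex

/-- `g` has a continuous logarithm on `C`. -/
def HasLog (C : Set ℂ) (g : ℂ → ℂ) : Prop :=
  ∃ l : ℂ → ℂ, ContinuousOn l C ∧ ∀ z ∈ C, exp (l z) = g z

lemma HasLog.mono {C D : Set ℂ} {g : ℂ → ℂ} (h : HasLog C g) (hD : D ⊆ C) : HasLog D g := by
  obtain ⟨l, hl, he⟩ := h
  exact ⟨l, hl.mono hD, fun z hz => he z (hD hz)⟩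

lemma HasLog.congr {C : Set ℂ} {g g' : ℂ → ℂ} (h : HasLog C g) (hD : ∀ z ∈ C, g z = g' z) :
    HasLog C g' := by
  obtain ⟨l, hl, he⟩ := h
  exact ⟨l, hl, fun z hz => (he z hz).trans (hD z hz)⟩

lemma HasLog.mul {C : Set ℂ} {g g' : ℂ → ℂ} (h : HasLog C g) (h' : HasLog C g') :
    HasLog C (fun z => g z * g' z) := by
  obtain ⟨l, hl, he⟩ := h
  obtain ⟨l', hl', he'⟩ := h'
  exact ⟨fun z => l z + l' z, hl.add hl', fun z hz => by
    rw [exp_add, he z hz, he' z hz]⟩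

lemma HasLog.inv {C : Set ℂ} {g : ℂ → ℂ} (h : HasLog C g) : HasLog C (fun z => (g z)⁻¹) := by
  obtain ⟨l, hl, he⟩ := h
  exact ⟨fun z => - l z, hl.neg, fun z hz => by rw [exp_neg, he z hz]⟩

lemma HasLog.const {C : Set ℂ} {a : ℂ} (h : a ≠ 0) : HasLog C (fun _ => a) :=
  ⟨fun _ => log a, continuousOn_const, fun _ _ => exp_log h⟩

lemma HasLog.of_slit {C : Set ℂ} {g : ℂ → ℂ} (hg : ContinuousOn g C)
    (h : ∀ z ∈ C, g z ∈ slitPlane) : HasLog C g :=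
  ⟨fun z => log (g z), hg.clog h, fun z hz => exp_log (slitPlane_ne_zero (h z hz))⟩

lemma hasLog_homotopy {α : Type*} [TopologicalSpace α] {T : Set α} (hT : IsPreconnected T)
    {C : Set ℂ} (hC : IsCompact C) {G : α → ℂ → ℂ}
    (hG : ContinuousOn (fun p : α × ℂ => G p.1 p.2) (T ×ˢ C))
    (h0 : ∀ t ∈ T, ∀ z ∈ C, G t z ≠ 0) {s t : α} (hs : s ∈ T) (ht : t ∈ T)
    (h : HasLog C (G s)) : HasLog C (G t) := by
  have : PreconnectedSpace T := isPreconnected_iff_preconnectedSpace.1 hT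
  have hCc : CompactSpace C := isCompact_iff_compactSpace.1 hC
  have hcont : Continuous (fun p : T × C => G p.1 p.2) := by
    have := continuousOn_iff_continuous_domRestrict.1 hG
    exact this.comp (f := fun p : T × C => (⟨(p.1, p.2), ⟨p.1.2, p.2.2⟩⟩ : ↥(T ×ˢ C))) (by fun_prop)
  have key : ∀ x ∈ (univ : Set T), ∀ y ∈ (univ : Set T),
      (HasLog C (G x) ↔ HasLog C (G y)) := by
    intro x hx y hy
    refine isPreconnected_univ.induction₂' (fun x y : T => HasLog C (G x) ↔ HasLog C (G y))
      ?_ ?_ hx hy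
    · intro x _
      rw [nhdsWithin_univ]
      have hev : ∀ᶠ y : T in 𝓝 x, ∀ z ∈ (univ : Set C), G y z / G x z ∈ slitPlane := by
        apply isCompact_univ.eventually_forall_of_forall_eventually
        intro z _
        have hc : Continuous (fun p : T × C => G p.1 p.2 / G x p.2) :=
          hcont.div (hcont.comp (f := fun p : T × C => (x, p.2)) (by fun_prop))
            (fun p => h0 x x.2 p.2 p.2.2)
        refine hc.continuousAt.eventually_mem (isOpen_slitPlane.mem_nhds ?_)
        simp [div_self (h0 x x.2 z z.2), one_mem_slitPlane]
      filter_upwards [hev] with y hy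
      have hcy : ∀ y : T, ContinuousOn (G y) C := by
        intro y
        rw [continuousOn_iff_continuous_domRestrict]
        exact hcont.comp (f := fun z : C => (y, z)) (by fun_prop)
      have h1 : HasLog C (fun z => G y z / G x z) :=
        .of_slit ((hcy y).div (hcy x) (fun z hz => h0 x x.2 z hz)) (fun z hz => hy ⟨z, hz⟩ trivial)
      have h2 : HasLog C (fun z => G x z / G y z) := by
        exact h1.inv.congr (fun z hz => by simp)
      have h3 : HasLog C (G x) ↔ HasLog C (G y) := by
        constructor
        · intro h
          refine (h.mul h1).congr (fun z hz => ?_)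
          field_simp [h0 x x.2 z hz]
        · intro h
          refine (h.mul h2).congr (fun z hz => ?_)
          field_simp [h0 y y.2 z hz]
      exact ⟨h3, h3.symm⟩
    · intro a b c _ _ _ h1 h2
      exact h1.trans h2
  exact (key ⟨s, hs⟩ trivial ⟨t, ht⟩ trivial).1 h

/-- Two logarithms on a connected set differ by a constant. -/
lemma log_unique {C : Set ℂ} (hC : IsPreconnected C) {l l' : ℂ → ℂ}
    (hl : ContinuousOn l C) (hl' : ContinuousOn l' C)
    (h : ∀ z ∈ C, exp (l z) = exp (l' z)) {x y : ℂ} (hx : x ∈ C) (hy : y ∈ C) :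
    l x - l' x = l y - l' y := by
  have h1 : ∀ z ∈ C, ∃ n : ℤ, l z - l' z = n * (2 * Real.pi * I) := by
    intro z hz
    rw [← exp_eq_one_iff, exp_sub, h z hz, div_self (exp_ne_zero _)]
  set T : Set ℂ := range (fun n : ℤ => (n : ℂ) * (2 * Real.pi * I))
  have hT : IsDiscrete T := by
    have : DiscreteTopology T := by
      have hce : IsClosedEmbedding (fun n : ℤ => (n : ℂ) * (2 * Real.pi * I)) := by
        have h2 : (2 * Real.pi * I : ℂ) ≠ 0 := by
          simp [Real.pi_ne_zero]
        exact (Homeomorph.mulRight₀ _ h2).isClosedEmbedding.comp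
          Complex.isClosedEmbedding_intCast
      exact hce.isEmbedding.toHomeomorph.symm.isEmbedding.discreteTopology
    exact ⟨this⟩
  refine hC.constant_of_mapsTo hT (f := fun z => l z - l' z) (hl.sub hl') ?_ hx hy
  intro z hz
  obtain ⟨n, hn⟩ := h1 z hz
  exact ⟨n, hn.symm⟩

/-- Continuous nonvanishing functions have logs on closed balls. -/
lemma hasLog_closedBall {F : ℂ → ℂ} (hF : Continuous F) (h0 : ∀ z, F z ≠ 0) (R : ℝ) :
    HasLog (closedBall 0 R) F := by
  have := hasLog_homotopy (T := (univ : Set ℝ)) isPreconnected_univ (isCompact_closedBall (0:ℂ) R)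
    (G := fun t z => F (t * z)) (by fun_prop) (fun _ _ _ _ => h0 _) (s := 0) (t := 1) trivial
    trivial (by simpa using HasLog.const (h0 0))
  simpa using this

lemma hasLog_sub_of_ball {c x : ℂ} {r : ℝ} (h : c ∉ closedBall x r) :
    HasLog (closedBall x r) (fun z => z - c) := by
  have hxc : r < ‖x - c‖ := by
    rw [mem_closedBall, dist_comm, dist_eq_norm] at h
    linarith
  by_cases hr : 0 ≤ r
  · have hx : x - c ≠ 0 := by
      intro hx
      rw [hx, norm_zero] at hxc
      linarith
    have h1 : HasLog (closedBall x r) (fun z => (z - c) / (x - c)) := by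
      refine .of_slit (by fun_prop) (fun z hz => ?_)
      have : (z - c) / (x - c) = 1 + (z - x) / (x - c) := by field_simp; ring
      rw [this]
      apply mem_slitPlane_of_norm_lt_one
      rw [norm_div, div_lt_one (norm_pos_iff.2 hx)]
      rw [mem_closedBall, dist_eq_norm] at hz
      linarith
    exact (h1.mul (HasLog.const hx)).congr (fun z _ => by field_simp)
  · rw [closedBall_eq_empty.2 (by linarith)]
    exact ⟨fun _ => 0, continuousOn_empty _, by simp⟩

/-- no log of `z - a` on big circles -/
lemma not_hasLog_sphere {a : ℂ} {R : ℝ} (hR : 0 < R) :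
    ¬ HasLog (sphere a R) (fun z => z - a) := by
  rintro ⟨l, hl, he⟩
  have hm : ∀ t : ℝ, a + R * exp (t * I) ∈ sphere a R := by
    intro t
    simp [dist_eq_norm, Complex.norm_exp_ofReal_mul_I, abs_of_pos hR]
  have hR' : (R : ℂ) ≠ 0 := by exact_mod_cast hR.ne'
  have h1 : Continuous (fun t : ℝ => l (a + R * exp (t * I))) := by
    refine continuousOn_univ.1 (hl.comp (by fun_prop) (fun t _ => hm t))
  have key := log_unique (C := {z : ℂ | z.im = 0}) (l := fun z => l (a + R * exp (z.re * I)))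
    (l' := fun z => log R + z.re * I) (by
      have : {z : ℂ | z.im = 0} = range (fun x : ℝ => (x : ℂ)) := by
        ext z
        constructor
        · intro h
          exact ⟨z.re, Complex.ext (by simp) (by simpa using h.symm)⟩
        · rintro ⟨x, rfl⟩
          simp
      rw [this]
      exact isPreconnected_range continuous_ofReal)
    ((h1.comp continuous_re).continuousOn) (by fun_prop)
    (fun z _ => by
      simp only [he _ (hm _), exp_add, exp_log hR']
      ring) (x := 0) (y := ((2 * Real.pi : ℝ) : ℂ)) (by simp) (by simp)
  simp only [zero_re, ofReal_zero, zero_mul, exp_zero, mul_one, add_zero, ofReal_re] at key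
  have h2 : exp (((2 * Real.pi : ℝ) : ℂ) * I) = 1 := by
    push_cast
    exact exp_two_pi_mul_I
  rw [h2, mul_one] at key
  have : ((2 * Real.pi : ℝ) : ℂ) * I = 0 := by linear_combination key
  simp [Real.pi_ne_zero] at this

lemma isConnected_compl_closedBall (x : ℂ) {r : ℝ} (hr : 0 ≤ r) : IsConnected (closedBall x r)ᶜ := by
  have : (closedBall x r)ᶜ = (fun p : ℝ × ℝ => x + p.1 * exp (p.2 * I)) '' (Ioi r ×ˢ univ) := by
    ext z
    simp only [mem_compl_iff, mem_closedBall, not_le, mem_image, mem_prod, mem_Ioi, mem_univ,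
      and_true, Prod.exists]
    constructor
    · intro h
      refine ⟨‖z - x‖, arg (z - x), by rwa [dist_eq_norm] at h, ?_⟩
      rw [norm_mul_exp_arg_mul_I]
      ring
    · rintro ⟨s, t, hs, rfl⟩
      have : 0 < s := by linarith
      simpa [dist_eq_norm, Complex.norm_exp_ofReal_mul_I, abs_of_pos this] using hs
  rw [this]
  refine IsConnected.image ?_ _ (by fun_prop)
  exact isConnected_Ioi.prod isConnected_univ

/-- Log of `z-a` propagates along the complement. -/
lemma hasLog_sub_of_connected {A W : Set ℂ} (hA : IsCompact A) (hW : IsPreconnected W)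
    (hd : ∀ z ∈ W, z ∉ A) {a b : ℂ} (ha : a ∈ W) (hb : b ∈ W)
    (h : HasLog A (fun z => z - a)) : HasLog A (fun z => z - b) := by
  refine hasLog_homotopy hW hA (G := fun a z => z - a) (by fun_prop) ?_ ha hb h
  intro t ht z hz h
  exact hd t ht (by rw [← sub_eq_zero.1 h]; exact hz)

lemma hasLog_sub_of_unbounded {A W : Set ℂ} (hA : IsCompact A) (hW : IsPreconnected W)
    (hd : ∀ z ∈ W, z ∉ A) (hWb : ¬ Bornology.IsBounded W) {a : ℂ} (ha : a ∈ W) :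
    HasLog A (fun z => z - a) := by
  obtain ⟨R, hR⟩ := hA.isBounded.subset_closedBall (0 : ℂ)
  obtain ⟨b, hb, hbR⟩ : ∃ b ∈ W, b ∉ closedBall (0:ℂ) R := by
    by_contra! h
    exact hWb (isBounded_closedBall.subset h)
  exact hasLog_sub_of_connected hA hW hd hb ha ((hasLog_sub_of_ball hbR).mono hR)

lemma frontier_component {F : Set ℂ} (hF : IsOpen F) (x : ℂ) :
    frontier (connectedComponentIn F x) ⊆ Fᶜ := by
  intro z hz hzF
  have ho : IsOpen (connectedComponentIn F z) := hF.connectedComponentIn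
  have hz1 := frontier_subset_closure hz
  rw [_root_.mem_closure_iff] at hz1
  obtain ⟨w, hw1, hw2⟩ := hz1 _ ho (mem_connectedComponentIn hzF)
  have e := (connectedComponentIn_eq hw1).trans (connectedComponentIn_eq hw2).symm
  have : z ∈ connectedComponentIn F x := by
    rw [← e]
    exact mem_connectedComponentIn hzF
  rw [(hF.connectedComponentIn (x := x)).frontier_eq] at hz
  exact hz.2 this

lemma tietze {A : Set ℂ} (hA : IsClosed A) {l : ℂ → ℂ} (hl : ContinuousOn l A) :
    ∃ L : ℂ → ℂ, Continuous L ∧ ∀ z ∈ A, L z = l z := by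
  obtain ⟨g, hg⟩ := ContinuousMap.exists_restrict_eq hA
    ⟨A.domRestrict l, continuousOn_iff_continuous_domRestrict.1 hl⟩
  refine ⟨g, g.continuous, fun z hz => ?_⟩
  have := congrArg (fun f => f ⟨z, hz⟩) hg
  simpa using this

/-- Borsuk: if `z - a` has a log on `A`, then `a` lies in an unbounded complementary component. -/
lemma unbounded_of_hasLog {A : Set ℂ} (hA : IsCompact A) {a : ℂ} (ha : a ∉ A)
    (h : HasLog A (fun z => z - a)) : ¬ Bornology.IsBounded (connectedComponentIn Aᶜ a) := by
  intro hb
  classical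
  obtain ⟨l, hl, he⟩ := h
  obtain ⟨Λ, hΛ, hΛl⟩ := tietze hA.isClosed hl
  set W := connectedComponentIn Aᶜ a with hWdef
  have haW : a ∈ W := mem_connectedComponentIn ha
  have hWo : IsOpen W := hA.isClosed.isOpen_compl.connectedComponentIn
  have hfr : frontier W ⊆ A := by
    have := frontier_component hA.isClosed.isOpen_compl a
    rwa [compl_compl] at this
  set F : ℂ → ℂ := fun z => if z ∈ W then exp (Λ z) else z - a with hF
  have hFc : Continuous F := by
    refine Continuous.if ?_ (by fun_prop) (by fun_prop)
    intro z hz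
    have : z ∈ A := hfr hz
    rw [hΛl z this, he z this]
  have hF0 : ∀ z, F z ≠ 0 := by
    intro z
    by_cases hz : z ∈ W
    · simp [hF, hz, exp_ne_zero]
    · simp only [hF, hz, if_false]
      intro h
      rw [sub_eq_zero] at h
      exact hz (h ▸ haW)
  obtain ⟨R, hR⟩ := hb.subset_closedBall a
  have hRpos : 0 < |R| + 1 := by positivity
  refine not_hasLog_sphere (a := a) hRpos ?_
  refine ((hasLog_closedBall hFc hF0 (|R| + 1 + ‖a‖)).mono ?_).congr ?_
  · intro z hz
    simp only [mem_sphere, dist_eq_norm, mem_closedBall] at hz ⊢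
    have := norm_add_le (z - a) a
    simp at this ⊢
    linarith
  · intro z hz
    have : z ∉ W := by
      intro hzW
      have h1 := hR hzW
      rw [mem_closedBall] at h1
      rw [mem_sphere] at hz
      have := le_abs_self R
      linarith
    simp [hF, this]

lemma unbounded_components_eq {A : Set ℂ} (hA : IsCompact A) {a b : ℂ} 
    (h1 : ¬ Bornology.IsBounded (connectedComponentIn Aᶜ a))
    (h2 : ¬ Bornology.IsBounded (connectedComponentIn Aᶜ b)) :
    connectedComponentIn Aᶜ a = connectedComponentIn Aᶜ b := by
  obtain ⟨R, hR⟩ := hA.isBounded.subset_closedBall (0 : ℂ)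
  have hc := isConnected_compl_closedBall 0 (abs_nonneg R)
  have hsub : (closedBall (0:ℂ) |R|)ᶜ ⊆ Aᶜ :=
    compl_subset_compl.2 (hR.trans (closedBall_subset_closedBall (le_abs_self R)))
  have key : ∀ a, ¬ Bornology.IsBounded (connectedComponentIn Aᶜ a) →
      ∃ b ∈ (closedBall (0:ℂ) |R|)ᶜ, connectedComponentIn Aᶜ a = connectedComponentIn Aᶜ b := by
    intro a h1
    obtain ⟨b, hb, hbR⟩ : ∃ b ∈ connectedComponentIn Aᶜ a, b ∉ closedBall (0:ℂ) |R| := by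
      by_contra! h
      exact h1 (isBounded_closedBall.subset h)
    exact ⟨b, hbR, connectedComponentIn_eq hb⟩
  obtain ⟨a', ha', ea⟩ := key a h1
  obtain ⟨b', hb', eb⟩ := key b h2
  rw [ea, eb]
  exact connectedComponentIn_eq (hc.isPreconnected.subset_connectedComponentIn ha' hsub hb')

lemma isConnected_compl_of_hasLog {A : Set ℂ} (hA : IsCompact A)
    (h : ∀ a, a ∉ A → HasLog A (fun z => z - a)) : IsConnected Aᶜ := by
  obtain ⟨a, ha⟩ : Aᶜ.Nonempty := by
    by_contra hne
    rw [not_nonempty_iff_eq_empty, compl_empty_iff] at hne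
    exact NormedSpace.unbounded_univ ℂ ℂ (hne ▸ hA.isBounded)
  have : Aᶜ = connectedComponentIn Aᶜ a := by
    apply Subset.antisymm _ (connectedComponentIn_subset _ _)
    intro b hb
    rw [unbounded_components_eq hA (unbounded_of_hasLog hA ha (h a ha))
      (unbounded_of_hasLog hA hb (h b hb))]
    exact mem_connectedComponentIn hb
  rw [this]
  exact isConnected_connectedComponentIn_iff.2 ha

/-- gluing logs along a set where the difference is constant -/
lemma hasLog_union {A B : Set ℂ} (hA : IsClosed A) (hB : IsClosed B) {g l l' : ℂ → ℂ}
    (hl : ContinuousOn l A) (hl' : ContinuousOn l' B) (h : ∀ z ∈ A, exp (l z) = g z)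
    (h' : ∀ z ∈ B, exp (l' z) = g z)
    (hc : ∀ x ∈ A ∩ B, ∀ y ∈ A ∩ B, l x - l' x = l y - l' y) : HasLog (A ∪ B) g := by
  classical
  obtain ⟨c, hc1, hc2⟩ : ∃ c, exp c = 1 ∧ ∀ x ∈ A ∩ B, l x = l' x + c := by
    by_cases hne : (A ∩ B).Nonempty
    · obtain ⟨x, hx⟩ := hne
      refine ⟨l x - l' x, ?_, fun y hy => ?_⟩
      · rw [exp_sub, h x hx.1, h' x hx.2, div_self]
        rw [← h x hx.1]
        exact exp_ne_zero _
      · rw [← hc y hy x hx]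
        ring
    · exact ⟨0, by simp, fun x hx => (hne ⟨x, hx⟩).elim⟩
  refine ⟨fun z => if z ∈ A then l z else l' z + c, ?_, ?_⟩
  · refine ContinuousOn.union_of_isClosed ?_ ?_ hA hB
    · exact hl.congr (fun z hz => by simp [hz])
    · refine (hl'.add continuousOn_const : ContinuousOn (fun z => l' z + c) B).congr ?_
      intro z hz
      by_cases hzA : z ∈ A
      · simp [hzA, hc2 z ⟨hzA, hz⟩]
      · simp [hzA]
  · intro z hz
    by_cases hzA : z ∈ A
    · simp [hzA, h z hzA]
    · simp [hzA, exp_add, hc1, h' z (hz.resolve_left hzA)]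

end PlaneAR

namespace PlaneAR
open Set Filter Topology Metric Complex

/-- every `z - a`, `a ∉ A`, has a log on `A`. -/
def AllLog (A : Set ℂ) : Prop := ∀ a, a ∉ A → HasLog A (fun z => z - a)

lemma exists_branches {u : ℂ} (hu : u ≠ 0) (c : ℂ) : ∃ l1 l2 : ℂ → ℂ,
    ContinuousOn l1 {z | 0 ≤ (u * (z - c)).im ∧ z ≠ c} ∧
    ContinuousOn l2 {z | (u * (z - c)).im ≤ 0 ∧ z ≠ c} ∧
    (∀ z, z ≠ c → exp (l1 z) = z - c) ∧ (∀ z, z ≠ c → exp (l2 z) = z - c) ∧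
    (∀ z, ∀ s : ℝ, u * (z - c) = s → s < 0 → l1 z = l2 z) ∧
    (∀ z, ∀ s : ℝ, u * (z - c) = s → 0 < s → l1 z - l2 z = -(2 * Real.pi * I)) := by
  have hk : exp (log (1 / (I * u))) = 1 / (I * u) := exp_log (by simp [hu])
  set κ := log (1 / (I * u))
  have hne : ∀ z, z ≠ c → u * (z - c) ≠ 0 := fun z hz => mul_ne_zero hu (sub_ne_zero.2 hz)
  have hslit : ∀ w : ℂ, w ≠ 0 → 0 ≤ w.re → w ∈ slitPlane := by
    intro w hw h
    rcases h.eq_or_lt with h | h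
    · right
      intro h'
      exact hw (Complex.ext h.symm h')
    · exact Or.inl h
  refine ⟨fun z => log (-I * (u * (z - c))) + (κ - Real.pi * I), fun z => log (I * (u * (z - c))) + κ,
    ?_, ?_, ?_, ?_, ?_, ?_⟩
  · refine ContinuousOn.add (ContinuousOn.clog (by fun_prop) ?_) continuousOn_const
    intro z hz
    refine hslit _ (mul_ne_zero (by simp) (hne z hz.2)) ?_
    have := hz.1
    simpa using this
  · refine ContinuousOn.add (ContinuousOn.clog (by fun_prop) ?_) continuousOn_const
    intro z hz
    refine hslit _ (mul_ne_zero (by simp) (hne z hz.2)) ?_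
    have := hz.1
    simp at this ⊢
    linarith
  · intro z hz
    rw [exp_add, exp_log (mul_ne_zero (by simp) (hne z hz)), exp_sub, hk, exp_pi_mul_I]
    field_simp
  · intro z hz
    rw [exp_add, exp_log (mul_ne_zero (by simp) (hne z hz)), hk]
    field_simp
  · intro z s hs h
    simp only [hs]
    have e1 : -I * (s : ℂ) = ((-s : ℝ) : ℂ) * I := by push_cast; ring
    have e2 : I * (s : ℂ) = ((-s : ℝ) : ℂ) * (-I) := by push_cast; ring
    rw [e1, e2, log_ofReal_mul (by linarith) (by simp), log_ofReal_mul (by linarith) (by simp),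
      log_I, log_neg_I]
    ring
  · intro z s hs h
    simp only [hs]
    have e1 : -I * (s : ℂ) = ((s : ℝ) : ℂ) * (-I) := by push_cast; ring
    have e2 : I * (s : ℂ) = ((s : ℝ) : ℂ) * I := by push_cast; ring
    rw [e1, e2, log_ofReal_mul (by linarith) (by simp), log_ofReal_mul (by linarith) (by simp),
      log_I, log_neg_I]
    ring

/-- continuous functions on `S` with values in the periods of `exp`. -/
def Per (S : Set ℂ) (m : ℂ → ℂ) : Prop := ContinuousOn m S ∧ ∀ z ∈ S, exp (m z) = 1

lemma Per.add {S : Set ℂ} {m n : ℂ → ℂ} (h : Per S m) (h' : Per S n) :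
    Per S (fun z => m z + n z) :=
  ⟨h.1.add h'.1, fun z hz => by rw [exp_add, h.2 z hz, h'.2 z hz, one_mul]⟩

lemma Per.int_mul {S : Set ℂ} {m : ℂ → ℂ} (h : Per S m) (k : ℤ) :
    Per S (fun z => k * m z) :=
  ⟨continuousOn_const.mul h.1, fun z hz => by rw [exp_int_mul, h.2 z hz, one_zpow]⟩

lemma period_eq {a b : ℂ} (ha : exp a = 1) (hb : exp b = 1) (h : dist a b < 1) : a = b := by
  obtain ⟨n, rfl⟩ := exp_eq_one_iff.1 ha
  obtain ⟨m, rfl⟩ := exp_eq_one_iff.1 hb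
  have : n = m := by
    rw [dist_eq_norm, ← sub_mul, norm_mul] at h
    have h2 : ‖(2 * Real.pi * I : ℂ)‖ = 2 * Real.pi := by
      simp [abs_of_pos Real.pi_pos]
    rw [h2] at h
    have h3 : ‖(n - m : ℂ)‖ = |(n - m : ℤ)| := by
      rw [← Int.cast_sub, Complex.norm_intCast]
      simp
    rw [h3] at h
    have hpi := Real.pi_gt_three
    by_contra hne
    have : (1 : ℝ) ≤ |(n - m : ℤ)| := by
      exact_mod_cast Int.one_le_abs (sub_ne_zero.2 hne)
    nlinarith
  rw [this]

lemma glue_line {A : Set ℂ} (hA : IsCompact A) (hlog : AllLog A) {u : ℂ} (hu : u ≠ 0) (t : ℝ)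
    {g : ℂ → ℂ} 
    (h1 : HasLog (A ∩ {z | t ≤ (u * z).im}) g) (h2 : HasLog (A ∩ {z | (u * z).im ≤ t}) g) :
    HasLog A g := by
  set A1 := A ∩ {z | t ≤ (u * z).im} with hA1
  set A2 := A ∩ {z | (u * z).im ≤ t} with hA2
  have hcl1 : IsClosed A1 := hA.isClosed.inter (isClosed_le (by fun_prop) (by fun_prop))
  have hcl2 : IsClosed A2 := hA.isClosed.inter (isClosed_le (by fun_prop) (by fun_prop))
  have hAu : A = A1 ∪ A2 := by
    ext z
    simp only [hA1, hA2, mem_union, mem_inter_iff, mem_setOf_eq]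
    have := le_total t (u * z).im
    tauto
  obtain ⟨l1, hl1, he1⟩ := h1
  obtain ⟨l2, hl2, he2⟩ := h2
  set d : ℂ → ℂ := fun z => l1 z - l2 z with hd
  have hdc : ContinuousOn d (A1 ∩ A2) := (hl1.mono inter_subset_left).sub (hl2.mono inter_subset_right)
  have hd1 : ∀ z ∈ A1 ∩ A2, exp (d z) = 1 := by
    intro z hz
    rw [hd]
    simp only
    rw [exp_sub, he1 z hz.1, he2 z hz.2, div_self]
    rw [← he1 z hz.1]
    exact exp_ne_zero _
  have hcomp : IsCompact (A1 ∩ A2) :=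
    (hA.of_isClosed_subset hcl1 inter_subset_left).inter_right hcl2
  obtain ⟨δ, hδ, hunif⟩ := Metric.uniformContinuousOn_iff.1
    (hcomp.uniformContinuousOn_of_continuous hdc) 1 one_pos
  obtain ⟨R, hR⟩ : ∃ R : ℝ, ∀ z ∈ A, ‖u * z‖ ≤ R := by
    obtain ⟨R, hR⟩ := hA.isBounded.exists_norm_le
    exact ⟨‖u‖ * R, fun z hz => by rw [norm_mul]; gcongr; exact hR z hz⟩
  have hupos : 0 < ‖u‖ := norm_pos_iff.2 hu
  set η : ℝ := ‖u‖ * δ / 2 with hη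
  have hηpos : 0 < η := by positivity
  set τ : ℕ → ℝ := fun n => -R - 1 + n * η with hτ
  have hline : ∀ z ∈ A1 ∩ A2, (u * z).im = t := fun z hz => le_antisymm hz.2.2 hz.1.2
  -- points of the line in the same step have the same value of `d`
  have hstep : ∀ n, ∀ z ∈ A1 ∩ A2, ∀ w ∈ A1 ∩ A2, τ n ≤ (u * z).re → (u * z).re ≤ τ (n+1) →
      τ n ≤ (u * w).re → (u * w).re ≤ τ (n+1) → d z = d w := by
    intro n z hz w hw a1 a2 a3 a4
    refine period_eq (hd1 z hz) (hd1 w hw) (hunif z hz w hw ?_)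
    have e : u * (z - w) = (((u * z).re - (u * w).re : ℝ) : ℂ) := by
      rw [mul_sub]
      apply Complex.ext
      · simp
      · rw [sub_im, hline z hz, hline w hw]
        simp
    have e2 : ‖u‖ * ‖z - w‖ = |(u * z).re - (u * w).re| := by
      rw [← norm_mul, e, Complex.norm_real, Real.norm_eq_abs]
    have e3 : |(u * z).re - (u * w).re| ≤ η := by
      have : τ (n+1) = τ n + η := by simp only [hτ]; push_cast; ring
      rw [abs_le]
      constructor <;> linarith
    rw [← e2, hη] at e3
    rw [dist_eq_norm]
    by_contra hcon
    push Not at hcon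
    nlinarith
  have main : ∀ n : ℕ, ∃ m1 m2 : ℂ → ℂ, ∃ e : ℂ, Per A1 m1 ∧ Per A2 m2 ∧ exp e = 1 ∧
      (∀ z ∈ A1 ∩ A2, (u * z).re ≤ τ n → m1 z - m2 z = d z) ∧
      (∀ z ∈ A1 ∩ A2, τ n ≤ (u * z).re → m1 z - m2 z = e) := by
    intro n
    induction n with
    | zero =>
      refine ⟨fun _ => 0, fun _ => 0, 0, ⟨continuousOn_const, by simp⟩, ⟨continuousOn_const, by simp⟩,
        by simp, ?_, by simp⟩
      intro z hz h
      have := hR z hz.1.1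
      have h3 := neg_abs_le (u * z).re
      have h4 := Complex.abs_re_le_norm (u * z)
      simp only [hτ] at h
      push_cast at h
      linarith
    | succ n ih =>
      obtain ⟨m1, m2, e, hm1, hm2, hee, hle, hge⟩ := ih
      have hτn : τ (n+1) = τ n + η := by simp only [hτ]; push_cast; ring
      by_cases hex : ∃ w ∈ A1 ∩ A2, τ n ≤ (u * w).re ∧ (u * w).re ≤ τ (n+1) ∧ d w ≠ e
      · obtain ⟨w, hw, hw1, hw2, hwe⟩ := hex
        set c : ℂ := (τ n + t * I) / u with hc
        have huc : u * c = τ n + t * I := by rw [hc]; field_simp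
        have hcA : c ∉ A := by
          intro hcA
          have hcim : (u * c).im = t := by rw [huc]; simp
          have hcre : (u * c).re = τ n := by rw [huc]; simp
          have hcc : c ∈ A1 ∩ A2 := by
            refine ⟨⟨hcA, ?_⟩, hcA, ?_⟩
            all_goals first | exact hcim.ge | exact hcim.le
          have q1 := hle c hcc hcre.le
          have q2 := hge c hcc hcre.ge
          have q3 := hstep n c hcc w hw hcre.ge (by rw [hcre, hτn]; linarith) hw1 hw2
          exact hwe (by rw [← q3, ← q1, q2])
        obtain ⟨Λ, hΛ, hΛe⟩ := hlog c hcA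
        obtain ⟨b1, b2, hb1, hb2, hbe1, hbe2, hneg, hpos⟩ := exists_branches hu c
        have hne : ∀ z ∈ A, z ≠ c := fun z hz h => hcA (h ▸ hz)
        have im_eq : ∀ z, (u * (z - c)).im = (u * z).im - t := by
          intro z
          rw [mul_sub, sub_im, huc]
          simp
        have hp1 : Per A1 (fun z => b1 z - Λ z) := by
          refine ⟨(hb1.mono ?_).sub (hΛ.mono inter_subset_left), ?_⟩
          · intro z hz
            refine ⟨?_, hne z hz.1⟩
            rw [im_eq]
            have := hz.2
            simp only [mem_setOf_eq] at this
            linarith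
          · intro z hz
            rw [exp_sub, hbe1 z (hne z hz.1), hΛe z hz.1, div_self (sub_ne_zero.2 (hne z hz.1))]
        have hp2 : Per A2 (fun z => b2 z - Λ z) := by
          refine ⟨(hb2.mono ?_).sub (hΛ.mono inter_subset_left), ?_⟩
          · intro z hz
            refine ⟨?_, hne z hz.1⟩
            rw [im_eq]
            have := hz.2
            simp only [mem_setOf_eq] at this
            linarith
          · intro z hz
            rw [exp_sub, hbe2 z (hne z hz.1), hΛe z hz.1, div_self (sub_ne_zero.2 (hne z hz.1))]
        obtain ⟨k, hk⟩ := exp_eq_one_iff.1 (show exp (d w - e) = 1 by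
          rw [exp_sub, hd1 w hw, hee, div_one])
        have real_eq : ∀ z ∈ A1 ∩ A2, u * (z - c) = (((u * z).re - τ n : ℝ) : ℂ) := by
          intro z hz
          rw [mul_sub, huc]
          apply Complex.ext
          · simp
          · rw [sub_im, hline z hz]
            simp
        refine ⟨fun z => m1 z + ((-k : ℤ) : ℂ) * (b1 z - Λ z),
          fun z => m2 z + ((-k : ℤ) : ℂ) * (b2 z - Λ z), d w,
          hm1.add (hp1.int_mul _), hm2.add (hp2.int_mul _), hd1 w hw, ?_, ?_⟩
        all_goals
          intro z hz h
          have hz0 : (u * z).re - τ n ≠ 0 := by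
            intro h0
            have h5 := real_eq z hz
            rw [h0] at h5
            exact hne z hz.1.1 (sub_eq_zero.1 ((mul_eq_zero.1 (by simpa using h5)).resolve_left hu))
        · rcases lt_or_gt_of_ne hz0 with hlt | hgt
          · have q := hneg z _ (real_eq z hz) hlt
            have q2 := hle z hz (by linarith)
            simp only [q]
            linear_combination q2
          · have q := hpos z _ (real_eq z hz) hgt
            have q2 := hge z hz (by linarith)
            have q3 := hstep n z hz w hw (by linarith) h hw1 hw2
            push_cast
            linear_combination q2 - (k : ℂ) * q - hk - q3
        · have hgt : 0 < (u * z).re - τ n := by linarith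
          have q := hpos z _ (real_eq z hz) hgt
          have q2 := hge z hz (by linarith)
          push_cast
          linear_combination q2 - (k : ℂ) * q - hk
      · push Not at hex
        refine ⟨m1, m2, e, hm1, hm2, hee, ?_, fun z hz h => hge z hz (by linarith)⟩
        intro z hz h
        rcases le_total (u * z).re (τ n) with h' | h'
        · exact hle z hz h'
        · rw [hge z hz h', hex z hz h' h]
  obtain ⟨n, hn⟩ := exists_nat_ge ((2 * R + 1) / η)
  obtain ⟨m1, m2, e, hm1, hm2, -, hle, -⟩ := main n
  have hle' : ∀ z ∈ A1 ∩ A2, m1 z - m2 z = d z := by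
    intro z hz
    refine hle z hz ?_
    have := hR z hz.1.1
    have h4 := Complex.re_le_norm (u * z)
    rw [div_le_iff₀ hηpos] at hn
    simp only [hτ]
    linarith
  rw [hAu]
  refine hasLog_union hcl1 hcl2 (l := fun z => l1 z - m1 z) (l' := fun z => l2 z - m2 z)
    (hl1.sub hm1.1) (hl2.sub hm2.1) ?_ ?_ ?_
  · intro z hz
    rw [exp_sub, he1 z hz, hm1.2 z hz, div_one]
  · intro z hz
    rw [exp_sub, he2 z hz, hm2.2 z hz, div_one]
  · intro x hx y hy
    have a := hle' x hx
    have b := hle' y hy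
    simp only [hd] at a b
    linear_combination b - a

lemma AllLog.inter_half {A : Set ℂ} (h : AllLog A) {u : ℂ} (hu : u ≠ 0) (t : ℝ) :
    AllLog (A ∩ {z | (u * z).im ≤ t}) := by
  intro a ha
  by_cases haA : a ∈ A
  · have hat : t < (u * a).im := by
      by_contra hcon
      exact ha ⟨haA, not_lt.1 hcon⟩
    have : HasLog (A ∩ {z | (u * z).im ≤ t}) (fun z => I * u * (z - a)) := by
      refine .of_slit (by fun_prop) ?_
      intro z hz
      left
      have h1 := hz.2
      simp only [mem_setOf_eq] at h1
      have : (I * u * (z - a)).re = (u * a).im - (u * z).im := by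
        rw [mul_assoc, mul_sub, mul_re]
        simp
      rw [this]
      linarith
    refine (this.mul (HasLog.const (inv_ne_zero (mul_ne_zero I_ne_zero hu)))).congr ?_
    intro z _
    field_simp
  · exact (h a haA).mono inter_subset_left

lemma AllLog.inter_half' {A : Set ℂ} (h : AllLog A) {u : ℂ} (hu : u ≠ 0) (t : ℝ) :
    AllLog (A ∩ {z | t ≤ (u * z).im}) := by
  have := h.inter_half (neg_ne_zero.2 hu) (-t)
  simpa using this

/-- Theorem E: on a compact nonseparating set every nonvanishing function has a log. -/
theorem hasLog_of_allLog {C : Set ℂ} (hC : IsCompact C) (hlog : AllLog C) {g : ℂ → ℂ}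
    (hg : ContinuousOn g C) (h0 : ∀ z ∈ C, g z ≠ 0) : HasLog C g := by
  have hq : ContinuousOn (fun p : ℂ × ℂ => g p.1 / g p.2) (C ×ˢ C) := by
    refine ContinuousOn.div (hg.comp continuousOn_fst (fun p hp => hp.1))
      (hg.comp continuousOn_snd (fun p hp => hp.2)) (fun p hp => h0 _ hp.2)
  obtain ⟨δ, hδ, hsmall⟩ : ∃ δ > 0, ∀ S ⊆ C, (∀ z ∈ S, ∀ w ∈ S, dist z w < δ) → HasLog S g := by
    obtain ⟨δ, hδ, hu⟩ := Metric.uniformContinuousOn_iff.1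
      ((hC.prod hC).uniformContinuousOn_of_continuous hq) 1 one_pos
    refine ⟨δ, hδ, fun S hS hd => ?_⟩
    rcases S.eq_empty_or_nonempty with rfl | ⟨w, hw⟩
    · exact ⟨fun _ => 0, continuousOn_empty _, by simp⟩
    · have : HasLog S (fun z => g z / g w) := by
        refine .of_slit ((hg.mono hS).div_const _) (fun z hz => ?_)
        have := hu (z, w) ⟨hS hz, hS hw⟩ (w, w) ⟨hS hw, hS hw⟩ (by
          simpa [Prod.dist_eq, hδ] using hd z hz w hw)
        simp only [div_self (h0 w (hS hw)), dist_eq_norm] at this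
        have e := mem_slitPlane_of_norm_lt_one this
        simpa using e
      exact (this.mul (HasLog.const (h0 w (hS hw)))).congr (fun z hz => by
        have := h0 w (hS hw)
        field_simp)
  obtain ⟨R, hR⟩ := hC.isBounded.exists_norm_le
  set η := δ / 3 with hη
  have hηpos : 0 < η := by positivity
  set τ : ℕ → ℝ := fun n => -R - 1 + n * η with hτ
  have hτn : ∀ n, τ (n+1) = τ n + η := by intro n; simp only [hτ]; push_cast; ring
  have hτ0 : τ 0 = -R - 1 := by simp [hτ]
  obtain ⟨N, hN⟩ : ∃ N : ℕ, R ≤ τ N := by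
    obtain ⟨n, hn⟩ := exists_nat_ge ((2 * R + 1) / η)
    rw [div_le_iff₀ hηpos] at hn
    exact ⟨n, by simp only [hτ]; linarith⟩
  have hempty : ∀ S : Set ℂ, S = ∅ → HasLog S g := by
    rintro S rfl
    exact ⟨fun _ => 0, continuousOn_empty _, by simp⟩
  have hIz : ∀ z : ℂ, (I * z).im = z.re := by intro z; simp
  have h1z : ∀ z : ℂ, ((1:ℂ) * z).im = z.im := by intro z; simp
  have row : ∀ j i : ℕ, HasLog (((C ∩ {z | τ j ≤ ((1:ℂ) * z).im}) ∩ {z | ((1:ℂ) * z).im ≤ τ (j+1)}) ∩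
      {z | (I * z).im ≤ τ i}) g := by
    intro j i
    induction i with
    | zero =>
      apply hempty
      ext z
      simp only [mem_inter_iff, mem_setOf_eq, mem_empty_iff_false, iff_false, hIz, h1z]
      rintro ⟨⟨⟨hz, -⟩, -⟩, h⟩
      have := hR z hz
      have h3 := neg_abs_le z.re
      have h4 := Complex.abs_re_le_norm z
      linarith
    | succ i ih =>
      refine glue_line ?_ ?_ I_ne_zero (τ i) ?_ ?_
      · refine ((hC.inter_right ?_).inter_right ?_).inter_right ?_
        all_goals exact isClosed_le (by fun_prop) (by fun_prop)
      · exact ((hlog.inter_half' one_ne_zero _).inter_half one_ne_zero _).inter_half I_ne_zero _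
      · apply hsmall
        · intro z hz
          exact hz.1.1.1.1
        · rintro z ⟨⟨⟨⟨-, a1⟩, a2⟩, a3⟩, a4⟩ w ⟨⟨⟨⟨-, b1⟩, b2⟩, b3⟩, b4⟩
          simp only [mem_setOf_eq, hIz, h1z, hτn] at *
          rw [dist_eq_norm]
          refine (Complex.norm_le_abs_re_add_abs_im _).trans_lt ?_
          have : |(z - w).re| ≤ η := by rw [sub_re, abs_le]; constructor <;> linarith
          have : |(z - w).im| ≤ η := by rw [sub_im, abs_le]; constructor <;> linarith
          linarith
      · refine ih.mono ?_
        rintro z ⟨⟨a, -⟩, b⟩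
        exact ⟨a, b⟩
  have col : ∀ j : ℕ, HasLog (C ∩ {z | ((1:ℂ) * z).im ≤ τ j}) g := by
    intro j
    induction j with
    | zero =>
      apply hempty
      ext z
      simp only [mem_inter_iff, mem_setOf_eq, mem_empty_iff_false, iff_false, hIz, h1z]
      rintro ⟨hz, h⟩
      have := hR z hz
      have h3 := neg_abs_le z.im
      have h4 := Complex.abs_im_le_norm z
      linarith
    | succ j ih =>
      refine glue_line ?_ ?_ one_ne_zero (τ j) ?_ ?_
      · exact hC.inter_right (isClosed_le (by fun_prop) (by fun_prop))
      · exact hlog.inter_half one_ne_zero _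
      · refine (row j N).mono ?_
        rintro z ⟨⟨a1, a2⟩, a3⟩
        refine ⟨⟨⟨a1, a3⟩, a2⟩, ?_⟩
        simp only [mem_setOf_eq, hIz]
        have := hR z a1
        have h4 := Complex.re_le_norm z
        linarith
      · refine ih.mono ?_
        rintro z ⟨⟨a, -⟩, b⟩
        exact ⟨a, b⟩
  refine (col N).mono (fun z hz => ⟨hz, ?_⟩)
  simp only [mem_setOf_eq, h1z]
  have := hR z hz
  have h4 := Complex.im_le_norm z
  linarith

end PlaneAR

namespace PlaneAR
open Set Filter Topology Metric Complex

/-- uniform local connectedness -/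
def LC0 (X : Set ℂ) : Prop := ∀ ε > 0, ∃ δ > 0, ∀ x ∈ X, ∀ y ∈ X, dist x y < δ →
  ∃ L ⊆ X, IsCompact L ∧ IsPreconnected L ∧ x ∈ L ∧ y ∈ L ∧ L ⊆ closedBall x ε

lemma allLog_of_retract {X : Set ℂ} (hX : IsCompact X) {r : ℂ → ℂ} (hr : Continuous r)
    (hm : ∀ z, r z ∈ X) (hid : ∀ z ∈ X, r z = z) : AllLog X := by
  intro a ha
  obtain ⟨R, hR⟩ := hX.isBounded.subset_closedBall 0
  have := hasLog_closedBall (F := fun z => r z - a) (by fun_prop)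
    (fun z => sub_ne_zero.2 (fun h => ha (h ▸ hm z))) R
  exact (this.mono hR).congr (fun z hz => by rw [hid z hz])

lemma lc0_of_retract {X : Set ℂ} (hX : IsCompact X) {r : ℂ → ℂ} (hr : Continuous r)
    (hm : ∀ z, r z ∈ X) (hid : ∀ z ∈ X, r z = z) : LC0 X := by
  intro ε hε
  obtain ⟨δ, hδ, H⟩ := Metric.uniformContinuousOn_iff.1
    ((hX.cthickening (r := 1)).uniformContinuousOn_of_continuous hr.continuousOn) ε hε
  refine ⟨min δ 1, by positivity, fun x hx y hy hxy => ?_⟩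
  have hseg : ∀ z ∈ segment ℝ x y, dist x z ≤ dist x y := by
    intro z hz
    have := (convex_closedBall x (dist x y)).segment_subset (mem_closedBall_self dist_nonneg)
      (by rw [mem_closedBall, dist_comm]) hz
    rwa [mem_closedBall, dist_comm] at this
  refine ⟨r '' segment ℝ x y, ?_, ?_, ?_, ⟨x, left_mem_segment _ _ _, hid x hx⟩,
    ⟨y, right_mem_segment _ _ _, hid y hy⟩, ?_⟩
  · rintro _ ⟨z, -, rfl⟩
    exact hm z
  · refine IsCompact.image ?_ hr
    rw [segment_eq_image]
    exact isCompact_Icc.image (by fun_prop)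
  · exact (convex_segment x y).isPreconnected.image _ hr.continuousOn
  · rintro _ ⟨z, hz, rfl⟩
    have h1 := (hseg z hz).trans_lt hxy
    have h2 : z ∈ cthickening 1 X := mem_cthickening_of_dist_le z x 1 X hx
      (by rw [dist_comm]; exact h1.le.trans (min_le_right _ _))
    have := H x (self_subset_cthickening X hx) z h2 (h1.trans_le (min_le_left _ _))
    rw [hid x hx, dist_comm] at this
    exact this.le

lemma isClosed_component {F : Set ℂ} (hF : IsClosed F) (x : ℂ) :
    IsClosed (connectedComponentIn F x) := by
  by_cases hx : x ∈ F
  · refine isClosed_of_closure_subset ?_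
    exact isPreconnected_connectedComponentIn.closure.subset_connectedComponentIn
      (subset_closure (mem_connectedComponentIn hx))
      (closure_minimal (connectedComponentIn_subset _ _) hF)
  · rw [connectedComponentIn_eq_empty hx]
    exact isClosed_empty

lemma absorb {F W : Set ℂ} {x0 : ℂ} (hW : IsPreconnected W) (hWF : W ⊆ F)
    (h : (closure W ∩ connectedComponentIn F x0).Nonempty) : W ⊆ connectedComponentIn F x0 := by
  obtain ⟨w, hw, hwK⟩ := h
  have h1 : IsPreconnected (insert w W) :=
    hW.subset_closure (subset_insert _ _) (insert_subset hw subset_closure)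
  have hF := connectedComponentIn_subset F x0 hwK
  rw [connectedComponentIn_eq hwK]
  exact (subset_insert _ _).trans
    (h1.subset_connectedComponentIn (mem_insert _ _) (insert_subset hF hWF))

lemma frontier_nonempty_of_bdd {W : Set ℂ} (h : W.Nonempty) (hb : Bornology.IsBounded W) :
    (frontier W).Nonempty :=
  nonempty_frontier_iff.2 ⟨h, fun h => (NormedSpace.unbounded_univ ℝ ℂ) (h ▸ hb)⟩

lemma allLog_component {X Y : Set ℂ} (hX : IsCompact X) (hY : IsCompact Y) (lX : AllLog X)
    (lY : AllLog Y) (x0 : ℂ) (hK : IsCompact (connectedComponentIn (X ∩ Y) x0)) :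
    AllLog (connectedComponentIn (X ∩ Y) x0) := by
  intro a ha
  set K := connectedComponentIn (X ∩ Y) x0 with hKd
  have hKX : K ⊆ X ∩ Y := connectedComponentIn_subset _ _
  have key : ∀ b, b ∉ X ∩ Y → HasLog K (fun z => z - b) := by
    intro b hb
    by_cases h : b ∈ X
    · exact (lY b (fun h' => hb ⟨h, h'⟩)).mono (fun z hz => (hKX hz).2)
    · exact (lX b h).mono (fun z hz => (hKX hz).1)
  set W := connectedComponentIn Kᶜ a
  have haW : a ∈ W := mem_connectedComponentIn ha
  by_cases hW : W ⊆ X ∩ Y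
  · exfalso
    have hb : Bornology.IsBounded W := hX.isBounded.subset (fun z hz => (hW hz).1)
    obtain ⟨w, hw⟩ := frontier_nonempty_of_bdd ⟨a, haW⟩ hb
    have h1 := frontier_component hK.isClosed.isOpen_compl a hw
    rw [compl_compl] at h1
    exact ha (absorb isPreconnected_connectedComponentIn hW ⟨w, frontier_subset_closure hw, h1⟩ haW)
  · obtain ⟨b, hbW, hb⟩ := not_subset.1 hW
    exact hasLog_sub_of_connected hK isPreconnected_connectedComponentIn
      (fun z hz => connectedComponentIn_subset _ _ hz) hbW haW (key b hb)

lemma exists_fill {A : Set ℂ} (hA : IsCompact A) : ∃ C, IsCompact C ∧ A ⊆ C ∧ AllLog C ∧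
    ∀ z ∈ C, z ∉ A → ¬ HasLog A (fun w => w - z) := by
  have hop : ∀ z, IsOpen (connectedComponentIn Aᶜ z) := fun z =>
    hA.isClosed.isOpen_compl.connectedComponentIn
  have hsub : ∀ z ∉ A, ¬ Bornology.IsBounded (connectedComponentIn Aᶜ z) →
      ∀ w ∈ connectedComponentIn Aᶜ z,
      w ∉ A ∧ ¬ Bornology.IsBounded (connectedComponentIn Aᶜ w) := fun z hz hb w hw =>
    ⟨connectedComponentIn_subset _ _ hw, by rwa [← connectedComponentIn_eq hw]⟩
  have hcomp : IsCompact {z | z ∈ A ∨ Bornology.IsBounded (connectedComponentIn Aᶜ z)} := by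
    obtain ⟨R, hR0, hR⟩ := hA.isBounded.subset_closedBall_lt 0 0
    refine (isCompact_closedBall (0:ℂ) R).of_isClosed_subset ?_ ?_
    · rw [← isOpen_compl_iff, isOpen_iff_mem_nhds]
      intro z hz
      simp only [mem_compl_iff, mem_ofPred_eq, not_or] at hz
      refine mem_of_superset ((hop z).mem_nhds (mem_connectedComponentIn hz.1)) ?_
      intro w hw
      simpa only [mem_compl_iff, mem_ofPred_eq, not_or] using hsub z hz.1 hz.2 w hw
    · intro z hz
      by_contra hzR
      have h1 : (closedBall (0:ℂ) R)ᶜ ⊆ connectedComponentIn Aᶜ z :=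
        (isConnected_compl_closedBall 0 hR0.le).isPreconnected.subset_connectedComponentIn hzR
          (compl_subset_compl.2 hR)
      rcases hz with hz | hz
      · exact hzR (hR hz)
      · refine NormedSpace.unbounded_univ ℝ ℂ ?_
        rw [← compl_union_self (closedBall (0:ℂ) R)]
        exact (hz.subset h1).union isBounded_closedBall
  refine ⟨{z | z ∈ A ∨ Bornology.IsBounded (connectedComponentIn Aᶜ z)}, hcomp,
    fun z hz => Or.inl hz, ?_, ?_⟩
  · intro a ha
    simp only [mem_ofPred_eq, not_or] at ha
    refine hasLog_sub_of_unbounded hcomp (W := connectedComponentIn Aᶜ a)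
      isPreconnected_connectedComponentIn ?_ ha.2 (mem_connectedComponentIn ha.1)
    intro z hz
    simpa only [mem_ofPred_eq, not_or] using hsub a ha.1 ha.2 z hz
  · intro z hz hzA hlog
    exact unbounded_of_hasLog hA hzA hlog (hz.resolve_left hzA)

lemma claimA0 {X K : Set ℂ} {x a : ℂ} {d η δ : ℝ} (hK : IsCompact K) (hKc : IsPreconnected K)
    (lK : AllLog K) (lX : AllLog X) (hKX : K ⊆ X)
    (hδ : ∀ x ∈ X, ∀ y ∈ X, dist x y < δ →
      ∃ L ⊆ X, IsCompact L ∧ IsPreconnected L ∧ x ∈ L ∧ y ∈ L ∧ L ⊆ closedBall x η)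
    (hd : 2 * d < δ) (hdη : d ≤ η) (hη : 0 < η) (haX : a ∉ X) (haB : a ∉ closedBall x (2 * η)) :
    HasLog (K ∪ closedBall x d) (fun z => z - a) := by
  obtain ⟨lk, hlk, ek⟩ := lK a (fun h => haX (hKX h))
  obtain ⟨lx, hlx, ex⟩ := lX a haX
  obtain ⟨lb, hlb, eb⟩ := hasLog_sub_of_ball haB
  have hsub : closedBall x d ⊆ closedBall x (2 * η) := closedBall_subset_closedBall (by linarith)
  refine hasLog_union hK.isClosed isClosed_closedBall hlk (hlb.mono hsub) ek
    (fun z hz => eb z (hsub hz)) ?_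
  intro u hu v hv
  have huv : dist u v < δ := by
    have := dist_triangle_right u v x
    have h1 := mem_closedBall.1 hu.2
    have h2 := mem_closedBall.1 hv.2
    linarith
  obtain ⟨L, hLX, -, hLc, huL, hvL, hLb⟩ := hδ u (hKX hu.1) v (hKX hv.1) huv
  have hLB : L ⊆ closedBall x (2 * η) := hLb.trans (closedBall_subset_closedBall' (by
    have h1 := mem_closedBall.1 hu.2
    linarith))
  have e1 := log_unique hLc (hlx.mono hLX) (hlb.mono hLB)
    (fun z hz => by rw [ex z (hLX hz), eb z (hLB hz)]) huL hvL
  have e2 := log_unique hKc hlk (hlx.mono hKX)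
    (fun z hz => by rw [ek z hz, ex z (hKX hz)]) hu.1 hv.1
  linear_combination e1 + e2

lemma lc0_component {X Y : Set ℂ} (hX : IsCompact X) (hY : IsCompact Y) (lX : AllLog X)
    (lY : AllLog Y) (cX : LC0 X) (cY : LC0 Y) (x0 : ℂ)
    (hK : IsCompact (connectedComponentIn (X ∩ Y) x0)) :
    LC0 (connectedComponentIn (X ∩ Y) x0) := by
  intro ε hε
  have lK := allLog_component hX hY lX lY x0 hK
  have hKc : IsPreconnected (connectedComponentIn (X ∩ Y) x0) := isPreconnected_connectedComponentIn
  have hKX : connectedComponentIn (X ∩ Y) x0 ⊆ X ∩ Y := connectedComponentIn_subset _ _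
  have habs : ∀ W, IsPreconnected W → W ⊆ X ∩ Y →
    (closure W ∩ connectedComponentIn (X ∩ Y) x0).Nonempty → W ⊆ connectedComponentIn (X ∩ Y) x0 :=
    fun W h1 h2 h3 => absorb h1 h2 h3
  generalize connectedComponentIn (X ∩ Y) x0 = K at *
  have hη : 0 < ε / 2 := by positivity
  obtain ⟨δX, hδX, HX⟩ := cX (ε/2) hη
  obtain ⟨δY, hδY, HY⟩ := cY (ε/2) hη
  obtain ⟨d, hd, hdX, hdY, hdη⟩ : ∃ d > 0, 2 * d < δX ∧ 2 * d < δY ∧ d ≤ ε / 2 := by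
    refine ⟨min (δX/3) (min (δY/3) (ε/2)), by positivity, ?_, ?_, ?_⟩
    · have := min_le_left (δX/3) (min (δY/3) (ε/2)); linarith
    · have := (min_le_right (δX/3) (min (δY/3) (ε/2))).trans (min_le_left _ _); linarith
    · exact (min_le_right (δX/3) (min (δY/3) (ε/2))).trans (min_le_right _ _)
  refine ⟨d, hd, fun x hx y hy hxy => ?_⟩
  have h2η : 2 * (ε / 2) = ε := by ring
  have hBB : closedBall x d ⊆ closedBall x ε := closedBall_subset_closedBall (by linarith)
  have hcA : IsCompact (K ∪ closedBall x d) := hK.union (isCompact_closedBall _ _)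
  have claimA : ∀ a, a ∉ K → a ∉ closedBall x ε → HasLog (K ∪ closedBall x d) (fun z => z - a) := by
    intro a haK haB
    by_contra hno
    have hcl : IsClosed (K ∪ closedBall x ε) := hK.isClosed.union isClosed_closedBall
    set W := connectedComponentIn (K ∪ closedBall x ε)ᶜ a
    have hWs : ∀ w ∈ W, w ∉ K ∧ w ∉ closedBall x ε := fun w hw => by
      have := connectedComponentIn_subset _ _ hw
      simpa only [mem_compl_iff, mem_union, not_or] using this
    have haW : a ∈ W := mem_connectedComponentIn (by
      simpa only [mem_compl_iff, mem_union, not_or] using ⟨haK, haB⟩)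
    have hWc : IsPreconnected W := isPreconnected_connectedComponentIn
    have hWno : ∀ w ∈ W, ¬ HasLog (K ∪ closedBall x d) (fun z => z - w) := fun w hw hl =>
      hno (hasLog_sub_of_connected hcA hWc (fun z hz h => by
        rcases h with h | h
        · exact (hWs z hz).1 h
        · exact (hWs z hz).2 (hBB h)) hw haW hl)
    have hWXY : W ⊆ X ∩ Y := by
      intro w hw
      have h2 : w ∉ closedBall x (2 * (ε / 2)) := by rw [h2η]; exact (hWs w hw).2
      constructor
      · by_contra hwX
        exact hWno w hw (claimA0 hK hKc lK lX (fun z hz => (hKX hz).1) HX hdX hdη hη hwX h2)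
      · by_contra hwX
        exact hWno w hw (claimA0 hK hKc lK lY (fun z hz => (hKX hz).2) HY hdY hdη hη hwX h2)
    have hWb : Bornology.IsBounded W := hX.isBounded.subset (fun z hz => (hWXY hz).1)
    have hWo : IsOpen W := hcl.isOpen_compl.connectedComponentIn
    by_cases hne : (closure W ∩ K).Nonempty
    · exact haK (habs W hWc hWXY hne haW)
    · have : (closedBall x ε)ᶜ ⊆ W := by
        refine (isConnected_compl_closedBall x hε.le).isPreconnected.subset_of_closure_inter_subset
          hWo ⟨a, haB, haW⟩ ?_
        rintro z ⟨hz, hzB⟩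
        by_contra hzW
        have hfr : z ∈ frontier W := by rw [hWo.frontier_eq]; exact ⟨hz, hzW⟩
        have := frontier_component hcl.isOpen_compl a hfr
        rw [compl_compl] at this
        rcases this with h | h
        · exact hne ⟨z, hz, h⟩
        · exact hzB h
      refine NormedSpace.unbounded_univ ℝ ℂ ?_
      rw [← compl_union_self (closedBall x ε)]
      exact (hWb.subset this).union isBounded_closedBall
  obtain ⟨C, hC, hAC, lC, hCA⟩ := exists_fill hcA
  have hCsub : C ⊆ K ∪ closedBall x ε := by
    intro z hz
    by_contra h
    simp only [mem_union, not_or] at h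
    exact hCA z hz (fun h' => by
      rcases h' with h' | h'
      · exact h.1 h'
      · exact h.2 (hBB h')) (claimA z h.1 h.2)
  have hFc : IsCompact (K ∩ closedBall x ε) := hK.inter_right isClosed_closedBall
  have hxF : x ∈ K ∩ closedBall x ε := ⟨hx, mem_closedBall_self hε.le⟩
  have hyd : y ∈ closedBall x d := by rw [mem_closedBall, dist_comm]; exact hxy.le
  have hyF : y ∈ K ∩ closedBall x ε := ⟨hy, hBB hyd⟩
  refine ⟨connectedComponentIn (K ∩ closedBall x ε) x,
    (connectedComponentIn_subset _ _).trans inter_subset_left, ?_,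
    isPreconnected_connectedComponentIn, mem_connectedComponentIn hxF, ?_,
    (connectedComponentIn_subset _ _).trans inter_subset_right⟩
  · exact hFc.of_isClosed_subset (isClosed_component hFc.isClosed _) (connectedComponentIn_subset _ _)
  by_contra hyn
  haveI : CompactSpace ↥(K ∩ closedBall x ε) := isCompact_iff_compactSpace.1 hFc
  rw [connectedComponentIn_eq_image hxF, connectedComponent_eq_iInter_isClopen] at hyn
  have : ∃ s : Set ↥(K ∩ closedBall x ε), IsClopen s ∧ ⟨x, hxF⟩ ∈ s ∧ ⟨y, hyF⟩ ∉ s := by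
    by_contra hcon
    push Not at hcon
    refine hyn ⟨⟨y, hyF⟩, ?_, rfl⟩
    rw [mem_iInter]
    exact fun s => hcon s.1 s.2.1 s.2.2
  obtain ⟨s, hs, hxs, hys⟩ := this
  have hZ1 : IsClosed ((↑) '' s : Set ℂ) := hFc.isClosed.isClosedMap_subtype_val _ hs.1
  have hZ2 : IsClosed ((↑) '' sᶜ : Set ℂ) := hFc.isClosed.isClosedMap_subtype_val _ hs.compl.1
  have hdis : Disjoint ((↑) '' s : Set ℂ) ((↑) '' sᶜ : Set ℂ) :=
    (disjoint_image_iff Subtype.val_injective).2 disjoint_compl_right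
  obtain ⟨h, h0, h1, -⟩ := exists_continuous_zero_one_of_isClosed hZ1 hZ2 hdis
  have hexp : ∀ z ∈ K, z ∈ closedBall x ε → exp (2 * Real.pi * I * h z) = 1 := by
    intro z hzK hzB
    by_cases hz : (⟨z, hzK, hzB⟩ : ↥(K ∩ closedBall x ε)) ∈ s
    · rw [h0 ⟨_, hz, rfl⟩]; simp
    · rw [h1 ⟨_, hz, rfl⟩]; simp [exp_two_pi_mul_I]
  classical
  set g : ℂ → ℂ := fun z => if z ∈ closedBall x ε then 1 else exp (2 * Real.pi * I * h z) with hg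
  have gK : ∀ z ∈ K, g z = exp (2 * Real.pi * I * h z) := by
    intro z hz
    by_cases hB : z ∈ closedBall x ε
    · simp only [hg]; rw [if_pos hB, hexp z hz hB]
    · simp only [hg]; rw [if_neg hB]
  have gB : ∀ z ∈ closedBall x ε, g z = 1 := fun z hz => by simp only [hg]; rw [if_pos hz]
  have gcont : ContinuousOn g (K ∪ closedBall x ε) := by
    refine ContinuousOn.union_of_isClosed ?_ ?_ hK.isClosed isClosed_closedBall
    · refine ContinuousOn.congr ?_ gK
      have := h.continuous
      fun_prop
    · exact (continuousOn_const (c := (1:ℂ))).congr gB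
  have gne : ∀ z ∈ C, g z ≠ 0 := by
    intro z _
    simp only [hg]
    split_ifs
    · exact one_ne_zero
    · exact exp_ne_zero _
  obtain ⟨l, hl, el⟩ := hasLog_of_allLog hC lC (gcont.mono hCsub) gne
  have hKC : K ⊆ C := subset_union_left.trans hAC
  have hBC : closedBall x d ⊆ C := subset_union_right.trans hAC
  have e1 := log_unique hKc (hl.mono hKC) (l' := fun z => 2 * Real.pi * I * h z)
    (by have := h.continuous; fun_prop) (fun z hz => by rw [el z (hKC hz), gK z hz]) hx hy
  have e2 := log_unique (convex_closedBall x d).isPreconnected (hl.mono hBC) (l' := fun z => 0)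
    continuousOn_const (fun z hz => by rw [el z (hBC hz), gB z (hBB hz)]; simp)
    (mem_closedBall_self hd.le) hyd
  have hx0 : h x = 0 := h0 ⟨_, hxs, rfl⟩
  have hy1 : h y = 1 := h1 ⟨_, hys, rfl⟩
  simp only [hx0, hy1] at e1
  have : (2 * Real.pi * I : ℂ) = 0 := by
    push_cast at e1
    linear_combination e1 - e2
  simp [Real.pi_ne_zero] at this

end PlaneAR

namespace PlaneAR
open Set Filter Topology Metric Complex

lemma differentiableOn_log {Ω : Set ℂ} (hΩ : IsOpen Ω) {g l : ℂ → ℂ}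
    (hg : DifferentiableOn ℂ g Ω) (hl : ContinuousOn l Ω) (h : ∀ z ∈ Ω, exp (l z) = g z) :
    DifferentiableOn ℂ l Ω := by
  intro z0 hz0
  have hlc := hl.continuousAt (hΩ.mem_nhds hz0)
  have hgd := hg.differentiableAt (hΩ.mem_nhds hz0)
  have h0 : g z0 ≠ 0 := by rw [← h z0 hz0]; exact exp_ne_zero _
  have ev : ∀ᶠ y in 𝓝 z0, l y = log (g y / g z0) + l z0 := by
    have h1 : ∀ᶠ y in 𝓝 z0, dist (l y) (l z0) < Real.pi :=
      hlc.eventually (ball_mem_nhds _ Real.pi_pos)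
    filter_upwards [h1, hΩ.mem_nhds hz0] with y hy hyΩ
    have h2 : |(l y - l z0).im| < Real.pi := (abs_im_le_norm _).trans_lt (by rwa [dist_eq_norm] at hy)
    rw [abs_lt] at h2
    rw [← h y hyΩ, ← h z0 hz0, ← exp_sub, log_exp h2.1 h2.2.le]
    ring
  have hd : DifferentiableAt ℂ (fun y => log (g y / g z0) + l z0) z0 := by
    refine DifferentiableAt.add_const _ (DifferentiableAt.clog (hgd.div_const _) ?_)
    rw [div_self h0]
    exact one_mem_slitPlane
  exact (hd.congr_of_eventuallyEq ev).differentiableWithinAt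

/-- every nonvanishing continuous function has a continuous logarithm -/
def LogDom (Ω : Set ℂ) : Prop :=
  ∀ g : ℂ → ℂ, ContinuousOn g Ω → (∀ z ∈ Ω, g z ≠ 0) → HasLog Ω g

lemma LogDom.sqrt {Ω : Set ℂ} (hΩ : IsOpen Ω) (H : LogDom Ω) {g : ℂ → ℂ}
    (hg : DifferentiableOn ℂ g Ω) (h0 : ∀ z ∈ Ω, g z ≠ 0) :
    ∃ s : ℂ → ℂ, DifferentiableOn ℂ s Ω ∧ ∀ z ∈ Ω, s z * s z = g z := by
  obtain ⟨l, hl, he⟩ := H g hg.continuousOn h0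
  have hd := differentiableOn_log hΩ hg hl he
  refine ⟨fun z => exp (l z / 2), (hd.div_const 2).cexp, fun z hz => ?_⟩
  rw [← exp_add, ← he z hz]
  congr 1
  ring

lemma isOpen_image {Ω : Set ℂ} (hΩ : IsOpen Ω) {f : ℂ → ℂ}
    (hf : DifferentiableOn ℂ f Ω) (hi : InjOn f Ω) {s : Set ℂ} (hs : s ⊆ Ω) (hso : IsOpen s) :
    IsOpen (f '' s) := by
  rw [isOpen_iff_mem_nhds]
  rintro _ ⟨z, hz, rfl⟩
  have han := (hf.analyticOnNhd hΩ) z (hs hz)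
  rcases han.eventually_constant_or_nhds_le_map_nhds with h | h
  · exfalso
    have h1 : ∀ᶠ w in 𝓝 z, w = z := by
      filter_upwards [h, hΩ.mem_nhds (hs hz)] with w hw hwΩ
      exact hi hwΩ (hs hz) hw
    have h2 : ∀ᶠ w in 𝓝[≠] z, w = z := h1.filter_mono nhdsWithin_le_nhds
    obtain ⟨w, hw, hw'⟩ := (h2.and eventually_mem_nhdsWithin).exists
    exact hw' hw
  · exact h (image_mem_map (hso.mem_nhds hz))

lemma exists_inverse {Ω : Set ℂ} (hΩ : IsOpen Ω) {f : ℂ → ℂ}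
    (hf : DifferentiableOn ℂ f Ω) (hi : InjOn f Ω) :
    ∃ ψ : ℂ → ℂ, DifferentiableOn ℂ ψ (f '' Ω) ∧ ∀ z ∈ Ω, ψ (f z) = z := by
  set ψ := Function.invFunOn f Ω
  have hψ : ∀ z ∈ Ω, ψ (f z) = z := fun z hz => hi.leftInvOn_invFunOn hz
  have hcont : ∀ z ∈ Ω, ContinuousAt ψ (f z) := by
    intro z hz N hN
    rw [hψ z hz] at hN
    obtain ⟨s, hs, hso, hzs⟩ := _root_.mem_nhds_iff.1 (inter_mem hN (hΩ.mem_nhds hz))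
    refine mem_map.2 (mem_of_superset ((isOpen_image hΩ hf hi (fun w hw => (hs hw).2) hso).mem_nhds
      ⟨z, hzs, rfl⟩) ?_)
    rintro _ ⟨w, hw, rfl⟩
    rw [mem_preimage, hψ w (hs hw).2]
    exact (hs hw).1
  have hV : IsOpen (f '' Ω) := isOpen_image hΩ hf hi subset_rfl hΩ
  have hinv : ∀ w ∈ f '' Ω, f (ψ w) = w := by
    rintro _ ⟨z, hz, rfl⟩
    rw [hψ z hz]
  have hreg : ∀ z ∈ Ω, deriv f z ≠ 0 → DifferentiableAt ℂ ψ (f z) := by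
    intro z hz h0
    have h1 : HasDerivAt f (deriv f z) (ψ (f z)) := by
      rw [hψ z hz]
      exact (hf.differentiableAt (hΩ.mem_nhds hz)).hasDerivAt
    refine (HasDerivAt.of_local_left_inverse (hcont z hz) h1 h0 ?_).differentiableAt
    filter_upwards [hV.mem_nhds ⟨z, hz, rfl⟩] with w hw using hinv w hw
  refine ⟨ψ, ?_, hψ⟩
  rintro _ ⟨z, hz, rfl⟩
  refine DifferentiableAt.differentiableWithinAt ?_
  by_cases h0 : deriv f z = 0
  swap
  · exact hreg z hz h0
  have han : AnalyticAt ℂ (deriv f) z := ((hf.analyticOnNhd hΩ) z hz).deriv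
  obtain ⟨ρ, hρ, hρΩ⟩ := Metric.isOpen_iff.1 hΩ z hz
  rcases han.eventually_eq_zero_or_eventually_ne_zero with h | h
  · exfalso
    obtain ⟨ρ', hρ', hz'⟩ := Metric.eventually_nhds_iff_ball.1 h
    set t := min ρ ρ'
    have ht : 0 < t := lt_min hρ hρ'
    have hw : z + (t/2 : ℝ) ∈ ball z t := by
      rw [mem_ball, dist_eq_norm, add_sub_cancel_left, norm_real, Real.norm_eq_abs,
        abs_of_pos (by positivity)]
      linarith
    have := Convex.norm_image_sub_le_of_norm_deriv_le (f := f) (s := ball z t) (C := 0) (𝕜 := ℂ)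
      (fun x hx => hf.differentiableAt (hΩ.mem_nhds (hρΩ (ball_subset_ball (min_le_left _ _) hx))))
      (fun x hx => by rw [hz' x (ball_subset_ball (min_le_right _ _) hx)]; simp)
      (convex_ball z t) (mem_ball_self ht) hw
    rw [zero_mul, norm_le_zero_iff, sub_eq_zero] at this
    have := hi (hρΩ (ball_subset_ball (min_le_left _ _) hw)) hz this
    simp at this
    exact ht.ne' this
  · rw [eventually_nhdsWithin_iff] at h
    have h' : ∀ᶠ w in 𝓝 (f z), w ≠ f z → DifferentiableAt ℂ ψ w := by
      have h2 := (hcont z hz).eventually (by rw [hψ z hz]; exact h)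
      filter_upwards [h2, hV.mem_nhds ⟨z, hz, rfl⟩] with w hw hwV hne
      obtain ⟨y, hy, rfl⟩ := hwV
      rw [hψ y hy] at hw
      exact hreg y hy (hw (fun h => hne (by rw [h])))
    have := (differentiableOn_compl_singleton_and_continuousAt_iff (f := ψ) h').1
      ⟨fun w hw => (hw.1 hw.2).differentiableWithinAt, hcont z hz⟩
    exact this.differentiableAt h'

lemma tendsto_loc {ι : Type*} {p : Filter ι} [p.NeBot] {Ω : Set ℂ} (hΩ : IsOpen Ω)
    {F : ι → ℂ → ℂ} {f : ℂ → ℂ} (hF : ∀ i, DifferentiableOn ℂ (F i) Ω)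
    (hb : ∀ i, ∀ z ∈ Ω, ‖F i z‖ ≤ 1) (hlim : ∀ z ∈ Ω, Tendsto (fun i => F i z) p (𝓝 (f z))) :
    TendstoLocallyUniformlyOn F f p Ω := by
  rw [Metric.tendstoLocallyUniformlyOn_iff]
  intro ε hε x hx
  obtain ⟨ρ, hρ, hρΩ⟩ := Metric.isOpen_iff.1 hΩ x hx
  have hr : 0 < min ρ (ε * ρ / 8) := by positivity
  refine ⟨ball x (min ρ (ε * ρ / 8)), mem_nhdsWithin_of_mem_nhds (ball_mem_nhds _ hr), ?_⟩
  have hlip : ∀ i, ∀ y ∈ ball x (min ρ (ε * ρ / 8)), dist (F i y) (F i x) ≤ ε / 4 := by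
    intro i y hy
    have hy1 : y ∈ ball x ρ := ball_subset_ball (min_le_left _ _) hy
    have hy2 : dist y x < ε * ρ / 8 := ball_subset_ball (min_le_right _ _) hy
    have := dist_le_div_mul_dist_of_mapsTo_ball (f := F i) (R₂ := 2) ((hF i).mono hρΩ)
      (fun w hw => by
        rw [mem_closedBall, dist_eq_norm]
        have h1 := hb i w (hρΩ hw)
        have h2 := hb i x hx
        have := norm_sub_le (F i w) (F i x)
        linarith) hy1
    calc _ ≤ _ := this
      _ ≤ 2 / ρ * (ε * ρ / 8) := by gcongr
      _ = ε / 4 := by field_simp; norm_num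
  have h1 : ∀ᶠ n in p, dist (F n x) (f x) < ε / 4 := (hlim x hx).eventually (ball_mem_nhds _ (by positivity))
  filter_upwards [h1] with n hn y hy
  have hyΩ : y ∈ Ω := hρΩ (ball_subset_ball (min_le_left _ _) hy)
  have h2 : dist (f y) (f x) ≤ ε / 4 :=
    le_of_tendsto ((hlim y hyΩ).dist (hlim x hx)) (Eventually.of_forall (fun i => hlip i y hy))
  have h3 := hlip n y hy
  have := dist_triangle (f y) (f x) (F n y)
  have := dist_triangle (f x) (F n x) (F n y)
  rw [dist_comm] at h3 hn
  linarith

lemma hurwitz {ι : Type*} {p : Filter ι} [p.NeBot] {Ω : Set ℂ} (hΩ : IsOpen Ω)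
    (hc : IsPreconnected Ω) {F : ι → ℂ → ℂ} {f : ℂ → ℂ} (hF : ∀ i, DifferentiableOn ℂ (F i) Ω)
    (hi : ∀ i, InjOn (F i) Ω) (hlim : TendstoLocallyUniformlyOn F f p Ω)
    (hne : ∃ z ∈ Ω, deriv f z ≠ 0) : InjOn f Ω := by
  intro a ha b hb hab
  by_contra hab'
  have hf : DifferentiableOn ℂ f Ω := hlim.differentiableOn (Eventually.of_forall hF) hΩ
  have han : AnalyticOnNhd ℂ f Ω := hf.analyticOnNhd hΩ
  have hga : AnalyticAt ℂ (fun z => f z - f a) b := (han b hb).sub analyticAt_const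
  rcases hga.eventually_eq_zero_or_eventually_ne_zero with h | h
  · obtain ⟨z, hz, hz0⟩ := hne
    have := AnalyticOnNhd.eqOn_of_preconnected_of_eventuallyEq han
      (analyticOnNhd_const (v := f a)) hc hb (by
        filter_upwards [h] with w hw using sub_eq_zero.1 hw)
    apply hz0
    have h2 : f =ᶠ[𝓝 z] fun _ => f a := by
      filter_upwards [hΩ.mem_nhds hz] with w hw using this hw
    rw [h2.deriv_eq]
    simp
  · rw [eventually_nhdsWithin_iff] at h
    have hmem : {z | z ≠ b → f z - f a ≠ 0} ∩ Ω ∩ {a}ᶜ ∈ 𝓝 b :=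
      inter_mem (inter_mem h (hΩ.mem_nhds hb)) (isOpen_compl_singleton.mem_nhds (Ne.symm hab'))
    obtain ⟨ρ, hρ, hsub⟩ := Metric.nhds_basis_closedBall.mem_iff.1 hmem
    have hsphne : (sphere b ρ).Nonempty := NormedSpace.sphere_nonempty.2 hρ.le
    have hfc : ContinuousOn (fun z => ‖f z - f a‖) (sphere b ρ) :=
      ((hf.continuousOn.mono (fun z hz => (hsub (sphere_subset_closedBall hz)).1.2)).sub
        continuousOn_const).norm
    obtain ⟨z1, hz1, hmin⟩ := (isCompact_sphere b ρ).exists_isMinOn hsphne hfc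
    set m := ‖f z1 - f a‖ with hm
    have hm0 : 0 < m := by
      rw [hm, norm_pos_iff]
      refine (hsub (sphere_subset_closedBall hz1)).1.1 ?_
      rintro rfl
      simp at hz1
      exact hρ.ne hz1
    have hunif : TendstoUniformlyOn F f p (insert a (closedBall b ρ)) :=
      (tendstoLocallyUniformlyOn_iff_forall_isCompact hΩ).1 hlim _
        (insert_subset ha (fun z hz => (hsub hz).1.2)) ((isCompact_closedBall b ρ).insert a)
    obtain ⟨n, hn⟩ := (Metric.tendstoUniformlyOn_iff.1 hunif (m/4) (by positivity)).exists
    have hna := hn a (mem_insert _ _)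
    have hdiff : ∀ z ∈ closedBall b ρ, ‖(F n z - F n a) - (f z - f a)‖ < m / 2 := by
      intro z hz
      have h1 := hn z (mem_insert_of_mem _ hz)
      rw [dist_eq_norm] at h1 hna
      calc _ = ‖(f a - F n a) - (f z - F n z)‖ := by congr 1; ring
        _ ≤ _ := norm_sub_le _ _
        _ < m / 2 := by linarith
    have hnz : ∀ z ∈ closedBall b ρ, F n z - F n a ≠ 0 := by
      intro z hz h0
      exact (hsub hz).2 (hi n (hsub hz).1.2 ha (sub_eq_zero.1 h0))
    have hd : DiffContOnCl ℂ (fun z => (F n z - F n a)⁻¹) (ball b ρ) := by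
      refine DifferentiableOn.diffContOnCl ?_
      rw [closure_ball _ hρ.ne']
      exact DifferentiableOn.inv (((hF n).mono (fun z hz => (hsub hz).1.2)).sub_const _) hnz
    have := norm_le_of_forall_mem_frontier_norm_le isBounded_ball hd (C := (m/2)⁻¹) (by
      intro z hz
      rw [frontier_ball _ hρ.ne'] at hz
      rw [norm_inv]
      refine inv_anti₀ (by positivity) ?_
      have h1 := hdiff z (sphere_subset_closedBall hz)
      have h2 : m ≤ ‖f z - f a‖ := hmin hz
      have h3 := norm_sub_norm_le (f z - f a) (F n z - F n a)
      rw [norm_sub_rev (f z - f a) (F n z - F n a)] at h3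
      linarith) (z := b) (by rw [closure_ball _ hρ.ne']; exact mem_closedBall_self hρ.le)
    rw [norm_inv, inv_le_inv₀ (norm_pos_iff.2 (hnz b (mem_closedBall_self hρ.le))) (by positivity)] at this
    have h1 := hdiff b (mem_closedBall_self hρ.le)
    rw [hab, sub_self, sub_zero] at h1
    linarith
end PlaneAR

namespace PlaneAR
open Set Filter Topology Metric Complex ComplexConjugate

lemma mobius_denom {c w : ℂ} (hc : ‖c‖ < 1) (hw : ‖w‖ < 1) : 1 - conj c * w ≠ 0 := by
  intro h
  have h1 : ‖conj c * w‖ = 1 := by rw [← sub_eq_zero.1 h, norm_one]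
  rw [norm_mul, RCLike.norm_conj] at h1
  nlinarith [norm_nonneg c, norm_nonneg w]

lemma mobius_norm {c w : ℂ} (hc : ‖c‖ < 1) (hw : ‖w‖ < 1) : ‖(w - c) / (1 - conj c * w)‖ < 1 := by
  have h0 := mobius_denom hc hw
  rw [norm_div, div_lt_one (norm_pos_iff.2 h0)]
  have key : normSq (1 - conj c * w) - normSq (w - c) = (1 - normSq c) * (1 - normSq w) := by
    simp only [normSq_apply, sub_re, sub_im, mul_re, mul_im, conj_re, conj_im, one_re, one_im]
    ring
  rw [normSq_eq_norm_sq, normSq_eq_norm_sq, normSq_eq_norm_sq, normSq_eq_norm_sq] at key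
  have h1 : 0 < (1 - ‖c‖^2) * (1 - ‖w‖^2) := by
    apply mul_pos <;> nlinarith [norm_nonneg c, norm_nonneg w]
  exact lt_of_pow_lt_pow_left₀ 2 (norm_nonneg _) (by linarith)

lemma mobius_inj {c w w' : ℂ} (hc : ‖c‖ < 1) (hw : ‖w‖ < 1) (hw' : ‖w'‖ < 1)
    (h : (w - c) / (1 - conj c * w) = (w' - c) / (1 - conj c * w')) : w = w' := by
  have h0 := mobius_denom hc hw
  have h0' := mobius_denom hc hw'
  rw [div_eq_div_iff h0 h0'] at h
  have h1 : (1 - c * conj c) * (w - w') = 0 := by linear_combination h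
  rcases mul_eq_zero.1 h1 with h2 | h2
  · exfalso
    rw [mul_conj, normSq_eq_norm_sq] at h2
    have h3 : (1:ℝ) - ‖c‖^2 = 0 := by exact_mod_cast h2
    nlinarith [norm_nonneg c]
  · exact sub_eq_zero.1 h2

lemma mobius_deriv {c w : ℂ} (hc : ‖c‖ < 1) (hw : ‖w‖ < 1) :
    HasDerivAt (fun w => (w - c) / (1 - conj c * w)) ((1 - c * conj c) / (1 - conj c * w)^2) w := by
  have h0 := mobius_denom hc hw
  have h1 : HasDerivAt (fun w : ℂ => w - c) 1 w := (hasDerivAt_id w).sub_const c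
  have h2 : HasDerivAt (fun w : ℂ => 1 - conj c * w) (-(conj c)) w := by
    simpa using ((hasDerivAt_id w).const_mul (conj c)).const_sub 1
  refine (h1.div h2 h0).congr_deriv ?_
  congr 1
  ring

/-- the family of admissible maps -/
structure Adm (Ω : Set ℂ) (f : ℂ → ℂ) : Prop where
  diff : DifferentiableOn ℂ f Ω
  inj : InjOn f Ω
  lt : ∀ z ∈ Ω, ‖f z‖ < 1
  zero : f 0 = 0

lemma exists_adm {Ω : Set ℂ} (hΩ : IsOpen Ω) (h0 : 0 ∈ Ω) (hne : Ω ≠ univ)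
    (H : LogDom Ω) : ∃ f, Adm Ω f ∧ deriv f 0 ≠ 0 := by
  obtain ⟨q, hq⟩ := (ne_univ_iff_exists_notMem _).1 hne
  obtain ⟨s, hs, hss⟩ := H.sqrt hΩ (g := fun z => z - q) (by fun_prop)
    (fun z hz => sub_ne_zero.2 (fun h => hq (h ▸ hz)))
  have sne : ∀ z ∈ Ω, s z ≠ 0 := fun z hz h => by
    have := hss z hz
    rw [h, zero_mul] at this
    exact hq (sub_eq_zero.1 this.symm ▸ hz)
  have sinj : InjOn s Ω := fun a ha b hb hab => by
    have h1 := hss a ha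
    have h2 := hss b hb
    rw [hab, h2] at h1
    linear_combination -h1
  have hop := isOpen_image hΩ hs sinj subset_rfl hΩ
  obtain ⟨r, hr, hrs⟩ := Metric.isOpen_iff.1 hop (s 0) ⟨0, h0, rfl⟩
  have hfar : ∀ z ∈ Ω, r ≤ ‖s z + s 0‖ := by
    intro z hz
    by_contra! hlt
    have : - s z ∈ ball (s 0) r := by
      have e : -(-s z - s 0) = s z + s 0 := by ring
      rw [mem_ball, dist_eq_norm, ← norm_neg, e]
      exact hlt
    obtain ⟨b, hb, hbz⟩ := hrs this
    have h1 := hss b hb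
    rw [hbz, neg_mul_neg, hss z hz] at h1
    have hzb : z = b := by linear_combination h1
    rw [← hzb] at hbz
    refine sne z hz ?_
    linear_combination hbz / 2
  have hnz : ∀ z ∈ Ω, s z + s 0 ≠ 0 := fun z hz h => by
    have := hfar z hz
    rw [h, norm_zero] at this
    linarith
  have hrc : (r : ℂ) ≠ 0 := by exact_mod_cast hr.ne'
  have hinvle : ∀ z ∈ Ω, ‖(s z + s 0)⁻¹‖ ≤ r⁻¹ := fun z hz => by
    rw [norm_inv]; exact inv_anti₀ hr (hfar z hz)
  refine ⟨fun z => (r / 3) * ((s z + s 0)⁻¹ - (s 0 + s 0)⁻¹), ⟨?_, ?_, ?_, ?_⟩, ?_⟩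
  · exact ((((hs.add_const _).inv hnz)).sub_const _).const_mul _
  · intro a ha b hb hab
    have h1 := mul_left_cancel₀ (by simpa using hrc) hab
    have h2 := inv_injective (sub_left_injective h1)
    exact sinj ha hb (add_right_cancel h2)
  · intro z hz
    have h1 := norm_sub_le ((s z + s 0)⁻¹) ((s 0 + s 0)⁻¹)
    have h2 := hinvle z hz
    have h3 := hinvle 0 h0
    calc ‖(r / 3 : ℂ) * ((s z + s 0)⁻¹ - (s 0 + s 0)⁻¹)‖
        = r / 3 * ‖(s z + s 0)⁻¹ - (s 0 + s 0)⁻¹‖ := by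
          rw [norm_mul]; congr 1; simp [abs_of_pos hr]
      _ ≤ r / 3 * (r⁻¹ + r⁻¹) := by gcongr; linarith
      _ = 2 / 3 := by field_simp; norm_num
      _ < 1 := by norm_num
  · simp
  · have hd := (hs.differentiableAt (hΩ.mem_nhds h0)).hasDerivAt
    have h1 : deriv s 0 ≠ 0 := by
      intro hd0
      rw [hd0] at hd
      have h2 := hd.mul hd
      have h3 : HasDerivAt (fun z => z - q) 1 0 := (hasDerivAt_id 0).sub_const q
      have h4 : (fun z => z - q) =ᶠ[𝓝 0] s * s := by
        filter_upwards [hΩ.mem_nhds h0] with z hz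
        exact (hss z hz).symm
      have := (h2.congr_of_eventuallyEq h4).unique h3
      simp at this
    have h2 : HasDerivAt (fun z => (r / 3 : ℂ) * ((s z + s 0)⁻¹ - (s 0 + s 0)⁻¹))
        ((r / 3) * (-deriv s 0 / (s 0 + s 0)^2)) 0 :=
      ((((hd.add_const (s 0)).inv (hnz 0 h0))).sub_const _).const_mul _
    rw [h2.deriv]
    refine mul_ne_zero (by simpa using hrc) (div_ne_zero (neg_ne_zero.2 h1) (pow_ne_zero _ (hnz 0 h0)))

lemma koebe {Ω : Set ℂ} (hΩ : IsOpen Ω) (h0 : 0 ∈ Ω) (H : LogDom Ω) {f : ℂ → ℂ} (hf : Adm Ω f)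
    (hd0 : deriv f 0 ≠ 0) {c : ℂ} (hc : ‖c‖ < 1) (hcn : ∀ z ∈ Ω, f z ≠ c) :
    ∃ F, Adm Ω F ∧ ‖deriv f 0‖ < ‖deriv F 0‖ := by
  set g : ℂ → ℂ := fun z => (f z - c) / (1 - conj c * f z) with hg
  have gd : DifferentiableOn ℂ g Ω := fun z hz =>
    ((mobius_deriv hc (hf.lt z hz)).differentiableAt.comp z
      (hf.diff.differentiableAt (hΩ.mem_nhds hz))).differentiableWithinAt
  obtain ⟨s, hs, hss⟩ := H.sqrt hΩ gd
    (fun z hz => div_ne_zero (sub_ne_zero.2 (hcn z hz)) (mobius_denom hc (hf.lt z hz)))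
  have slt : ∀ z ∈ Ω, ‖s z‖ < 1 := by
    intro z hz
    have h1 : ‖s z‖ * ‖s z‖ < 1 := by
      rw [← norm_mul, hss z hz]
      exact mobius_norm hc (hf.lt z hz)
    nlinarith [norm_nonneg (s z)]
  have sinj : InjOn s Ω := fun a ha b hb hab => by
    have h1 := hss a ha
    rw [hab, hss b hb] at h1
    exact hf.inj ha hb (mobius_inj hc (hf.lt a ha) (hf.lt b hb) h1.symm)
  set β := s 0 with hβ
  have hβ1 : ‖β‖ < 1 := slt 0 h0
  have hββ : β * β = -c := by
    rw [hβ, hss 0 h0, hg]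
    simp [hf.zero]
  have hc0 : c ≠ 0 := fun h => hcn 0 h0 (by rw [hf.zero, h])
  have hβ0 : β ≠ 0 := by
    intro h
    rw [h, mul_zero] at hββ
    exact hc0 (neg_eq_zero.1 hββ.symm)
  have sd := (hs.differentiableAt (hΩ.mem_nhds h0)).hasDerivAt
  have fd := (hf.diff.differentiableAt (hΩ.mem_nhds h0)).hasDerivAt
  have gder : HasDerivAt g ((1 - c * conj c) * deriv f 0) 0 := by
    have h1 := (mobius_deriv hc (w := f 0) (by rw [hf.zero]; simp)).comp 0 fd
    refine h1.congr_deriv ?_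
    rw [hf.zero]
    simp
  have hrel : 2 * β * deriv s 0 = (1 - c * conj c) * deriv f 0 := by
    have h4 : g =ᶠ[𝓝 0] s * s := by
      filter_upwards [hΩ.mem_nhds h0] with z hz
      exact (hss z hz).symm
    have := ((sd.mul sd).congr_of_eventuallyEq h4).unique gder
    rw [← this]
    ring
  refine ⟨fun z => (s z - β) / (1 - conj β * s z), ⟨?_, ?_, ?_, ?_⟩, ?_⟩
  · exact fun z hz => ((mobius_deriv hβ1 (slt z hz)).differentiableAt.comp z
      (hs.differentiableAt (hΩ.mem_nhds hz))).differentiableWithinAt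
  · exact fun a ha b hb hab => sinj ha hb (mobius_inj hβ1 (slt a ha) (slt b hb) hab)
  · exact fun z hz => mobius_norm hβ1 (slt z hz)
  · simp [hβ]
  · have h1 : HasDerivAt (fun z => (s z - β) / (1 - conj β * s z))
        ((1 - β * conj β) / (1 - conj β * β)^2 * deriv s 0) 0 :=
      (mobius_deriv hβ1 (slt 0 h0)).comp 0 sd
    rw [h1.deriv]
    set b := ‖β‖ with hb
    have hbpos : 0 < b := norm_pos_iff.2 hβ0
    have hcc : ‖c‖ = b * b := by rw [← norm_neg c, ← hββ, norm_mul]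
    have e1 : (1 - β * conj β) = ((1 - b^2 : ℝ) : ℂ) := by
      rw [mul_conj, normSq_eq_norm_sq]; push_cast; rfl
    have e2 : (1 - conj β * β) = ((1 - b^2 : ℝ) : ℂ) := by rw [mul_comm, e1]
    have e3 : (1 - c * conj c) = ((1 - b^4 : ℝ) : ℂ) := by
      rw [mul_conj, normSq_eq_norm_sq, hcc]; push_cast; ring
    have hpos : 0 < 1 - b^2 := by nlinarith
    have hpos4 : 0 < 1 - b^4 := by nlinarith
    rw [e1, e2, norm_mul, norm_div, norm_pow, norm_real, Real.norm_of_nonneg hpos.le]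
    rw [e3] at hrel
    have hn := congrArg norm hrel
    rw [norm_mul, norm_mul, norm_mul, norm_real, Real.norm_of_nonneg hpos4.le, ← hb] at hn
    simp only [RCLike.norm_ofNat] at hn
    have hfpos : 0 < ‖deriv f 0‖ := norm_pos_iff.2 hd0
    have e4 : (1 - b^2) / (1-b^2)^2 * ‖deriv s 0‖ = (1 + b^2) / (2 * b) * ‖deriv f 0‖ := by
      have : ‖deriv s 0‖ = (1 - b^4) * ‖deriv f 0‖ / (2 * b) := by
        rw [← hn]; field_simp
      rw [this]
      field_simp
      ring
    rw [e4]
    have : 1 < (1 + b^2) / (2 * b) := by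
      rw [one_lt_div (by positivity)]
      nlinarith [sq_nonneg (1 - b), mul_pos (sub_pos.2 hβ1) (sub_pos.2 hβ1)]
    nlinarith

theorem riemann {Ω : Set ℂ} (hΩ : IsOpen Ω) (hconn : IsPreconnected Ω) (h0 : 0 ∈ Ω)
    (hne : Ω ≠ univ) (H : LogDom Ω) :
    ∃ f ψ : ℂ → ℂ, DifferentiableOn ℂ f Ω ∧ DifferentiableOn ℂ ψ (ball 0 1) ∧
      (∀ z ∈ Ω, f z ∈ ball (0:ℂ) 1) ∧ (∀ w ∈ ball (0:ℂ) 1, ψ w ∈ Ω) ∧ (∀ z ∈ Ω, ψ (f z) = z) ∧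
      (∀ w ∈ ball (0:ℂ) 1, f (ψ w) = w) ∧ f 0 = 0 := by
  obtain ⟨f0, hf0, hf0d⟩ := exists_adm hΩ h0 hne H
  obtain ⟨ρ, hρ, hρΩ⟩ := Metric.isOpen_iff.1 hΩ 0 h0
  set D : Set ℝ := {x | ∃ f, Adm Ω f ∧ x = ‖deriv f 0‖} with hD
  have hDne : D.Nonempty := ⟨_, f0, hf0, rfl⟩
  have hDb : BddAbove D := by
    refine ⟨1 / ρ, ?_⟩
    rintro _ ⟨f, hf, rfl⟩
    refine norm_deriv_le_div_of_mapsTo_ball (hf.diff.mono hρΩ) ?_ hρ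
    intro z hz
    rw [hf.zero, mem_closedBall_zero_iff]
    exact (hf.lt z (hρΩ hz)).le
  obtain ⟨u, -, hu, huD⟩ := exists_seq_tendsto_sSup hDne hDb
  choose F hF hFu using huD
  set p : Ultrafilter ℕ := hyperfilter ℕ
  have hp : (p : Filter ℕ) ≤ atTop := Nat.hyperfilter_le_atTop
  have hex : ∀ z, ∃ y, z ∈ Ω → Tendsto (fun n => F n z) p (𝓝 y) := by
    intro z
    by_cases hz : z ∈ Ω
    · obtain ⟨y, -, hy⟩ := (isCompact_closedBall (0:ℂ) 1).ultrafilter_le_nhds (p.map (fun n => F n z))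
        (by
          rw [le_principal_iff]
          refine Filter.mem_map.2 (Eventually.of_forall fun n => ?_)
          exact mem_closedBall_zero_iff.2 ((hF n).lt z hz).le)
      exact ⟨y, fun _ => hy⟩
    · exact ⟨0, fun h => absurd h hz⟩
  choose f hf using hex
  have hlu : TendstoLocallyUniformlyOn F f (p : Filter ℕ) Ω :=
    tendsto_loc hΩ (fun i => (hF i).diff) (fun i z hz => ((hF i).lt z hz).le) hf
  have hfd : DifferentiableOn ℂ f Ω := hlu.differentiableOn (Eventually.of_forall fun i => (hF i).diff) hΩ
  have hder : ‖deriv f 0‖ = sSup D := by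
    have h1 := (hlu.deriv (Eventually.of_forall fun i => (hF i).diff) hΩ).tendsto_at h0
    have h2 : Tendsto (fun n => ‖deriv (F n) 0‖) p (𝓝 (sSup D)) := by
      simp only [← hFu]
      exact hu.mono_left hp
    exact tendsto_nhds_unique h1.norm h2
  have hMpos : 0 < sSup D := (norm_pos_iff.2 hf0d).trans_le (le_csSup hDb ⟨f0, hf0, rfl⟩)
  have hd0 : deriv f 0 ≠ 0 := by
    intro h
    rw [h, norm_zero] at hder
    exact hMpos.ne hder
  have hinj : InjOn f Ω := hurwitz hΩ hconn (fun i => (hF i).diff) (fun i => (hF i).inj) hlu ⟨0, h0, hd0⟩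
  have hfle : ∀ z ∈ Ω, ‖f z‖ ≤ 1 := fun z hz =>
    le_of_tendsto (hf z hz).norm (Eventually.of_forall fun n => ((hF n).lt z hz).le)
  have hf00 : f 0 = 0 := by
    refine tendsto_nhds_unique (hf 0 h0) ?_
    simp only [(hF _).zero]
    exact tendsto_const_nhds
  have hadm : Adm Ω f := by
    refine ⟨hfd, hinj, ?_, hf00⟩
    intro z hz
    refine lt_of_le_of_ne (hfle z hz) fun h1 => ?_
    have := eqOn_of_isPreconnected_of_isMaxOn_norm hconn hΩ hfd hz (fun w hw => by
      simp only [Function.comp_apply, mem_ofPred_eq, h1]; exact hfle w hw) h0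
    simp only [Function.const_apply, hf00] at this
    rw [← this, norm_zero] at h1
    exact zero_ne_one h1
  have hsurj : ∀ w ∈ ball (0:ℂ) 1, ∃ z ∈ Ω, f z = w := by
    intro c hc
    by_contra! hcon
    obtain ⟨G, hG, hGd⟩ := koebe hΩ h0 H hadm hd0 (mem_ball_zero_iff.1 hc) hcon
    have := le_csSup hDb ⟨G, hG, rfl⟩
    linarith
  obtain ⟨ψ, hψ, hψf⟩ := exists_inverse hΩ hfd hinj
  have him : f '' Ω = ball 0 1 := by
    ext w
    constructor
    · rintro ⟨z, hz, rfl⟩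
      exact mem_ball_zero_iff.2 (hadm.lt z hz)
    · intro hw
      obtain ⟨z, hz, rfl⟩ := hsurj w hw
      exact ⟨z, hz, rfl⟩
  rw [him] at hψ
  refine ⟨f, ψ, hfd, hψ, fun z hz => mem_ball_zero_iff.2 (hadm.lt z hz), ?_, hψf, ?_, hf00⟩
  · intro w hw
    obtain ⟨z, hz, rfl⟩ := hsurj w hw
    rwa [hψf z hz]
  · intro w hw
    obtain ⟨z, hz, rfl⟩ := hsurj w hw
    rw [hψf z hz]
end PlaneAR

namespace PlaneAR
open Set Filter Topology Metric Complex

/-- the inverted complement -/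
def invC (K : Set ℂ) (p : ℂ) : Set ℂ := {w | w = 0 ∨ p + w⁻¹ ∉ K}

lemma invC_ball {K : Set ℂ} (hK : IsCompact K) (p : ℂ) : ∃ r > 0, ∀ w ∈ ball (0:ℂ) r, w ≠ 0 →
    ∀ z ∈ K, 1 ≤ dist z (p + w⁻¹) := by
  obtain ⟨R, hR0, hR⟩ := hK.isBounded.subset_closedBall_lt 0 p
  refine ⟨(R+1)⁻¹, by positivity, fun w hw hw0 z hz => ?_⟩
  rw [mem_ball_zero_iff] at hw
  have h1 : R + 1 < ‖w⁻¹‖ := by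
    rw [norm_inv, lt_inv_comm₀ (by positivity) (norm_pos_iff.2 hw0)]
    exact hw
  have h2 := mem_closedBall.1 (hR hz)
  have h3 := dist_triangle_left (p + w⁻¹) p z
  rw [dist_self_add_left] at h3
  linarith

lemma isOpen_invC {K : Set ℂ} (hK : IsCompact K) (p : ℂ) : IsOpen (invC K p) := by
  rw [isOpen_iff_mem_nhds]
  intro w hw
  by_cases h0 : w = 0
  · obtain ⟨r, hr, h⟩ := invC_ball hK p
    rw [h0]
    refine mem_of_superset (ball_mem_nhds _ hr) (fun v hv => ?_)
    by_cases hv0 : v = 0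
    · exact Or.inl hv0
    · refine Or.inr (fun hvK => ?_)
      have := h v hv hv0 _ hvK
      rw [dist_self] at this
      linarith
  · have hc : ContinuousAt (fun w : ℂ => p + w⁻¹) w := continuousAt_const.add (continuousAt_inv₀ h0)
    filter_upwards [hc.eventually (hK.isClosed.isOpen_compl.mem_nhds (hw.resolve_left h0))] with v hv
    exact Or.inr hv

lemma isPreconnected_invC {K : Set ℂ} (hK : IsCompact K) (hc : IsConnected Kᶜ) {p : ℂ} (hp : p ∈ K) :
    IsPreconnected (invC K p) := by
  have h1 : IsPreconnected ((fun z => (z - p)⁻¹) '' Kᶜ) := by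
    refine hc.isPreconnected.image _ ?_
    refine ContinuousOn.inv₀ (by fun_prop) (fun z hz => sub_ne_zero.2 (fun h => hz (h ▸ hp)))
  have h2 : (fun z => (z - p)⁻¹) '' Kᶜ = invC K p \ {0} := by
    ext w
    constructor
    · rintro ⟨z, hz, rfl⟩
      have : z - p ≠ 0 := sub_ne_zero.2 (fun h => hz (h ▸ hp))
      exact ⟨Or.inr (by simpa using hz), by simpa using this⟩
    · rintro ⟨hw, hw0⟩
      exact ⟨p + w⁻¹, hw.resolve_left hw0, by simp⟩
  rw [h2] at h1
  refine h1.subset_closure sdiff_subset ?_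
  intro w hw
  by_cases hw0 : w = 0
  · have : (𝓝[≠] (0:ℂ)).NeBot := inferInstance
    rw [hw0, mem_closure_iff_nhdsWithin_neBot]
    refine this.mono ?_
    rw [sdiff_eq]
    exact le_of_eq
      (nhdsWithin_inter_of_mem (mem_nhdsWithin_of_mem_nhds ((isOpen_invC hK p).mem_nhds (Or.inl rfl)))).symm
  · exact subset_closure ⟨hw, hw0⟩

/-- exhaustion -/
def exC (K : Set ℂ) (p : ℂ) (m : ℕ) : Set ℂ :=
  {w | w = 0 ∨ ((m : ℝ) + 1)⁻¹ ≤ infDist (p + w⁻¹) K}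

lemma exC_compact {K : Set ℂ} {p : ℂ} (hp : p ∈ K) (m : ℕ) :
    IsCompact (exC K p m) := by
  refine (isCompact_closedBall (0:ℂ) (m+1)).of_isClosed_subset ?_ ?_
  · rw [← isOpen_compl_iff, isOpen_iff_mem_nhds]
    intro w hw
    simp only [exC, mem_compl_iff, mem_ofPred_eq, not_or, not_le] at hw
    have hc : ContinuousAt (fun w : ℂ => infDist (p + w⁻¹) K) w :=
      (continuous_infDist_pt K).continuousAt.comp (continuousAt_const.add (continuousAt_inv₀ hw.1))
    filter_upwards [hc.eventually (Iio_mem_nhds hw.2), isOpen_compl_singleton.mem_nhds hw.1] with v hv hv'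
    simp only [exC, mem_compl_iff, mem_ofPred_eq, not_or, not_le]
    exact ⟨hv', hv⟩
  · rintro w (rfl | hw)
    · exact mem_closedBall_self (by positivity)
    · rw [mem_closedBall_zero_iff]
      have h1 := hw.trans (infDist_le_dist_of_mem hp)
      rw [dist_self_add_left, norm_inv] at h1
      by_cases h0 : w = 0
      · rw [h0, norm_zero]; positivity
      · rwa [inv_le_inv₀ (by positivity) (norm_pos_iff.2 h0)] at h1

lemma exC_allLog {K : Set ℂ} (hKc : IsPreconnected K) {p : ℂ} (hp : p ∈ K) (m : ℕ) :
    AllLog (exC K p m) := by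
  intro c hc
  simp only [exC, mem_ofPred_eq, not_or, not_le] at hc
  obtain ⟨hc0, hc1⟩ := hc
  obtain ⟨k, hk, hkd⟩ := (infDist_lt_iff ⟨p, hp⟩).1 hc1
  set ε : ℝ := ((m:ℝ)+1)⁻¹ with hε
  have hε0 : 0 < ε := by positivity
  have hT : IsPreconnected (K ∪ ball k ε) :=
    IsPreconnected.union k hk (mem_ball_self hε0) hKc (convex_ball k ε).isPreconnected
  have h1 : HasLog (exC K p m) (fun w => 1 - ((p + c⁻¹) - p) * w) := by
    refine hasLog_homotopy hT (exC_compact hp m) (G := fun t w => 1 - (t - p) * w) (by fun_prop) ?_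
      (s := p) (t := p + c⁻¹) (Or.inl hp) (Or.inr hkd) ?_
    · intro t ht w hw h
      have hw0 : w ≠ 0 := by
        rintro rfl
        simp at h
      have htw : t = p + w⁻¹ := by
        field_simp
        linear_combination -h
      have hw1 := hw.resolve_left hw0
      rw [← htw] at hw1
      have : infDist t K < ε := by
        rcases ht with ht | ht
        · rw [infDist_zero_of_mem ht]; exact hε0
        · exact (infDist_lt_iff ⟨p, hp⟩).2 ⟨k, hk, ht⟩
      linarith
    · exact (HasLog.const one_ne_zero).congr (fun z _ => by simp)
  refine ((HasLog.const (neg_ne_zero.2 hc0)).mul h1).congr (fun w _ => ?_)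
  field_simp
  ring

lemma logDom_invC {K : Set ℂ} (hK : IsCompact K) (hKc : IsPreconnected K) (hl : AllLog K) {p : ℂ}
    (hp : p ∈ K) : LogDom (invC K p) := by
  intro g hg hg0
  have hO := isOpen_invC hK p
  have hconn : IsConnected (invC K p) :=
    ⟨⟨0, Or.inl rfl⟩, isPreconnected_invC hK (isConnected_compl_of_hasLog hK hl) hp⟩
  have hpath := hO.isConnected_iff_isPathConnected.1 hconn
  have hsub : ∀ m, exC K p m ⊆ invC K p := by
    intro m w hw
    rcases hw with h | h
    · exact Or.inl h
    · refine Or.inr (fun hwK => ?_)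
      rw [infDist_zero_of_mem hwK] at h
      have : 0 < ((m:ℝ)+1)⁻¹ := by positivity
      linarith
  have hmono : Monotone (exC K p) := by
    intro m n hmn w hw
    rcases hw with h | h
    · exact Or.inl h
    · refine Or.inr (le_trans ?_ h)
      gcongr
  have hinter : ∀ w ∈ invC K p, ∃ m, w ∈ interior (exC K p m) := by
    intro w hw
    by_cases h0 : w = 0
    · obtain ⟨r, hr, h⟩ := invC_ball hK p
      refine ⟨0, mem_interior_iff_mem_nhds.2 ?_⟩
      rw [h0]
      refine mem_of_superset (ball_mem_nhds _ hr) (fun v hv => ?_)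
      by_cases hv0 : v = 0
      · exact Or.inl hv0
      · refine Or.inr ?_
        rw [le_infDist ⟨p, hp⟩]
        intro z hz
        have := h v hv hv0 z hz
        rw [dist_comm] at this
        simpa using this
    · have hpos : 0 < infDist (p + w⁻¹) K :=
        (hK.isClosed.notMem_iff_infDist_pos ⟨p, hp⟩).1 (hw.resolve_left h0)
      obtain ⟨m, hm⟩ := exists_nat_one_div_lt hpos
      refine ⟨m, mem_interior_iff_mem_nhds.2 ?_⟩
      have hc : ContinuousAt (fun w : ℂ => infDist (p + w⁻¹) K) w :=
        (continuous_infDist_pt K).continuousAt.comp (continuousAt_const.add (continuousAt_inv₀ h0))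
      filter_upwards [hc.eventually (Ioi_mem_nhds hm)] with v hv
      refine Or.inr ?_
      rw [← one_div]
      exact le_of_lt hv
  set U : ℕ → Set ℂ := fun m => connectedComponentIn (interior (exC K p m)) 0 with hU
  have hUo : ∀ m, IsOpen (U m) := fun m => isOpen_interior.connectedComponentIn
  have hUs : ∀ m, U m ⊆ exC K p m := fun m =>
    (connectedComponentIn_subset _ _).trans interior_subset
  have hUmono : Monotone U := fun m n hmn =>
    connectedComponentIn_mono _ (interior_mono (hmono hmn))
  have hUc : ∀ m, IsPreconnected (U m) := fun m => isPreconnected_connectedComponentIn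
  have hU0 : ∀ m, ∀ z ∈ U m, (0:ℂ) ∈ U m := by
    intro m z hz
    refine mem_connectedComponentIn ?_
    by_contra hn
    have : U m = ∅ := connectedComponentIn_eq_empty hn
    rw [this] at hz
    exact hz
  have hcov : ∀ z ∈ invC K p, ∃ m, z ∈ U m := by
    intro z hz
    obtain ⟨γ, hγ⟩ := hpath.joinedIn 0 (Or.inl rfl) z hz
    have hPc : IsCompact (range γ) := isCompact_range γ.continuous
    have hdir : Directed (· ⊆ ·) (fun m => interior (exC K p m)) :=
      directed_of_isDirected_le (fun m n hmn => interior_mono (hmono hmn))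
    obtain ⟨m, hm⟩ := hPc.elim_directed_cover (fun m => interior (exC K p m))
      (fun _ => isOpen_interior) (by
        rintro _ ⟨t, rfl⟩
        obtain ⟨m, hm⟩ := hinter _ (hγ t)
        exact mem_iUnion.2 ⟨m, hm⟩) hdir
    refine ⟨m, ?_⟩
    exact (isPreconnected_range γ.continuous).subset_connectedComponentIn ⟨0, γ.source⟩ hm ⟨1, γ.target⟩
  have hlog : ∀ m, HasLog (exC K p m) g := fun m =>
    hasLog_of_allLog (exC_compact hp m) (exC_allLog hKc hp m) (hg.mono (hsub m))
      (fun z hz => hg0 z (hsub m hz))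
  choose l hlc hle using hlog
  have hindep : ∀ m n, m ≤ n → ∀ z ∈ U m, l m z - l m 0 = l n z - l n 0 := by
    intro m n hmn z hz
    have := log_unique (hUc m) ((hlc m).mono (hUs m)) ((hlc n).mono ((hUmono hmn).trans (hUs n)))
      (fun w hw => by rw [hle m w (hUs m hw), hle n w (hUs n (hUmono hmn hw))]) hz (hU0 m z hz)
    linear_combination this
  have hindep' : ∀ m n z, z ∈ U m → z ∈ U n → l m z - l m 0 = l n z - l n 0 := by
    intro m n z hm hn
    rcases le_total m n with h | h
    · exact hindep m n h z hm
    · exact (hindep n m h z hn).symm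
  have hcov' : ∀ z, ∃ m, z ∈ invC K p → z ∈ U m := by
    intro z
    by_cases hz : z ∈ invC K p
    · obtain ⟨m, hm⟩ := hcov z hz
      exact ⟨m, fun _ => hm⟩
    · exact ⟨0, fun h => absurd h hz⟩
  choose M hM using hcov'
  have h0Ω : (0:ℂ) ∈ invC K p := Or.inl rfl
  refine ⟨fun z => l (M z) z - l (M z) 0 + log (g 0), ?_, ?_⟩
  · intro z hz
    refine ContinuousAt.continuousWithinAt ?_
    have hev : (fun z => l (M z) z - l (M z) 0 + log (g 0)) =ᶠ[𝓝 z]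
        fun y => l (M z) y - l (M z) 0 + log (g 0) := by
      filter_upwards [(hUo (M z)).mem_nhds (hM z hz), hO.mem_nhds hz] with y hy hyΩ
      rw [hindep' (M y) (M z) y (hM y hyΩ) hy]
    refine ContinuousAt.congr ?_ hev.symm
    have hnh : exC K p (M z) ∈ 𝓝 z := mem_of_superset ((hUo (M z)).mem_nhds (hM z hz)) (hUs _)
    have := (hlc (M z)).continuousAt hnh
    fun_prop
  · intro z hz
    have hzU := hM z hz
    rw [exp_add, exp_sub, hle _ z (hUs _ hzU), hle _ 0 (hUs _ (hU0 _ z hzU)), exp_log (hg0 0 h0Ω)]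
    have := hg0 0 h0Ω
    field_simp

theorem exterior_map {K : Set ℂ} (hK : IsCompact K) (hKc : IsPreconnected K) (hl : AllLog K) {p q : ℂ}
    (hp : p ∈ K) (hq : q ∈ K) (hpq : p ≠ q) : ∃ h φ : ℂ → ℂ, ContinuousOn h Kᶜ ∧
      (∀ z ∉ K, 0 < ‖h z‖ ∧ ‖h z‖ < 1) ∧ DifferentiableOn ℂ φ (ball 0 1 \ {0}) ∧
      (∀ w ∈ ball (0:ℂ) 1 \ {0}, φ w ∉ K) ∧ (∀ z ∉ K, φ (h z) = z) ∧
      (∀ w ∈ ball (0:ℂ) 1 \ {0}, h (φ w) = w) ∧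
      (∀ k ∈ K, ∀ r < 1, ∀ᶠ z in 𝓝 k, z ∉ K → r < ‖h z‖) ∧
      (∀ r > 0, ∃ R, ∀ z ∉ K, r ≤ ‖h z‖ → ‖z‖ ≤ R) := by
  have hO := isOpen_invC hK p
  have h0Ω : (0:ℂ) ∈ invC K p := Or.inl rfl
  obtain ⟨f, ψ, hf, hψ, hfm, hψm, hψf, hfψ, hf0⟩ := riemann hO
    (isPreconnected_invC hK (isConnected_compl_of_hasLog hK hl) hp) h0Ω (by
      intro h
      have : (q - p)⁻¹ ∈ invC K p := by rw [h]; trivial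
      rcases this with h | h
      · simp [sub_eq_zero] at h
        exact hpq h.symm
      · simp at h
        exact h hq) (logDom_invC hK hKc hl hp)
  have hzp : ∀ z ∉ K, z - p ≠ 0 := fun z hz => sub_ne_zero.2 (fun h => hz (h ▸ hp))
  have hin : ∀ z ∉ K, (z - p)⁻¹ ∈ invC K p := fun z hz => Or.inr (by simpa using hz)
  have hψ0 : ∀ w ∈ ball (0:ℂ) 1 \ {0}, ψ w ≠ 0 := by
    intro w hw h
    have := hfψ w hw.1
    rw [h, hf0] at this
    exact hw.2 this.symm
  have hψr : ∀ r < 1, IsCompact (ψ '' closedBall 0 r) := fun r hr =>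
    (isCompact_closedBall 0 r).image_of_continuousOn
      (hψ.continuousOn.mono (closedBall_subset_ball hr))
  refine ⟨fun z => f (z - p)⁻¹, fun w => p + (ψ w)⁻¹, ?_, ?_, ?_, ?_, ?_, ?_, ?_, ?_⟩
  · refine hf.continuousOn.comp (ContinuousOn.inv₀ (by fun_prop) hzp) hin
  · intro z hz
    refine ⟨?_, mem_ball_zero_iff.1 (hfm _ (hin z hz))⟩
    rw [norm_pos_iff]
    intro h
    have h1 := hψf _ (hin z hz)
    rw [show f (z - p)⁻¹ = 0 from h, ← hf0, hψf 0 h0Ω] at h1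
    exact inv_ne_zero (hzp z hz) h1.symm
  · exact ((hψ.mono sdiff_subset).inv hψ0).const_add p
  · intro w hw
    exact (hψm w hw.1).resolve_left (hψ0 w hw)
  · intro z hz
    simp only
    rw [hψf _ (hin z hz)]
    simp
  · intro w hw
    simp only [add_sub_cancel_left, inv_inv]
    exact hfψ w hw.1
  · intro k hk r hr
    have key : ∀ z ∉ K, (z - p)⁻¹ ∉ ψ '' closedBall 0 r → r < ‖f (z-p)⁻¹‖ := by
      intro z hz hn
      by_contra! hle
      exact hn ⟨f (z-p)⁻¹, mem_closedBall_zero_iff.2 hle, hψf _ (hin z hz)⟩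
    by_cases hkp : k = p
    · obtain ⟨R, hR0, hR⟩ := (hψr r hr).isBounded.subset_closedBall_lt 0 0
      rw [hkp]
      filter_upwards [ball_mem_nhds p (show 0 < (R+1)⁻¹ by positivity)] with z hz hzK
      refine key z hzK (fun hmem => ?_)
      have h1 := mem_closedBall_zero_iff.1 (hR hmem)
      rw [mem_ball, dist_eq_norm] at hz
      rw [norm_inv] at h1
      have h2 : R + 1 < ‖z - p‖⁻¹ := by
        rw [lt_inv_comm₀ (by positivity) (norm_pos_iff.2 (hzp z hzK))]
        exact hz
      linarith
    · have hkp' : k - p ≠ 0 := sub_ne_zero.2 hkp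
      have hnS : (k - p)⁻¹ ∉ ψ '' closedBall 0 r := by
        rintro ⟨w, hw, hwk⟩
        have := hψm w (closedBall_subset_ball hr hw)
        rw [hwk] at this
        rcases this with h | h
        · exact inv_ne_zero hkp' h
        · simp at h
          exact h hk
      have hc : ContinuousAt (fun z : ℂ => (z - p)⁻¹) k := (by fun_prop : ContinuousAt (fun z : ℂ => z - p) k).inv₀ hkp'
      filter_upwards [hc.eventually ((hψr r hr).isClosed.isOpen_compl.mem_nhds hnS)] with z hz hzK
      exact key z hzK hz
  · intro r hr
    have hc : ContinuousAt f 0 := hf.continuousOn.continuousAt (hO.mem_nhds h0Ω)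
    have := hc.eventually (ball_mem_nhds (f 0) hr)
    obtain ⟨δ, hδ, hδf⟩ := Metric.eventually_nhds_iff_ball.1 this
    refine ⟨‖p‖ + δ⁻¹, fun z hz hrz => ?_⟩
    have h1 : δ ≤ ‖(z-p)⁻¹‖ := by
      by_contra! hlt
      have := hδf _ (mem_ball_zero_iff.2 hlt)
      rw [hf0, dist_zero_right] at this
      linarith
    rw [norm_inv, le_inv_comm₀ hδ (norm_pos_iff.2 (hzp z hz))] at h1
    calc ‖z‖ = ‖p + (z - p)‖ := by congr 1; ring
      _ ≤ _ := (norm_add_le _ _).trans (by linarith)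
end PlaneAR

namespace PlaneAR
open Set Filter Topology Metric Complex MeasureTheory

lemma area_le {G : ℂ → ℂ} {Q : Set ℂ} (hQ : IsOpen Q) (hG : DifferentiableOn ℂ G Q)
    (hi : InjOn G Q) {R : ℝ} (hb : ∀ z ∈ Q, ‖G z‖ ≤ R) :
    ∫⁻ z in Q, ENNReal.ofReal (‖deriv G z‖ ^ 2) ≤ volume (closedBall (0:ℂ) R) := by
  have h1 := lintegral_abs_det_fderiv_eq_addHaar_image volume hQ.measurableSet (f := G)
    (f' := fun z => (ContinuousLinearMap.toSpanSingleton ℂ (deriv G z)).restrictScalars ℝ)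
    (fun z hz => ((hG.differentiableAt (hQ.mem_nhds hz)).hasDerivAt.hasFDerivAt.restrictScalars
      ℝ).hasFDerivWithinAt) hi
  have h2 : ∀ z, |((ContinuousLinearMap.toSpanSingleton ℂ (deriv G z)).restrictScalars ℝ).det|
      = ‖deriv G z‖ ^ 2 := by
    intro z
    simp [ContinuousLinearMap.det, LinearMap.det_restrictScalars,
      Algebra.norm_complex_eq, Complex.normSq_eq_norm_sq]
  simp only [h2] at h1
  rw [h1]
  apply measure_mono
  rintro _ ⟨z, hz, rfl⟩
  simpa using hb z hz

lemma exists_slice {f : ℂ → ENNReal} (hf : Measurable f) {a b c d : ℝ} {M N : ℝ} (hab : a < b)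
    (hN : M < N) (hM : 0 ≤ M)
    (h : ∫⁻ z in {z : ℂ | z.re ∈ Ioo a b ∧ z.im ∈ Ioo c d}, f z ≤ ENNReal.ofReal M) :
    ∃ u ∈ Ioo a b, ∫⁻ θ in Ioo c d, f (u + θ * I) ≤ ENNReal.ofReal (N / (b - a)) := by
  by_contra! hcon
  have h1 : ∫⁻ z in {z : ℂ | z.re ∈ Ioo a b ∧ z.im ∈ Ioo c d}, f z
      = ∫⁻ u in Ioo a b, ∫⁻ θ in Ioo c d, f (u + θ * I) := by
    rw [← (volume_preserving_equiv_real_prod.symm).setLIntegral_comp_preimage_emb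
      measurableEquivRealProd.symm.measurableEmbedding]
    have : measurableEquivRealProd.symm ⁻¹' {z : ℂ | z.re ∈ Ioo a b ∧ z.im ∈ Ioo c d}
        = Ioo a b ×ˢ Ioo c d := by
      ext p; simp [measurableEquivRealProd]
    rw [this, Measure.volume_eq_prod, ← Measure.prod_restrict, lintegral_prod]
    · congr! with u θ
      simp [measurableEquivRealProd, Complex.ext_iff]
    · exact (hf.comp measurableEquivRealProd.symm.measurable).aemeasurable
  have h2 : ENNReal.ofReal N ≤ ∫⁻ u in Ioo a b, ∫⁻ θ in Ioo c d, f (u + θ * I) := by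
    calc ENNReal.ofReal N = ∫⁻ u in Ioo a b, ENNReal.ofReal (N / (b - a)) := by
          rw [setLIntegral_const, Real.volume_Ioo, ← ENNReal.ofReal_mul]
          · rw [div_mul_cancel₀]; linarith
          · apply div_nonneg <;> linarith
      _ ≤ _ := setLIntegral_mono' measurableSet_Ioo fun u hu => (hcon u hu).le
  rw [← h1] at h2
  have := h2.trans h
  rw [ENNReal.ofReal_le_ofReal_iff hM] at this
  linarith

lemma holder_of_slice {γ γ' : ℝ → ℂ} {c d N : ℝ} (hN : 0 < N)
    (hd : ∀ θ ∈ Ioo c d, HasDerivAt γ (γ' θ) θ) (hc : ContinuousOn γ' (Ioo c d))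
    (h : ∫⁻ θ in Ioo c d, ENNReal.ofReal (‖γ' θ‖ ^ 2) ≤ ENNReal.ofReal N) {s t : ℝ}
    (hs : s ∈ Ioo c d) (ht : t ∈ Ioo c d) (hst : s ≤ t) : ‖γ t - γ s‖ ^ 2 ≤ N * (t - s) := by
  have hsub : Icc s t ⊆ Ioo c d := fun x hx => ⟨hs.1.trans_le hx.1, hx.2.trans_lt ht.2⟩
  have hc' : ContinuousOn γ' (Icc s t) := hc.mono hsub
  have hu : uIcc s t = Icc s t := uIcc_of_le hst
  have hii : IntervalIntegrable γ' volume s t := by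
    apply ContinuousOn.intervalIntegrable; rwa [hu]
  have hii1 : IntervalIntegrable (fun x => ‖γ' x‖) volume s t := hii.norm
  have hii2 : IntervalIntegrable (fun x => ‖γ' x‖ ^ 2) volume s t := by
    apply ContinuousOn.intervalIntegrable; rw [hu]; exact hc'.norm.pow 2
  have e1 : γ t - γ s = ∫ x in s..t, γ' x :=
    (intervalIntegral.integral_eq_sub_of_hasDerivAt (fun x hx => hd x (hsub (hu ▸ hx))) hii).symm
  have e2 : ‖γ t - γ s‖ ≤ ∫ x in s..t, ‖γ' x‖ := by
    rw [e1]; exact intervalIntegral.norm_integral_le_integral_norm hst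
  have e3 : ∫ x in s..t, ‖γ' x‖ ^ 2 ≤ N := by
    rw [intervalIntegral.integral_of_le hst,
      integral_eq_lintegral_of_nonneg_ae (ae_of_all _ fun x => by positivity)
        hii2.1.aestronglyMeasurable]
    apply ENNReal.toReal_le_of_le_ofReal hN.le
    refine le_trans (lintegral_mono_set ?_) h
    exact Ioc_subset_Icc_self.trans hsub
  rcases hst.eq_or_lt with rfl | hlt
  · simp
  set J := ‖γ t - γ s‖
  have e4 : ∀ l : ℝ, 2 * l * J ≤ N + l ^ 2 * (t - s) := by
    intro l
    rcases le_or_gt l 0 with hl | hl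
    · have : 0 ≤ J := norm_nonneg _
      nlinarith [mul_nonneg (sq_nonneg l) (sub_nonneg.2 hst), mul_nonneg (neg_nonneg.2 hl) this]
    have : ∫ x in s..t, 2 * l * ‖γ' x‖ ≤ ∫ x in s..t, (‖γ' x‖ ^ 2 + l ^ 2) := by
      apply intervalIntegral.integral_mono_on hst (hii1.const_mul _)
        (hii2.add intervalIntegrable_const)
      intro x _
      nlinarith [sq_nonneg (‖γ' x‖ - l)]
    rw [intervalIntegral.integral_const_mul, intervalIntegral.integral_add hii2
      intervalIntegrable_const, intervalIntegral.integral_const, smul_eq_mul] at this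
    nlinarith
  have hp : 0 < t - s := sub_pos.2 hlt
  have := e4 (J / (t - s))
  have e5 : 2 * (J / (t - s)) * J = 2 * (J ^ 2 / (t - s)) := by ring
  have e6 : (J / (t - s)) ^ 2 * (t - s) = J ^ 2 / (t - s) := by field_simp
  rw [e5, e6] at this
  have : J ^ 2 / (t - s) ≤ N := by linarith
  rwa [div_le_iff₀ hp] at this

lemma length_area {G : ℂ → ℂ} {R : ℝ} {a b c d : ℝ} (hab : a < b)
    (hG : DifferentiableOn ℂ G {z : ℂ | z.re ∈ Ioo a b ∧ z.im ∈ Ioo c d})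
    (hi : InjOn G {z : ℂ | z.re ∈ Ioo a b ∧ z.im ∈ Ioo c d})
    (hb : ∀ z ∈ {z : ℂ | z.re ∈ Ioo a b ∧ z.im ∈ Ioo c d}, ‖G z‖ ≤ R) :
    ∃ u ∈ Ioo a b, ∀ s ∈ Ioo c d, ∀ t ∈ Ioo c d, s ≤ t → ‖G (u + t * I) - G (u + s * I)‖ ^ 2 ≤
      (((volume (closedBall (0:ℂ) R)).toReal + 1) / (b - a)) * (t - s) := by
  have hQ : IsOpen {z : ℂ | z.re ∈ Ioo a b ∧ z.im ∈ Ioo c d} :=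
    (isOpen_Ioo.preimage continuous_re).inter (isOpen_Ioo.preimage continuous_im)
  have h1 := area_le hQ hG hi hb
  rw [← ENNReal.ofReal_toReal (measure_closedBall_lt_top (μ := volume)).ne] at h1
  obtain ⟨u, hu, hu2⟩ := exists_slice (f := fun z => ENNReal.ofReal (‖deriv G z‖ ^ 2))
    (((measurable_deriv G).norm.pow_const 2).ennreal_ofReal) hab (lt_add_one _)
    ENNReal.toReal_nonneg h1
  refine ⟨u, hu, fun s hs t ht hst => ?_⟩
  have hmem : ∀ θ ∈ Ioo c d, ((u : ℂ) + θ * I) ∈ {z : ℂ | z.re ∈ Ioo a b ∧ z.im ∈ Ioo c d} := by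
    intro θ hθ; simpa using ⟨hu, hθ⟩
  refine holder_of_slice (γ := fun θ : ℝ => G (u + θ * I))
    (γ' := fun θ : ℝ => deriv G (u + θ * I) * I) ?_ ?_ ?_ ?_ hs ht hst
  · exact div_pos (by positivity) (sub_pos.2 hab)
  · intro θ hθ
    have h1 := (hG.differentiableAt (hQ.mem_nhds (hmem θ hθ))).hasDerivAt
    have h2 : HasDerivAt (fun θ : ℝ => (u : ℂ) + θ * I) I θ := by
      have := ((hasDerivAt_id θ).ofReal_comp.mul_const I).const_add (u : ℂ)
      simpa using this
    exact HasDerivAt.comp_of_eq (h₂ := G) θ h1 h2 rfl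
  · have h1 : ContinuousOn (deriv G) {z : ℂ | z.re ∈ Ioo a b ∧ z.im ∈ Ioo c d} :=
      (hG.deriv hQ).continuousOn
    refine ContinuousOn.mul ?_ continuousOn_const
    exact h1.comp (by fun_prop) hmem
  · simpa using hu2

end PlaneAR

namespace PlaneAR
open Set Filter Topology Metric Complex

lemma cauchy_lim {γ : ℝ → ℂ} {S : Set ℝ} {p N : ℝ} (hne : (𝓝[S] p).NeBot)
    (h : ∀ s ∈ S, ∀ t ∈ S, s ≤ t → ‖γ t - γ s‖ ^ 2 ≤ N * (t - s)) :
    ∃ e, Tendsto γ (𝓝[S] p) (𝓝 e) := by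
  apply CompleteSpace.complete
  rw [Metric.cauchy_iff]
  refine ⟨inferInstance, fun ε hε => ?_⟩
  obtain ⟨δ, hδ, hδ2⟩ : ∃ δ > 0, |N| * (2 * δ) < ε ^ 2 := by
    refine ⟨ε ^ 2 / (2 * |N| + 1) / 2, by positivity, ?_⟩
    have h1 : 0 < 2 * |N| + 1 := by positivity
    have h2 : 0 < ε ^ 2 := by positivity
    have : |N| * (2 * (ε ^ 2 / (2 * |N| + 1) / 2)) = |N| * ε ^ 2 / (2 * |N| + 1) := by ring
    rw [this, div_lt_iff₀ h1]
    nlinarith [abs_nonneg N]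
  refine ⟨γ '' (S ∩ ball p δ), image_mem_map (inter_mem_nhdsWithin _ (ball_mem_nhds _ hδ)), ?_⟩
  have key : ∀ s ∈ S ∩ ball p δ, ∀ t ∈ S ∩ ball p δ, s ≤ t → dist (γ t) (γ s) < ε := by
    intro s hs t ht hst
    rw [dist_eq_norm]
    have h1 := h s hs.1 t ht.1 hst
    have h2 : t - s ≤ 2 * δ := by
      have a1 := hs.2; have a2 := ht.2
      rw [mem_ball, Real.dist_eq, abs_lt] at a1 a2
      linarith [a1.1, a2.2]
    have h3 : N * (t - s) ≤ |N| * (2 * δ) :=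
      (mul_le_mul_of_nonneg_right (le_abs_self N) (by linarith)).trans
        (mul_le_mul_of_nonneg_left h2 (abs_nonneg _))
    exact lt_of_pow_lt_pow_left₀ 2 hε.le (by linarith)
  rintro _ ⟨s, hs, rfl⟩ _ ⟨t, ht, rfl⟩
  rcases le_total s t with hst | hst
  · rw [dist_comm]; exact key s hs t ht hst
  · exact key t ht s hs hst

lemma arc_extend {γ : ℝ → ℂ} {c d N : ℝ} (hcd : c < d) (hN : 0 ≤ N)
    (h : ∀ s ∈ Ioo c d, ∀ t ∈ Ioo c d, s ≤ t → ‖γ t - γ s‖ ^ 2 ≤ N * (t - s)) :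
    ∃ e₁ e₂, Tendsto γ (𝓝[>] c) (𝓝 e₁) ∧ Tendsto γ (𝓝[<] d) (𝓝 e₂) ∧
      IsCompact (γ '' Ioo c d ∪ {e₁, e₂}) ∧ 
      ∀ z ∈ γ '' Ioo c d ∪ {e₁, e₂}, dist z e₁ ^ 2 ≤ N * (d - c) := by
  have n1 : 𝓝[Ioo c d] c = 𝓝[>] c := nhdsWithin_Ioo_eq_nhdsGT hcd
  have n2 : 𝓝[Ioo c d] d = 𝓝[<] d := nhdsWithin_Ioo_eq_nhdsLT hcd
  obtain ⟨e₁, h1⟩ := cauchy_lim (p := c) (by rw [n1]; infer_instance) h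
  obtain ⟨e₂, h2⟩ := cauchy_lim (p := d) (by rw [n2]; infer_instance) h
  rw [n1] at h1
  rw [n2] at h2
  have hc : ContinuousOn γ (Ioo c d) := by
    intro x hx
    obtain ⟨e, he⟩ := cauchy_lim (p := x)
      (by rw [isOpen_Ioo.nhdsWithin_eq hx]; infer_instance) h
    have : e = γ x := tendsto_nhds_unique' (l := pure x) inferInstance
      (he.mono_left (pure_le_nhdsWithin hx)) (tendsto_pure_nhds γ x)
    rw [ContinuousWithinAt, ← this]; exact he
  have hcc := continuousOn_Icc_extendFrom_Ioo hc h1 h2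
  have him : extendFrom (Ioo c d) γ '' Icc c d = γ '' Ioo c d ∪ {e₁, e₂} := by
    rw [← Ioo_union_both hcd.le, image_union, image_pair, eq_lim_at_left_extendFrom_Ioo hcd h1,
      eq_lim_at_right_extendFrom_Ioo hcd h2]
    congr 1
    apply image_congr
    intro x hx
    exact extendFrom_extends hc x hx
  have key : ∀ s ∈ Ioo c d, ∀ t ∈ Ioo c d, dist (γ t) (γ s) ^ 2 ≤ N * (d - c) := by
    intro s hs t ht
    rcases le_total s t with hst | hst
    · rw [dist_eq_norm]
      exact (h s hs t ht hst).trans (mul_le_mul_of_nonneg_left (by linarith [hs.1, ht.2]) hN)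
    · rw [dist_comm, dist_eq_norm]
      exact (h t ht s hs hst).trans (mul_le_mul_of_nonneg_left (by linarith [ht.1, hs.2]) hN)
  have ev1 : ∀ᶠ s in 𝓝[>] c, s ∈ Ioo c d := Ioo_mem_nhdsGT hcd
  have ev2 : ∀ᶠ s in 𝓝[<] d, s ∈ Ioo c d := Ioo_mem_nhdsLT hcd
  have key2 : ∀ t ∈ Ioo c d, dist (γ t) e₁ ^ 2 ≤ N * (d - c) := by
    intro t ht
    refine le_of_tendsto ((tendsto_const_nhds.dist h1).pow 2) ?_
    filter_upwards [ev1] with s hs using key s hs t ht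
  refine ⟨e₁, e₂, h1, h2, him ▸ isCompact_Icc.image_of_continuousOn hcc, ?_⟩
  rintro z (⟨t, ht, rfl⟩ | rfl | rfl)
  · exact key2 t ht
  · simp only [dist_self]
    have : 0 ≤ N * (d - c) := mul_nonneg hN (by linarith)
    simpa using this
  · refine le_of_tendsto ((h2.dist tendsto_const_nhds).pow 2) ?_
    filter_upwards [ev2] with s hs using key2 s hs

lemma half_trap {ξ : ℂ} (hξ : ‖ξ‖ = 1) {ρ : ℝ} (hρ1 : ρ ≤ 1) {T : Set ℂ}
    (hT : IsPreconnected T) (hT1 : ∀ ζ ∈ T, ‖ζ‖ < 1)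
    (ha : ∀ w : ℂ, 0 < w.re → ‖w‖ = ρ → ξ * exp (-w) ∉ T) {w₀ : ℂ} (h0 : 0 < w₀.re)
    (h0' : ‖w₀‖ < ρ) (hm : ξ * exp (-w₀) ∈ T) : ∀ ζ ∈ T, Real.exp (-1) ≤ ‖ζ‖ := by
  have hξ0 : ξ ≠ 0 := by rintro rfl; simp at hξ
  have hnorm : ∀ w, ‖ξ * exp (-w)‖ = Real.exp (-w.re) := by
    intro w; rw [norm_mul, hξ, one_mul, norm_exp, neg_re]
  set U : Set ℂ := (fun w => ξ * exp (-w)) '' {w | 0 < w.re ∧ ‖w‖ < ρ}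
  set V : Set ℂ := ((fun w => ξ * exp (-w)) '' {w | 0 ≤ w.re ∧ ‖w‖ ≤ ρ})ᶜ
  have hU : IsOpen U := by
    have e : U = (fun w => ξ * w) '' (exp '' ((fun w => -w) '' {w | 0 < w.re ∧ ‖w‖ < ρ})) := by
      simp only [image_image]; rfl
    rw [e]
    apply (Homeomorph.mulLeft₀ ξ hξ0).isOpenMap
    apply isOpenMap_exp
    apply (Homeomorph.neg ℂ).isOpenMap
    exact (isOpen_lt continuous_const continuous_re).inter (isOpen_lt continuous_norm continuous_const)
  have hV : IsOpen V := by
    apply isOpen_compl_iff.2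
    apply IsCompact.isClosed
    apply IsCompact.image _ (by fun_prop)
    have : {w : ℂ | 0 ≤ w.re ∧ ‖w‖ ≤ ρ} = {w : ℂ | 0 ≤ w.re} ∩ closedBall 0 ρ := by
      ext; simp
    rw [this]
    exact (isCompact_closedBall _ _).inter_left (isClosed_le continuous_const continuous_re)
  have hd : Disjoint U V := by
    rw [disjoint_compl_right_iff_subset]
    apply image_mono
    exact fun w hw => ⟨hw.1.le, hw.2.le⟩
  have hTU : T ⊆ U ∪ V := by
    intro ζ hζ
    by_cases hv : ζ ∈ V
    · exact Or.inr hv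
    left
    obtain ⟨w, ⟨hw1, hw2⟩, rfl⟩ := not_not.1 hv
    have h3 := hT1 _ hζ
    simp only at h3
    rw [hnorm, Real.exp_lt_one_iff] at h3
    have h4 : 0 < w.re := by linarith
    exact ⟨w, ⟨h4, lt_of_le_of_ne hw2 fun h => ha w h4 h hζ⟩, rfl⟩
  have := hT.subset_left_of_subset_union hU hV hd hTU ⟨_, hm, ⟨w₀, ⟨h0, h0'⟩, rfl⟩⟩
  intro ζ hζ
  obtain ⟨w, ⟨hw1, hw2⟩, rfl⟩ := this hζ
  simp only
  rw [hnorm, Real.exp_le_exp]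
  have := (abs_le.1 (abs_re_le_norm w)).2
  linarith

lemma hasLog_union_ball {K B : Set ℂ} (hK : IsCompact K) (hB : IsCompact B) (hl : AllLog K)
    (hc : IsPreconnected (K ∩ B)) {a e : ℂ} {ε : ℝ} (hBe : B ⊆ closedBall e ε) (ha : a ∉ K)
    (ha' : a ∉ closedBall e ε) : HasLog (K ∪ B) (fun z => z - a) := by
  obtain ⟨l, hl1, hl2⟩ := hl a ha
  obtain ⟨l', hl1', hl2'⟩ := (hasLog_sub_of_ball ha').mono hBe
  refine hasLog_union hK.isClosed hB.isClosed hl1 hl1' hl2 hl2' fun x hx y hy => ?_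
  exact log_unique hc (hl1.mono inter_subset_left) (hl1'.mono inter_subset_right)
    (fun z hz => (hl2 z hz.1).trans (hl2' z hz.2).symm) hx hy

end PlaneAR

namespace PlaneAR
open Set Filter Topology Metric Complex

lemma caratheodory {K : Set ℂ} (hK : IsCompact K) (hl : AllLog K) (hlc : LC0 K) {h φ : ℂ → ℂ}
    (hh : ContinuousOn h Kᶜ) (hh1 : ∀ z, z ∉ K → 0 < ‖h z‖ ∧ ‖h z‖ < 1)
    (hφ : DifferentiableOn ℂ φ (ball 0 1 \ {0})) (hφK : ∀ w ∈ ball (0:ℂ) 1 \ {0}, φ w ∉ K)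
    (hφh : ∀ z, z ∉ K → φ (h z) = z) (hhφ : ∀ w ∈ ball (0:ℂ) 1 \ {0}, h (φ w) = w)
    (hb : ∀ r > 0, ∃ R, ∀ z, z ∉ K → r ≤ ‖h z‖ → ‖z‖ ≤ R) {ε : ℝ} (hε : 0 < ε) :
    ∃ δ > 0, ∀ ξ : ℂ, ‖ξ‖ = 1 → ∃ e ∈ K, ∀ w : ℂ, 0 < w.re → ‖w‖ < δ →
      dist (φ (ξ * exp (-w))) e ≤ ε := by
  obtain ⟨R, hR⟩ := hb (Real.exp (-1)) (Real.exp_pos _)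
  set M : ℝ := (MeasureTheory.volume (closedBall (0:ℂ) R)).toReal with hM
  have hM0 : 0 ≤ M := ENNReal.toReal_nonneg
  obtain ⟨δ₀, hδ₀, hL⟩ := hlc ε hε
  obtain ⟨m, hm0, hmδ, hmε⟩ : ∃ m > 0, m ≤ δ₀ ∧ m ≤ ε :=
    ⟨min δ₀ ε, lt_min hδ₀ hε, min_le_left _ _, min_le_right _ _⟩
  have hπ := Real.pi_pos
  have hm2 : 0 < m ^ 2 := by positivity
  set A : ℝ := (M + 1) * Real.pi / m ^ 2 + 1 with hA
  have hA0 : 0 < A := by positivity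
  have hAm : (M + 1) / A * Real.pi < m ^ 2 := by
    rw [div_mul_eq_mul_div, div_lt_iff₀ hA0, hA, mul_add, mul_div_cancel₀ _ hm2.ne']
    linarith
  refine ⟨Real.exp (-A), Real.exp_pos _, fun ξ hξ => ?_⟩
  have hξ0 : ξ ≠ 0 := by rintro rfl; simp at hξ
  have hnorm : ∀ w, ‖ξ * exp (-w)‖ = Real.exp (-w.re) := by
    intro w; rw [norm_mul, hξ, one_mul, norm_exp, neg_re]
  have hD : ∀ w : ℂ, 0 < w.re → ξ * exp (-w) ∈ ball (0:ℂ) 1 \ {0} := by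
    intro w hw
    refine ⟨?_, mul_ne_zero hξ0 (exp_ne_zero _)⟩
    rw [mem_ball_zero_iff, hnorm, Real.exp_lt_one_iff]; linarith
  have hφb : ∀ w : ℂ, 0 < w.re → ‖w‖ ≤ 1 → ‖φ (ξ * exp (-w))‖ ≤ R := by
    intro w hw hw1
    apply hR _ (hφK _ (hD w hw))
    rw [hhφ _ (hD w hw), hnorm, Real.exp_le_exp]
    have := (abs_le.1 (abs_re_le_norm w)).2
    linarith
  have hφi : InjOn φ (ball (0:ℂ) 1 \ {0}) := fun x hx y hy e => by
    rw [← hhφ x hx, e, hhφ y hy]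
  set G : ℂ → ℂ := fun s => φ (ξ * exp (-exp s)) with hG
  set Q : Set ℂ := {z : ℂ | z.re ∈ Ioo (-A) 0 ∧ z.im ∈ Ioo (-(Real.pi / 2)) (Real.pi / 2)} with hQ
  have hre : ∀ s : ℂ, s.im ∈ Ioo (-(Real.pi / 2)) (Real.pi / 2) → 0 < (exp s).re := by
    intro s hs
    rw [exp_re]
    exact mul_pos (Real.exp_pos _) (Real.cos_pos_of_mem_Ioo hs)
  have hn1 : ∀ s ∈ Q, ‖exp s‖ < 1 := by
    intro s hs
    rw [norm_exp, Real.exp_lt_one_iff]; exact hs.1.2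
  have hGd : DifferentiableOn ℂ G Q := by
    refine hφ.comp (t := ball (0:ℂ) 1 \ {0}) (Differentiable.differentiableOn (by fun_prop)) ?_
    intro s hs
    exact hD _ (hre s hs.2)
  have hGi : InjOn G Q := by
    intro x hx y hy e
    have e1 := hφi (hD _ (hre x hx.2)) (hD _ (hre y hy.2)) e
    have e2 := mul_left_cancel₀ hξ0 e1
    have b1 := abs_le.1 (abs_im_le_norm (exp x))
    have b2 := abs_le.1 (abs_im_le_norm (exp y))
    have b3 := hn1 x hx
    have b4 := hn1 y hy
    have b5 := Real.pi_gt_three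
    have e3 := exp_inj_of_neg_pi_lt_of_le_pi (by rw [neg_im]; linarith) (by rw [neg_im]; linarith)
      (by rw [neg_im]; linarith) (by rw [neg_im]; linarith) e2
    exact exp_inj_of_neg_pi_lt_of_le_pi (by linarith [hx.2.1]) (by linarith [hx.2.2])
      (by linarith [hy.2.1]) (by linarith [hy.2.2]) (neg_injective e3)
  obtain ⟨u, hu, hu2⟩ := length_area (neg_lt_zero.2 hA0) hGd hGi
    (fun s hs => hφb _ (hre s hs.2) (hn1 s hs).le)
  rw [← hM, zero_sub, neg_neg] at hu2
  set N := (M + 1) / A with hN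
  have hN0 : 0 ≤ N := by positivity
  set γ : ℝ → ℂ := fun t => G (u + t * I) with hγ
  obtain ⟨e₁, e₂, ht1, ht2, hc, hdist⟩ := arc_extend (γ := γ) (by linarith) hN0 hu2
  rw [show Real.pi / 2 - -(Real.pi / 2) = Real.pi by ring] at hdist
  have him : ∀ t : ℝ, ((u : ℂ) + t * I).im = t := by intro t; simp
  have hζ : ∀ t ∈ Ioo (-(Real.pi / 2)) (Real.pi / 2),
      ξ * exp (-exp (u + t * I)) ∈ ball (0:ℂ) 1 \ {0} := fun t ht => hD _ (hre _ (by rwa [him]))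
  -- end points lie in `K`
  have hend : ∀ {e p} {F : Filter ℝ} [F.NeBot], Tendsto γ F (𝓝 e) → F ≤ 𝓝 p → Real.cos p = 0 →
      (∀ᶠ t in F, t ∈ Ioo (-(Real.pi / 2)) (Real.pi / 2)) → e ∈ K := by
    intro e p F _ hF hFp hp hev
    by_contra he
    have h1 : Tendsto (fun t => ‖h (γ t)‖) F (𝓝 ‖h e‖) :=
      (((hh.continuousAt (hK.isClosed.isOpen_compl.mem_nhds he)).tendsto.comp hF).norm)
    have h2 : Tendsto (fun t : ℝ => ‖ξ * exp (-exp (u + t * I))‖) F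
        (𝓝 ‖ξ * exp (-exp (u + p * I))‖) := by
      apply Tendsto.mono_left _ hFp
      apply Continuous.tendsto (f := fun t : ℝ => ‖ξ * exp (-exp (u + t * I))‖)
      fun_prop
    have h3 : ‖ξ * exp (-exp (u + p * I))‖ = 1 := by
      rw [hnorm, exp_re, him, hp]; simp
    rw [h3] at h2
    have h4 : Tendsto (fun t => ‖h (γ t)‖) F (𝓝 1) := by
      refine h2.congr' ?_
      filter_upwards [hev] with t ht
      rw [hγ, hG]
      simp only
      rw [hhφ _ (hζ t ht)]
    have := tendsto_nhds_unique h1 h4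
    linarith [(hh1 e he).2]
  have he1 : e₁ ∈ K := hend ht1 nhdsWithin_le_nhds (by simp) (Ioo_mem_nhdsGT (by linarith))
  have he2 : e₂ ∈ K := hend ht2 nhdsWithin_le_nhds (by simp) (Ioo_mem_nhdsLT (by linarith))
  have hd2 : ∀ z ∈ γ '' Ioo (-(Real.pi / 2)) (Real.pi / 2) ∪ {e₁, e₂}, dist z e₁ < m := fun z hz =>
    lt_of_pow_lt_pow_left₀ 2 hm0.le ((hdist z hz).trans_lt hAm)
  obtain ⟨L, hLK, hLc, hLp, hL1, hL2, hLb⟩ := hL e₁ he1 e₂ he2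
    (by rw [dist_comm]; exact (hd2 e₂ (by simp)).trans_le hmδ)
  refine ⟨e₁, he1, fun w hw hwδ => ?_⟩
  by_contra hcon
  set B := (γ '' Ioo (-(Real.pi / 2)) (Real.pi / 2) ∪ {e₁, e₂}) ∪ L with hB
  have hBc : IsCompact B := hc.union hLc
  have hBb : B ⊆ closedBall e₁ ε := by
    rintro z (hz | hz)
    · exact ((hd2 z hz).trans_le hmε).le
    · exact hLb hz
  have hKB : K ∩ B = L := by
    apply Subset.antisymm
    · rintro z ⟨hzK, (⟨t, ht, rfl⟩ | rfl | rfl) | hz⟩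
      · exact absurd hzK (hφK _ (hζ t ht))
      · exact hL1
      · exact hL2
      · exact hz
    · exact fun z hz => ⟨hLK hz, Or.inr hz⟩
  set a := φ (ξ * exp (-w)) with ha
  have haK : a ∉ K := hφK _ (hD w hw)
  have haB : a ∉ closedBall e₁ ε := hcon
  have hlog := hasLog_union_ball hK hBc hl (hKB ▸ hLp) hBb haK haB
  have haKB : a ∉ K ∪ B := by
    rintro (h | h)
    · exact haK h
    · exact haB (hBb h)
  refine unbounded_of_hasLog (hK.union hBc) haKB hlog ?_
  set W := connectedComponentIn (K ∪ B)ᶜ a with hW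
  have hWs : W ⊆ (K ∪ B)ᶜ := connectedComponentIn_subset _ _
  have hWK : ∀ z ∈ W, z ∉ K := fun z hz hzK => hWs hz (Or.inl hzK)
  have hT : IsPreconnected (h '' W) :=
    isPreconnected_connectedComponentIn.image _ (hh.mono hWK)
  have key := half_trap hξ (ρ := Real.exp u) (by rw [Real.exp_le_one_iff]; exact hu.2.le) hT
    (by rintro _ ⟨z, hz, rfl⟩; exact (hh1 z (hWK z hz)).2) ?_ hw
    (hwδ.trans (Real.exp_lt_exp.2 hu.1))
    ⟨a, mem_connectedComponentIn haKB, hhφ _ (hD w hw)⟩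
  · refine (isBounded_closedBall (x := (0:ℂ)) (r := R)).subset fun z hz => ?_
    rw [mem_closedBall_zero_iff]
    exact hR z (hWK z hz) (key _ ⟨z, hz, rfl⟩)
  · rintro w' hw' hn ⟨z, hz, hzw⟩
    apply hWs hz
    right; left; left
    refine ⟨arg w', abs_lt.1 (abs_arg_lt_pi_div_two_iff.2 (Or.inl hw')), ?_⟩
    rw [hγ, hG]
    simp only
    rw [exp_add, ← ofReal_exp, ← hn, norm_mul_exp_arg_mul_I, ← hzw, hφh z (hWK z hz)]

end PlaneAR

namespace PlaneAR
open Set Filter Topology Metric Complex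

theorem exists_retraction {K : Set ℂ} (hK : IsCompact K) (hKc : IsPreconnected K)
    (hne : K.Nonempty) (hl : AllLog K) (hlc : LC0 K) :
    ∃ r : ℂ → ℂ, Continuous r ∧ (∀ z, r z ∈ K) ∧ ∀ z ∈ K, r z = z := by
  classical
  obtain ⟨p, hp⟩ := hne
  by_cases hq : ∃ q ∈ K, p ≠ q
  swap
  · push Not at hq
    exact ⟨fun _ => p, continuous_const, fun _ => hp, hq⟩
  obtain ⟨q, hq, hpq⟩ := hq
  obtain ⟨h, φ, hh, hh1, hφ, hφK, hφh, hhφ, hbd, hb⟩ := exterior_map hK hKc hl hp hq hpq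
  have car := fun {ε : ℝ} (hε : 0 < ε) =>
    caratheodory hK hl hlc hh hh1 hφ hφK hφh hhφ hb hε
  have hlim : ∀ ξ : ℂ, ∃ e, ‖ξ‖ = 1 →
      Tendsto (fun t : ℝ => φ (ξ * exp (-(t : ℂ)))) (𝓝[>] 0) (𝓝 e) := by
    intro ξ
    by_cases hξ : ‖ξ‖ = 1
    swap
    · exact ⟨0, fun h => absurd h hξ⟩
    suffices ∃ e, Tendsto (fun t : ℝ => φ (ξ * exp (-(t : ℂ)))) (𝓝[>] 0) (𝓝 e) by
      obtain ⟨e, he⟩ := this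
      exact ⟨e, fun _ => he⟩
    apply CompleteSpace.complete
    rw [Metric.cauchy_iff]
    refine ⟨inferInstance, fun ε hε => ?_⟩
    obtain ⟨δ, hδ, H⟩ := car (ε := ε / 3) (by positivity)
    obtain ⟨e, -, he⟩ := H ξ hξ
    refine ⟨_, image_mem_map (Ioo_mem_nhdsGT hδ), ?_⟩
    have : ∀ t ∈ Ioo 0 δ, dist (φ (ξ * exp (-(t : ℂ)))) e ≤ ε / 3 := by
      intro t ht
      exact he t (by simpa using ht.1) (by simpa [abs_of_pos ht.1] using ht.2)
    rintro _ ⟨s, hs, rfl⟩ _ ⟨t, ht, rfl⟩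
    calc _ ≤ _ := dist_triangle_right _ _ e
      _ ≤ ε / 3 + ε / 3 := add_le_add (this s hs) (this t ht)
      _ < ε := by linarith
  choose Ψ hΨ using hlim
  have key : ∀ ε > 0, ∃ δ > 0, ∀ ξ : ℂ, ‖ξ‖ = 1 → ∃ e ∈ K,
      (∀ w : ℂ, 0 < w.re → ‖w‖ < δ → dist (φ (ξ * exp (-w))) e ≤ ε) ∧
      (∀ w : ℂ, w.re = 0 → ‖w‖ < δ → dist (Ψ (ξ * exp (-w))) e ≤ ε) := by
    intro ε hε
    obtain ⟨δ, hδ, H⟩ := car hε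
    refine ⟨δ, hδ, fun ξ hξ => ?_⟩
    obtain ⟨e, heK, he⟩ := H ξ hξ
    refine ⟨e, heK, he, fun w hw hwδ => ?_⟩
    have h1 : ‖ξ * exp (-w)‖ = 1 := by
      rw [norm_mul, hξ, norm_exp, neg_re, hw]; simp
    refine le_of_tendsto ((hΨ _ h1).dist tendsto_const_nhds) ?_
    have h2 : ∀ᶠ t : ℝ in 𝓝[>] 0, ‖w + t‖ < δ := by
      apply nhdsWithin_le_nhds
      have : Continuous fun t : ℝ => ‖w + t‖ := by fun_prop
      exact this.tendsto 0 (Iio_mem_nhds (by simpa using hwδ))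
    filter_upwards [h2, self_mem_nhdsWithin] with t ht ht0
    rw [mul_assoc, ← exp_add, ← neg_add]
    exact he (w + t) (by simpa [hw] using ht0) ht
  have hΨK : ∀ ξ : ℂ, ‖ξ‖ = 1 → Ψ ξ ∈ K := by
    intro ξ hξ
    rw [← hK.isClosed.closure_eq, Metric.mem_closure_iff]
    intro ε hε
    obtain ⟨δ, hδ, H⟩ := key (ε / 2) (by positivity)
    obtain ⟨e, heK, -, he⟩ := H ξ hξ
    refine ⟨e, heK, ?_⟩
    have := he 0 (by simp) (by simpa using hδ)
    simp only [neg_zero, exp_zero, mul_one] at this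
    linarith
  have hΨc : ContinuousOn Ψ (sphere 0 1) := by
    intro ξ hξ
    rw [mem_sphere_zero_iff_norm] at hξ
    have hξ0 : ξ ≠ 0 := by rintro rfl; simp at hξ
    rw [Metric.continuousWithinAt_iff']
    intro ε hε
    obtain ⟨δ, hδ, H⟩ := key (ε / 3) (by positivity)
    obtain ⟨e, heK, -, he⟩ := H ξ hξ
    have hc : ContinuousAt (fun z => -log (z / ξ)) ξ := by
      apply ContinuousAt.neg
      apply ContinuousAt.clog (by fun_prop (disch := exact hξ0))
      simp [hξ0]
    have hev : ∀ᶠ z in 𝓝[sphere 0 1] ξ, ‖-log (z / ξ)‖ < δ := by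
      apply nhdsWithin_le_nhds
      exact hc.norm.tendsto (Iio_mem_nhds (by simpa [hξ0] using hδ))
    filter_upwards [hev, self_mem_nhdsWithin] with z hz hz1
    rw [mem_sphere_zero_iff_norm] at hz1
    have hz0 : z ≠ 0 := by rintro rfl; simp at hz1
    have e1 : ξ * exp (-(-log (z / ξ))) = z := by
      rw [neg_neg, exp_log (div_ne_zero hz0 hξ0)]; field_simp
    have h1 := he (-log (z / ξ)) (by simp [log_re, hz1, hξ]) hz
    rw [e1] at h1
    have h2 := he 0 (by simp) (by simpa using hδ)
    simp only [neg_zero, exp_zero, mul_one] at h2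
    calc _ ≤ _ := dist_triangle_right _ _ e
      _ ≤ ε / 3 + ε / 3 := add_le_add h1 h2
      _ < ε := by linarith
  have hnn : ∀ z, z ∉ K → h z / ‖h z‖ ∈ sphere (0:ℂ) 1 := by
    intro z hz
    have := (hh1 z hz).1.ne'
    simp [this]
  set r : ℂ → ℂ := fun z => if z ∈ K then z else Ψ (h z / ‖h z‖) with hr
  refine ⟨r, ?_, ?_, fun z hz => if_pos hz⟩
  · rw [continuous_iff_continuousAt]
    intro k
    by_cases hk : k ∈ K
    · rw [Metric.continuousAt_iff']
      intro ε hε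
      obtain ⟨δ, hδ, H⟩ := key (ε / 4) (by positivity)
      have hev := hbd k hk (Real.exp (-δ)) (by rw [Real.exp_lt_one_iff]; linarith)
      filter_upwards [hev, ball_mem_nhds k (show 0 < ε / 4 by positivity)] with z hz hzk
      have hrk : r k = k := if_pos hk
      rw [hrk]
      by_cases hzK : z ∈ K
      · rw [hr]; simp only [if_pos hzK]
        rw [mem_ball] at hzk; linarith
      have hrz : r z = Ψ (h z / ‖h z‖) := if_neg hzK
      rw [hrz]
      have hz1 := hnn z hzK
      rw [mem_sphere_zero_iff_norm] at hz1
      obtain ⟨e, -, h1, h2⟩ := H _ hz1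
      obtain ⟨n0, n1⟩ := hh1 z hzK
      have h3 := h2 0 (by simp) (by simpa using hδ)
      simp only [neg_zero, exp_zero, mul_one] at h3
      have hlog : 0 < -Real.log ‖h z‖ := by have := Real.log_neg n0 n1; linarith
      have hlog2 : -Real.log ‖h z‖ < δ := by
        have := (Real.lt_log_iff_exp_lt n0).2 (hz hzK)
        linarith
      have h4 := h1 ((-Real.log ‖h z‖ : ℝ) : ℂ) (by simpa using hlog)
        (by rw [Complex.norm_real, Real.norm_of_nonneg hlog.le]; exact hlog2)
      have e1 : h z / ‖h z‖ * exp (-((-Real.log ‖h z‖ : ℝ) : ℂ)) = h z := by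
        rw [← ofReal_neg, neg_neg, ← ofReal_exp, Real.exp_log n0]
        have : (‖h z‖ : ℂ) ≠ 0 := by exact_mod_cast n0.ne'
        field_simp
      rw [e1, hφh z hzK] at h4
      rw [mem_ball] at hzk
      calc dist (Ψ (h z / ‖h z‖)) k ≤ dist (Ψ (h z / ‖h z‖)) e + dist e z + dist z k :=
            dist_triangle4 _ _ _ _
        _ ≤ ε / 4 + ε / 4 + ε / 4 := by
            rw [dist_comm e z]; gcongr
        _ < ε := by linarith
    · have ho : Kᶜ ∈ 𝓝 k := hK.isClosed.isOpen_compl.mem_nhds hk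
      have h1 : ContinuousOn (fun z => Ψ (h z / ‖h z‖)) Kᶜ := by
        refine hΨc.comp ?_ hnn
        refine hh.div (continuous_ofReal.comp_continuousOn hh.norm) ?_
        intro z hz
        exact_mod_cast (hh1 z hz).1.ne'
      refine (h1.continuousAt ho).congr ?_
      filter_upwards [ho] with z hz
      exact (if_neg hz).symm
  · intro z
    by_cases hz : z ∈ K
    · rw [hr]; simp only [if_pos hz]; exact hz
    · rw [hr]; simp only [if_neg hz]
      exact hΨK _ (mem_sphere_zero_iff_norm.1 (hnn z hz))

end PlaneAR

/-- If `X` and `Y` are compact absolute retracts in the plane, then every connected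
component of `X ∩ Y` is a compact absolute retract. -/
theorem component_of_inter_of_ARs_is_AR
    (X Y : Set (EuclideanSpace ℝ (Fin 2)))
    (hX : IsCompact X) (hY : IsCompact Y)
    (hXAR : IsAbsoluteRetract X) (hYAR : IsAbsoluteRetract Y) :
    ∀ x ∈ X ∩ Y,
      IsCompact (connectedComponentIn (X ∩ Y) x) ∧
        IsAbsoluteRetract ↥(connectedComponentIn (X ∩ Y) x) := by
  intro x hx
  let e : EuclideanSpace ℝ (Fin 2) ≃ₜ ℂ :=
    Complex.orthonormalBasisOneI.repr.toHomeomorph.symm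
  have hret : ∀ S : Set (EuclideanSpace ℝ (Fin 2)), IsCompact S → IsAbsoluteRetract S →
      ∃ r : ℂ → ℂ, Continuous r ∧ (∀ z, r z ∈ e '' S) ∧ ∀ z ∈ e '' S, r z = z := by
    intro S hS hAR
    obtain ⟨r, hr, hid⟩ := hAR.2 (EuclideanSpace ℝ (Fin 2)) inferInstance inferInstance
      Subtype.val hS.isClosed.isClosedEmbedding_subtypeVal
    refine ⟨fun z => e (r (e.symm z)), by fun_prop, fun z => ⟨_, (r (e.symm z)).2, rfl⟩, ?_⟩
    rintro _ ⟨y, hy, rfl⟩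
    simp only [Homeomorph.symm_apply_apply]
    rw [hid ⟨y, hy⟩]
  have hX' : IsCompact (e '' X) := hX.image e.continuous
  have hY' : IsCompact (e '' Y) := hY.image e.continuous
  obtain ⟨rX, cX, mX, iX⟩ := hret X hX hXAR
  obtain ⟨rY, cY, mY, iY⟩ := hret Y hY hYAR
  have hcomp : e '' connectedComponentIn (X ∩ Y) x
      = connectedComponentIn (e '' X ∩ e '' Y) (e x) := by
    rw [e.image_connectedComponentIn hx, Set.image_inter e.injective]
  have hK' : IsCompact (connectedComponentIn (e '' X ∩ e '' Y) (e x)) :=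
    (hX'.inter hY').of_isClosed_subset
      (PlaneAR.isClosed_component (hX'.inter hY').isClosed _) (connectedComponentIn_subset _ _)
  have lX := PlaneAR.allLog_of_retract hX' cX mX iX
  have lY := PlaneAR.allLog_of_retract hY' cY mY iY
  have hx' : e x ∈ connectedComponentIn (e '' X ∩ e '' Y) (e x) :=
    hcomp ▸ ⟨x, mem_connectedComponentIn hx, rfl⟩
  obtain ⟨r, hr, hm, hid⟩ := PlaneAR.exists_retraction hK' isPreconnected_connectedComponentIn
    ⟨_, hx'⟩ (PlaneAR.allLog_component hX' hY' lX lY _ hK')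
    (PlaneAR.lc0_component hX' hY' lX lY (PlaneAR.lc0_of_retract hX' cX mX iX)
      (PlaneAR.lc0_of_retract hY' cY mY iY) _ hK')
  rw [← hcomp] at hK' hm hid
  refine ⟨?_, ⟨⟨x, mem_connectedComponentIn hx⟩⟩, ?_⟩
  · have := hK'.image e.symm.continuous
    rwa [Set.image_image, funext (fun a => e.symm_apply_apply a), Set.image_id'] at this
  intro Z _ hZ f hf
  letI := TopologicalSpace.metrizableSpaceMetric Z
  obtain ⟨G, hG⟩ := ContinuousMap.exists_extension hf
    (⟨fun k => e k.1, by fun_prop⟩ : C(↥(connectedComponentIn (X ∩ Y) x), ℂ))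
  have hmem : ∀ z, e.symm (r (G z)) ∈ connectedComponentIn (X ∩ Y) x := by
    intro z
    obtain ⟨y, hy, hye⟩ := hm (G z)
    rw [← hye, e.symm_apply_apply]; exact hy
  refine ⟨fun z => ⟨e.symm (r (G z)), hmem z⟩, ?_, ?_⟩
  · exact Continuous.subtype_mk (e.symm.continuous.comp (hr.comp G.continuous)) _
  · intro k
    apply Subtype.ext
    have h1 : G (f k) = e k.1 := DFunLike.congr_fun hG k
    simp only
    rw [h1, hid _ ⟨k.1, k.2, rfl⟩, e.symm_apply_apply]
end

section
/- Let X and Y be locally connected continua in the plane ℝ² (nonempty compact connected locally connected subsets of ℝ²) such that ℝ² \ X and ℝ² \ Y are both connected. Then every connected component of X ∩ Y is locally connected. -/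
open Set Topology Filter Metric

/-- `g` is a continuous logarithm of `z - a` on `K`. -/
def LogOn (K : Set ℂ) (a : ℂ) (g : ℂ → ℂ) : Prop :=
  ContinuousOn g K ∧ ∀ z ∈ K, Complex.exp (g z) = z - a

lemma LogOn.mono {K L : Set ℂ} {a : ℂ} {g : ℂ → ℂ} (h : LogOn L a g) (hKL : K ⊆ L) :
    LogOn K a g := ⟨h.1.mono hKL, fun z hz => h.2 z (hKL hz)⟩

lemma exp_const_aux {α : Type*} [TopologicalSpace α] {K : Set α} (hK : IsPreconnected K)
    {f : α → ℂ} (hf : ContinuousOn f K) {c : ℂ}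
    (h : ∀ z ∈ K, Complex.exp (f z) = c) {x y : α} (hx : x ∈ K) (hy : y ∈ K) : f x = f y := by
  have hpi : (0:ℝ) < 2 * Real.pi := by positivity
  -- integer valued
  have h1 : ∀ z ∈ K, ∃ n : ℤ, f z = f x + n * (2 * Real.pi * Complex.I) := fun z hz =>
    Complex.exp_eq_exp_iff_exists_int.1 ((h z hz).trans (h x hx).symm)
  have h2 := hK.constant_of_mapsTo (T := range ((↑) : ℤ → ℝ))
    (f := fun z => ((f z - f x).im) / (2 * Real.pi)) ?_ ?_ ?_ hx hy
  · obtain ⟨n, hn⟩ := h1 y hy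
    simp only [hn] at h2
    simp at h2
    have h3 : n = 0 := by exact_mod_cast h2.symm
    rw [hn, h3]; simp
  · exact (Int.isClosedEmbedding_coe_real.isInducing.isDiscrete_range)
  · exact (Complex.continuous_im.comp_continuousOn (hf.sub continuousOn_const)).div_const _
  · intro z hz
    obtain ⟨n, hn⟩ := h1 z hz
    refine ⟨n, ?_⟩
    simp [hn]

lemma LogOn.incr_unique {K : Set ℂ} (hK : IsPreconnected K) {a : ℂ} {g₁ g₂ : ℂ → ℂ}
    (h₁ : LogOn K a g₁) (h₂ : LogOn K a g₂) {x y : ℂ} (hx : x ∈ K) (hy : y ∈ K) :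
    g₁ y - g₁ x = g₂ y - g₂ x := by
  by_cases ha : a ∈ K
  · exact absurd (h₁.2 a ha) (by simp)
  have := exp_const_aux hK (f := fun z => g₁ z - g₂ z) (c := 1) (h₁.1.sub h₂.1) (fun z hz => by
    have hz0 : z - a ≠ 0 := sub_ne_zero.2 (fun h => ha (h ▸ hz))
    rw [Complex.exp_sub, h₁.2 z hz, h₂.2 z hz, div_self hz0]) hx hy
  linear_combination -this

lemma slit_aux {u v : ℂ} (h : ‖u - v‖ < ‖v‖) : u / v ∈ Complex.slitPlane := by
  have hv : v ≠ 0 := by rintro rfl; simp at h; exact absurd h (not_lt.2 (norm_nonneg _))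
  have : u / v = 1 + (u - v) / v := by field_simp; ring
  rw [this]
  apply Complex.mem_slitPlane_of_norm_lt_one
  rw [norm_div, div_lt_one (norm_pos_iff.2 hv)]
  exact h

lemma logOn_near {K : Set ℂ} {a c : ℂ} (h : ∀ z ∈ K, ‖z - c‖ < ‖c - a‖) :
    LogOn K a (fun z => Complex.log ((z - a) / (c - a)) + Complex.log (c - a)) := by
  have hs : ∀ z ∈ K, (z - a) / (c - a) ∈ Complex.slitPlane := fun z hz =>
    slit_aux (by simpa using h z hz)
  refine ⟨?_, fun z hz => ?_⟩
  · refine ContinuousOn.add (ContinuousOn.clog ?_ hs) continuousOn_const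
    fun_prop
  · have hc : c - a ≠ 0 := by
      intro h0
      have := h z hz
      rw [h0, norm_zero] at this
      exact absurd this (not_lt.2 (norm_nonneg _))
    rw [Complex.exp_add, Complex.exp_log (Complex.slitPlane_ne_zero (hs z hz)),
      Complex.exp_log hc, div_mul_cancel₀ _ hc]

lemma LogOn.perturb {K : Set ℂ} {a a' : ℂ} {g : ℂ → ℂ} (hg : LogOn K a g)
    (h : ∀ z ∈ K, ‖a - a'‖ < ‖z - a‖) :
    LogOn K a' (fun z => g z + Complex.log ((z - a') / (z - a))) := by
  have hs : ∀ z ∈ K, (z - a') / (z - a) ∈ Complex.slitPlane := fun z hz =>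
    slit_aux (by simpa using h z hz)
  have h0 : ∀ z ∈ K, z - a ≠ 0 := fun z hz h0 => by
    have := h z hz
    rw [h0, norm_zero] at this
    exact absurd this (not_lt.2 (norm_nonneg _))
  refine ⟨?_, fun z hz => ?_⟩
  · refine ContinuousOn.add hg.1 (ContinuousOn.clog ?_ hs)
    exact ContinuousOn.div (by fun_prop) (by fun_prop) h0
  · rw [Complex.exp_add, Complex.exp_log (Complex.slitPlane_ne_zero (hs z hz)), hg.2 z hz,
      mul_div_cancel₀ _ (h0 z hz)]

lemma exists_dist_aux {K : Set ℂ} (hK : IsCompact K) {a : ℂ} (ha : a ∉ K) :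
    ∃ δ > 0, ∀ z ∈ K, δ ≤ ‖z - a‖ := by
  obtain ⟨δ, hδ, h⟩ := Metric.isOpen_iff.1 hK.isClosed.isOpen_compl a ha
  refine ⟨δ, hδ, fun z hz => ?_⟩
  by_contra hlt
  exact h (show z ∈ ball a δ by rw [mem_ball, dist_eq_norm]; exact not_le.1 hlt) hz

lemma eventually_log_iff {K : Set ℂ} (hK : IsCompact K) {a : ℂ} (ha : a ∉ K) :
    ∀ᶠ a' in 𝓝 a, ((∃ g, LogOn K a' g) ↔ ∃ g, LogOn K a g) := by
  obtain ⟨δ, hδ, h⟩ := exists_dist_aux hK ha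
  filter_upwards [ball_mem_nhds a (half_pos hδ)] with a' ha'
  rw [mem_ball, dist_eq_norm] at ha'
  constructor
  · rintro ⟨g, hg⟩
    refine ⟨_, hg.perturb (a' := a) fun z hz => ?_⟩
    have h1 := h z hz
    have h2 : ‖z - a‖ ≤ ‖z - a'‖ + ‖a' - a‖ := by
      simpa using norm_add_le (z - a') (a' - a)
    linarith
  · rintro ⟨g, hg⟩
    refine ⟨_, hg.perturb (a' := a') fun z hz => ?_⟩
    have h1 := h z hz
    rw [norm_sub_rev]
    linarith

lemma exists_log_of_compl {K : Set ℂ} (hK : IsCompact K) (hc : IsPreconnected Kᶜ)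
    {a : ℂ} (ha : a ∉ K) : ∃ g, LogOn K a g := by
  have o1 : IsOpen {a | a ∉ K ∧ ∃ g, LogOn K a g} := by
    rw [isOpen_iff_mem_nhds]
    rintro b ⟨hb, hg⟩
    filter_upwards [eventually_log_iff hK hb, hK.isClosed.isOpen_compl.mem_nhds hb] with c h1 h2
    exact ⟨h2, h1.2 hg⟩
  have o2 : IsOpen {a | a ∉ K ∧ ¬ ∃ g, LogOn K a g} := by
    rw [isOpen_iff_mem_nhds]
    rintro b ⟨hb, hg⟩
    filter_upwards [eventually_log_iff hK hb, hK.isClosed.isOpen_compl.mem_nhds hb] with c h1 h2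
    exact ⟨h2, fun h => hg (h1.1 h)⟩
  obtain ⟨R, hR⟩ := hK.isBounded.exists_norm_le
  have hfar : ((|R| + 1 : ℝ) : ℂ) ∈ {a | a ∉ K ∧ ∃ g, LogOn K a g} := by
    have hn : ‖((|R| + 1 : ℝ) : ℂ)‖ = |R| + 1 := by
      rw [Complex.norm_real, Real.norm_of_nonneg (by positivity)]
    refine ⟨fun hm => ?_, _, logOn_near (c := 0) fun z hz => ?_⟩
    · have := hR _ hm
      rw [hn] at this
      linarith [le_abs_self R]
    · have := hR z hz
      rw [zero_sub, norm_neg, hn, sub_zero]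
      linarith [le_abs_self R]
  have := hc.subset_left_of_subset_union o1 o2
    (Set.disjoint_left.2 fun x h1 h2 => h2.2 h1.2)
    (fun x hx => by
      by_cases h : ∃ g, LogOn K x g
      · exact Or.inl ⟨hx, h⟩
      · exact Or.inr ⟨hx, h⟩) ⟨_, hfar.1, hfar⟩
  exact (this ha).2

open Classical in
/-- increment of log from `q` to `y` -/
noncomputable def logIncr (K : Set ℂ) (q y a : ℂ) : ℂ :=
  if h : ∃ g, LogOn K a g then h.choose y - h.choose q else 0

lemma logIncr_eq {K K₀ : Set ℂ} (h0 : K₀ ⊆ K) (hc : IsPreconnected K₀) {q y a : ℂ}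
    (hq : q ∈ K₀) (hy : y ∈ K₀) (h : ∃ g, LogOn K a g) {g : ℂ → ℂ} (hg : LogOn K₀ a g) :
    logIncr K q y a = g y - g q := by
  rw [logIncr, dif_pos h]
  exact LogOn.incr_unique hc (h.choose_spec.mono h0) hg hq hy

lemma exp_logIncr {K : Set ℂ} {q y a : ℂ} (hq : q ∈ K) (hy : y ∈ K) (h : ∃ g, LogOn K a g) :
    Complex.exp (logIncr K q y a) = (y - a) / (q - a) := by
  rw [logIncr, dif_pos h, Complex.exp_sub, h.choose_spec.2 y hy, h.choose_spec.2 q hq]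

lemma continuousAt_logIncr {K K₀ : Set ℂ} (hK : IsCompact K) (h0 : K₀ ⊆ K)
    (hc : IsPreconnected K₀) {q y a : ℂ}
    (hq : q ∈ K₀) (hy : y ∈ K₀) (ha : a ∉ K) (h : ∃ g, LogOn K a g) :
    ContinuousAt (logIncr K q y) a := by
  obtain ⟨g, hg⟩ := h
  obtain ⟨δ, hδ, hd⟩ := exists_dist_aux hK ha
  have hne : ∀ z ∈ K, z - a ≠ 0 := fun z hz h => ha (by rwa [← sub_eq_zero.1 h])
  have ev : (fun a' => (g y + Complex.log ((y - a') / (y - a)))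
      - (g q + Complex.log ((q - a') / (q - a)))) =ᶠ[𝓝 a] logIncr K q y := by
    filter_upwards [ball_mem_nhds a hδ] with a' ha'
    rw [mem_ball, dist_eq_norm, norm_sub_rev] at ha'
    have := hg.perturb (a' := a') fun z hz => ha'.trans_le (hd z hz)
    rw [logIncr_eq h0 hc hq hy ⟨_, this⟩ (this.mono h0)]
  refine ContinuousAt.congr ?_ ev
  have hcl : ∀ z ∈ K, ContinuousAt (fun a' => Complex.log ((z - a') / (z - a))) a := by
    intro z hz
    refine ContinuousAt.clog (by fun_prop) ?_
    rw [div_self (hne z hz)]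
    exact Complex.one_mem_slitPlane
  exact (continuousAt_const.add (hcl y (h0 hy))).sub (continuousAt_const.add (hcl q (h0 hq)))

lemma circle_no_log {p q y : ℂ} {r : ℝ} (hr : 0 < r) (hq : ‖q - p‖ < r) (hy : r < ‖y - p‖)
    {H : ℂ → ℂ} (hH : ContinuousOn H (sphere p r))
    (hexp : ∀ a ∈ sphere p r, Complex.exp (H a) = (y - a) / (q - a)) : False := by
  have hn : ∀ a ∈ sphere p r, ‖a - p‖ = r := fun a ha => by simpa [dist_eq_norm] using ha
  have hs1 : ∀ a ∈ sphere p r, (q - a) / (p - a) ∈ Complex.slitPlane := fun a ha =>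
    slit_aux (by rw [norm_sub_rev p a, hn a ha]; simpa using hq)
  have hs2 : ∀ a ∈ sphere p r, (y - a) / (y - p) ∈ Complex.slitPlane := fun a ha =>
    slit_aux (by rw [sub_sub_sub_cancel_left, norm_sub_rev, hn a ha]; exact hy)
  have hpa : ∀ a ∈ sphere p r, p - a ≠ 0 := fun a ha h => by
    have := hn a ha
    rw [norm_sub_rev, h, norm_zero] at this
    exact hr.ne this
  have hyp : y - p ≠ 0 := fun h => by rw [h, norm_zero] at hy; linarith
  let G : ℂ → ℂ := fun a => Complex.log ((y - a) / (y - p)) - H a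
    - Complex.log ((q - a) / (p - a))
  have hG : ContinuousOn G (sphere p r) := by
    refine ((ContinuousOn.clog (by fun_prop) hs2).sub hH).sub (ContinuousOn.clog ?_ hs1)
    exact ContinuousOn.div (by fun_prop) (by fun_prop) hpa
  have hGe : ∀ a ∈ sphere p r, Complex.exp (G a) = (p - a) / (y - p) := by
    intro a ha
    have e1 := Complex.slitPlane_ne_zero (hs1 a ha)
    have e2 := Complex.slitPlane_ne_zero (hs2 a ha)
    have e3 := hpa a ha
    have e4 : q - a ≠ 0 := fun h => e1 (by rw [h, zero_div])
    have e5 : y - a ≠ 0 := fun h => e2 (by rw [h, zero_div])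
    simp only [G]
    rw [Complex.exp_sub, Complex.exp_sub, Complex.exp_log e1, Complex.exp_log e2, hexp a ha]
    field_simp
  have hm : ∀ θ : ℝ, circleMap p r θ ∈ sphere p r := fun θ => circleMap_mem_sphere p hr.le θ
  have key := exp_const_aux (K := (univ : Set ℝ)) isPreconnected_univ
    (f := fun θ : ℝ => G (circleMap p r θ) - θ * Complex.I) (c := -r / (y - p)) ?_ ?_
    (mem_univ 0) (mem_univ (2 * Real.pi))
  · have h2 : circleMap p r (2 * Real.pi) = circleMap p r 0 := by simp [circleMap]
    simp only [h2] at key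
    have h3 : (2 * Real.pi * Complex.I : ℂ) = 0 := by
      simp at key
      linear_combination key
    exact Complex.two_pi_I_ne_zero h3
  · refine ContinuousOn.sub (hG.comp (by fun_prop) fun θ _ => hm θ) (by fun_prop)
  · intro θ _
    rw [Complex.exp_sub, hGe _ (hm θ)]
    have := Complex.exp_ne_zero (θ * Complex.I)
    simp only [circleMap]
    field_simp
    ring

lemma exists_log_piece {Z P Q : Set ℂ} {p : ℂ} {R : ℝ}
    (hlog : ∀ a ∉ Z, ∃ g, LogOn Z a g)
    (hP : IsCompact P) (hQ : IsCompact Q) (hPQ : Disjoint P Q)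
    (hZ : P ∪ Q = Z ∩ closedBall p R) {a : ℂ} (ha : a ∉ P) : ∃ g, LogOn P a g := by
  let W : Set ℂ := {a | a ∉ P ∧ ¬ ∃ g, LogOn P a g}
  have hPZ : P ⊆ Z ∩ closedBall p R := hZ ▸ subset_union_left
  have hW : W ⊆ Q := by
    rintro b ⟨hb, hg⟩
    have hbZ : b ∈ Z := by
      by_contra h
      obtain ⟨g, hg'⟩ := hlog b h
      exact hg ⟨g, hg'.mono fun z hz => (hPZ hz).1⟩
    have hbD : b ∈ closedBall p R := by
      by_contra h
      refine hg ⟨_, logOn_near (c := p) fun z hz => ?_⟩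
      have h1 := (hPZ hz).2
      rw [mem_closedBall, dist_eq_norm] at h h1
      rw [norm_sub_rev p b]
      linarith
    have : b ∈ P ∪ Q := hZ ▸ ⟨hbZ, hbD⟩
    exact this.resolve_left hb
  have oW : IsOpen W := by
    rw [isOpen_iff_mem_nhds]
    rintro b ⟨hb, hg⟩
    filter_upwards [eventually_log_iff hP hb, hP.isClosed.isOpen_compl.mem_nhds hb] with c h1 h2
    exact ⟨h2, fun h => hg (h1.1 h)⟩
  have cW : IsClosed W := by
    rw [← isOpen_compl_iff, isOpen_iff_mem_nhds]
    intro b hb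
    by_cases hbP : b ∈ P
    · have : b ∈ Qᶜ := fun h => Set.disjoint_left.1 hPQ hbP h
      filter_upwards [hQ.isClosed.isOpen_compl.mem_nhds this] with c hc h
      exact hc (hW h)
    · have hg : ∃ g, LogOn P b g := by
        by_contra h
        exact hb ⟨hbP, h⟩
      filter_upwards [eventually_log_iff hP hbP] with c hc h
      exact h.2 (hc.2 hg)
  by_contra hcon
  rcases isClopen_iff.1 ⟨cW, oW⟩ with h | h
  · have : a ∈ W := ⟨ha, hcon⟩
    rw [h] at this
    exact this
  · have : Q = univ := univ_subset_iff.1 (h ▸ hW)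
    exact noncompact_univ ℂ (this ▸ hQ)

/-- The heart of the argument. -/
lemma core_contradiction {X Y P Q K L AX AY BX BY : Set ℂ}
    (hX : IsCompact X) (hY : IsCompact Y) (hXc : IsPreconnected Xᶜ) (hYc : IsPreconnected Yᶜ)
    {p y : ℂ} {r R ρ : ℝ} (hr : 0 < r) (hrR : r ≤ R)
    (hyρ : r + ρ ≤ ‖y - p‖)
    (hP : IsCompact P) (hQ : IsCompact Q) (hPQ : Disjoint P Q)
    (hZ : P ∪ Q = (X ∩ Y) ∩ closedBall p R)
    (hK : IsPreconnected K) (hL : IsPreconnected L) (hKP : K ⊆ P) (hLQ : L ⊆ Q)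
    {q₁ q₂ y₁ y₂ : ℂ} (hq₁ : q₁ ∈ K) (hy₁ : y₁ ∈ K) (hq₂ : q₂ ∈ L) (hy₂ : y₂ ∈ L)
    (hAX : IsPreconnected AX) (hAY : IsPreconnected AY)
    (hBX : IsPreconnected BX) (hBY : IsPreconnected BY)
    (hAXX : AX ⊆ X) (hAYY : AY ⊆ Y) (hBXX : BX ⊆ X) (hBYY : BY ⊆ Y)
    (hAXb : AX ⊆ ball p r) (hAYb : AY ⊆ ball p r)
    (hBXb : BX ⊆ ball y ρ) (hBYb : BY ⊆ ball y ρ)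
    (hq₁X : q₁ ∈ AX) (hq₂X : q₂ ∈ AX) (hq₁Y : q₁ ∈ AY) (hq₂Y : q₂ ∈ AY)
    (hy₁X : y₁ ∈ BX) (hy₂X : y₂ ∈ BX) (hy₁Y : y₁ ∈ BY) (hy₂Y : y₂ ∈ BY) : False := by
  classical
  have hlogZ : ∀ a ∉ X ∩ Y, ∃ g, LogOn (X ∩ Y) a g := by
    intro a ha
    by_cases h : a ∈ X
    · obtain ⟨g, hg⟩ := exists_log_of_compl hY hYc (fun h' => ha ⟨h, h'⟩)
      exact ⟨g, hg.mono inter_subset_right⟩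
    · obtain ⟨g, hg⟩ := exists_log_of_compl hX hXc h
      exact ⟨g, hg.mono inter_subset_left⟩
  have hlP : ∀ a ∉ P, ∃ g, LogOn P a g := fun a ha =>
    exists_log_piece hlogZ hP hQ hPQ hZ ha
  have hlQ : ∀ a ∉ Q, ∃ g, LogOn Q a g := fun a ha =>
    exists_log_piece hlogZ hQ hP hPQ.symm (union_comm P Q ▸ hZ) ha
  have hPZ : P ⊆ (X ∩ Y) ∩ closedBall p R := hZ ▸ subset_union_left
  have hQZ : Q ⊆ (X ∩ Y) ∩ closedBall p R := hZ ▸ subset_union_right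
  have hn : ∀ a ∈ sphere p r, ‖a - p‖ = r := fun a ha => by simpa [dist_eq_norm] using ha
  -- geometry of the two small balls
  have near_p : ∀ a ∈ sphere p r, ∀ z ∈ ball p r, ‖z - p‖ < ‖p - a‖ := by
    intro a ha z hz
    rw [norm_sub_rev p a, hn a ha]
    rwa [mem_ball, dist_eq_norm] at hz
  have near_y : ∀ a ∈ sphere p r, ∀ z ∈ ball y ρ, ‖z - y‖ < ‖y - a‖ := by
    intro a ha z hz
    rw [mem_ball, dist_eq_norm] at hz
    have h1 : ‖y - p‖ ≤ ‖y - a‖ + ‖a - p‖ := by simpa using norm_add_le (y - a) (a - p)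
    rw [hn a ha] at h1
    linarith
  let corr : ℂ → ℂ := fun a =>
    (Complex.log ((y₁ - a) / (y - a)) - Complex.log ((y₂ - a) / (y - a)))
    - (Complex.log ((q₁ - a) / (p - a)) - Complex.log ((q₂ - a) / (p - a)))
  have hslit : ∀ {c z a : ℂ}, ‖z - c‖ < ‖c - a‖ → (z - a) / (c - a) ∈ Complex.slitPlane := by
    intro c z a h
    exact slit_aux (by simpa using h)
  have hne : ∀ {c z a : ℂ}, ‖z - c‖ < ‖c - a‖ → c - a ≠ 0 := by
    intro c z a h h0
    rw [h0, norm_zero] at h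
    exact absurd h (not_lt.2 (norm_nonneg _))
  have hcl : ∀ {c z a : ℂ}, ‖z - c‖ < ‖c - a‖ →
      ContinuousAt (fun a => Complex.log ((z - a) / (c - a))) a := by
    intro c z a h
    refine ContinuousAt.clog ?_ (hslit h)
    exact ContinuousAt.div (by fun_prop) (by fun_prop) (hne h)
  have hcorr : ∀ a ∈ sphere p r, ContinuousAt corr a := by
    intro a ha
    exact ((hcl (near_y a ha _ (hBXb hy₁X))).sub (hcl (near_y a ha _ (hBXb hy₂X)))).sub
      ((hcl (near_p a ha _ (hAXb hq₁X))).sub (hcl (near_p a ha _ (hAXb hq₂X))))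
  -- agreement off `X ∩ Y`
  have agree_aux : ∀ (T A B : Set ℂ), A ⊆ T → B ⊆ T → X ∩ Y ⊆ T →
      IsPreconnected A → IsPreconnected B → A ⊆ ball p r → B ⊆ ball y ρ →
      q₁ ∈ A → q₂ ∈ A → y₁ ∈ B → y₂ ∈ B → ∀ a ∈ sphere p r, (∃ g, LogOn T a g) →
      logIncr P q₁ y₁ a = logIncr Q q₂ y₂ a + corr a := by
    rintro T A B hAT hBT hZT hA hB hAb hBb h1 h2 h3 h4 a ha ⟨g, hg⟩
    have hPT : P ⊆ T := fun z hz => hZT (hPZ hz).1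
    have hQT : Q ⊆ T := fun z hz => hZT (hQZ hz).1
    rw [logIncr_eq hKP hK hq₁ hy₁ ⟨g, hg.mono hPT⟩ (hg.mono (hKP.trans hPT)),
      logIncr_eq hLQ hL hq₂ hy₂ ⟨g, hg.mono hQT⟩ (hg.mono (hLQ.trans hQT))]
    have eA := LogOn.incr_unique hA (hg.mono hAT)
      (logOn_near (c := p) fun z hz => near_p a ha z (hAb hz)) h2 h1
    have eB := LogOn.incr_unique hB (hg.mono hBT)
      (logOn_near (c := y) fun z hz => near_y a ha z (hBb hz)) h4 h3
    simp only [corr]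
    linear_combination eB - eA
  have agree : ∀ a ∈ sphere p r, a ∉ P → a ∉ Q →
      logIncr P q₁ y₁ a = logIncr Q q₂ y₂ a + corr a := by
    intro a ha hPa hQa
    have haD : a ∈ closedBall p R := by
      rw [mem_closedBall, dist_eq_norm, hn a ha]; exact hrR
    have haZ : a ∉ X ∩ Y := fun h => by
      have : a ∈ P ∪ Q := hZ ▸ ⟨h, haD⟩
      exact this.elim hPa hQa
    by_cases h : a ∈ X
    · exact agree_aux Y AY BY hAYY hBYY inter_subset_right hAY hBY hAYb hBYb hq₁Y hq₂Y hy₁Y hy₂Y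
        a ha (exists_log_of_compl hY hYc (fun h' => haZ ⟨h, h'⟩))
    · exact agree_aux X AX BX hAXX hBXX inter_subset_left hAX hBX hAXb hBXb hq₁X hq₂X hy₁X hy₂X
        a ha (exists_log_of_compl hX hXc h)
  let H : ℂ → ℂ := fun a => if a ∈ P then logIncr Q q₂ y₂ a + corr a else logIncr P q₁ y₁ a
  have hH : ContinuousOn H (sphere p r) := by
    intro a ha
    by_cases hPa : a ∈ P
    · have hQa : a ∉ Q := fun h => Set.disjoint_left.1 hPQ hPa h
      have hc : ContinuousAt (fun a => logIncr Q q₂ y₂ a + corr a) a :=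
        (continuousAt_logIncr hQ hLQ hL hq₂ hy₂ hQa (hlQ a hQa)).add (hcorr a ha)
      refine hc.continuousWithinAt.congr_of_eventuallyEq ?_ ?_
      · filter_upwards [self_mem_nhdsWithin,
          mem_nhdsWithin_of_mem_nhds (hQ.isClosed.isOpen_compl.mem_nhds hQa)] with b hb hQb
        simp only [H]
        split_ifs with hb'
        · rfl
        · exact agree b hb hb' hQb
      · simp only [H, if_pos hPa]
    · have hc := continuousAt_logIncr hP hKP hK hq₁ hy₁ hPa (hlP a hPa)
      refine hc.continuousWithinAt.congr_of_eventuallyEq ?_ ?_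
      · filter_upwards [
          mem_nhdsWithin_of_mem_nhds (hP.isClosed.isOpen_compl.mem_nhds hPa)] with b hb
        simp only [H]
        rw [if_neg hb]
      · simp only [H, if_neg hPa]
  have hq₁n : ‖q₁ - p‖ < r := by
    have := hAXb hq₁X
    rwa [mem_ball, dist_eq_norm] at this
  have hy₁n : r < ‖y₁ - p‖ := by
    have := hBXb hy₁X
    rw [mem_ball, dist_eq_norm] at this
    have h1 : ‖y - p‖ ≤ ‖y - y₁‖ + ‖y₁ - p‖ := by simpa using norm_add_le (y - y₁) (y₁ - p)
    rw [norm_sub_rev y y₁] at h1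
    linarith
  refine circle_no_log hr hq₁n hy₁n hH fun a ha => ?_
  by_cases hPa : a ∈ P
  · have hQa : a ∉ Q := fun h => Set.disjoint_left.1 hPQ hPa h
    simp only [H, if_pos hPa]
    have n1 := near_y a ha _ (hBXb hy₁X)
    have n2 := near_y a ha _ (hBXb hy₂X)
    have n3 := near_p a ha _ (hAXb hq₁X)
    have n4 := near_p a ha _ (hAXb hq₂X)
    have s1 := Complex.slitPlane_ne_zero (hslit n1)
    have s2 := Complex.slitPlane_ne_zero (hslit n2)
    have s3 := Complex.slitPlane_ne_zero (hslit n3)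
    have s4 := Complex.slitPlane_ne_zero (hslit n4)
    have t1 : y₁ - a ≠ 0 := fun h => s1 (by rw [h, zero_div])
    have t2 : y₂ - a ≠ 0 := fun h => s2 (by rw [h, zero_div])
    have t3 : q₁ - a ≠ 0 := fun h => s3 (by rw [h, zero_div])
    have t4 : q₂ - a ≠ 0 := fun h => s4 (by rw [h, zero_div])
    have u1 := hne n1
    have u2 := hne n3
    simp only [corr]
    rw [Complex.exp_add, exp_logIncr (hLQ hq₂) (hLQ hy₂) (hlQ a hQa), Complex.exp_sub,
      Complex.exp_sub, Complex.exp_sub, Complex.exp_log s1, Complex.exp_log s2,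
      Complex.exp_log s3, Complex.exp_log s4]
    field_simp
  · simp only [H, if_neg hPa]
    exact exp_logIncr (hKP hq₁) (hKP hy₁) (hlP a hPa)

lemma subset_of_split {C F G : Set ℂ} (hC : IsPreconnected C) (hF : IsClosed F) (hG : IsClosed G)
    (hd : Disjoint F G) (hs : C ⊆ F ∪ G) (hne : (C ∩ F).Nonempty) : C ⊆ F := by
  intro z hz
  by_contra hzF
  obtain ⟨w, -, h1, h2⟩ := isPreconnected_closed_iff.1 hC F G hF hG hs hne
    ⟨z, hz, (hs hz).resolve_left hzF⟩
  exact Set.disjoint_left.1 hd h1 h2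

/-- Separation of a component in a compact set. -/
lemma exists_clopen_piece {T U : Set ℂ} (hT : IsCompact T) (hU : IsOpen U) {q : ℂ} (hq : q ∈ T)
    (h : connectedComponentIn T q ⊆ U) :
    ∃ F ⊆ T, IsCompact F ∧ IsCompact (T \ F) ∧ F ⊆ U ∧ q ∈ F := by
  have : CompactSpace T := isCompact_iff_compactSpace.1 hT
  rw [connectedComponentIn_eq_image hq, connectedComponent_eq_iInter_isClopen] at h
  have : Nonempty {s : Set T // IsClopen s ∧ (⟨q, hq⟩ : T) ∈ s} := ⟨⟨univ, isClopen_univ, trivial⟩⟩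
  obtain ⟨⟨s, hs, hqs⟩, hsU⟩ := exists_subset_nhds_of_compactSpace
    (V := fun s : {s : Set T // IsClopen s ∧ (⟨q, hq⟩ : T) ∈ s} => (s : Set T))
    (U := ((↑) : T → ℂ) ⁻¹' U)
    (by
      rintro ⟨s, hs, hqs⟩ ⟨t, ht, hqt⟩
      exact ⟨⟨s ∩ t, hs.inter ht, hqs, hqt⟩, inter_subset_left, inter_subset_right⟩)
    (fun s => s.2.1.1)
    (fun x hx => (hU.preimage continuous_subtype_val).mem_nhds (h ⟨x, hx, rfl⟩))
  refine ⟨(↑) '' s, by simp, hs.1.isCompact.image continuous_subtype_val, ?_, ?_, ⟨_, hqs, rfl⟩⟩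
  · have : T \ ((↑) '' s) = ((↑) : T → ℂ) '' sᶜ := by
      ext z
      constructor
      · rintro ⟨hz, hn⟩
        exact ⟨⟨z, hz⟩, fun h => hn ⟨_, h, rfl⟩, rfl⟩
      · rintro ⟨w, hw, rfl⟩
        refine ⟨w.2, ?_⟩
        rintro ⟨w', hw', he⟩
        exact hw (Subtype.ext he ▸ hw')
    rw [this]
    exact hs.compl.1.isCompact.image continuous_subtype_val
  · rintro _ ⟨w, hw, rfl⟩
    exact hsU hw

/-- Small connected sets in a locally connected subset. -/
lemma exists_small_connected {X : Set ℂ} (hX : LocallyConnectedSpace X) {p : ℂ} (hp : p ∈ X)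
    {r : ℝ} (hr : 0 < r) :
    ∃ A ⊆ X, IsPreconnected A ∧ A ⊆ ball p r ∧ ∃ δ > 0, X ∩ ball p δ ⊆ A := by
  rw [locallyConnectedSpace_iff_connected_subsets] at hX
  obtain ⟨V, hV, hVc, hVU⟩ := hX ⟨p, hp⟩ (((↑) : X → ℂ) ⁻¹' ball p r)
    (continuous_subtype_val.continuousAt.preimage_mem_nhds (ball_mem_nhds p hr))
  rw [nhds_subtype_eq_comap, mem_comap] at hV
  obtain ⟨t, ht, htV⟩ := hV
  obtain ⟨δ, hδ, hδt⟩ := Metric.mem_nhds_iff.1 ht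
  refine ⟨(↑) '' V, by simp, hVc.image _ continuous_subtype_val.continuousOn, ?_, δ, hδ, ?_⟩
  · rintro _ ⟨w, hw, rfl⟩
    exact hVU hw
  · rintro z ⟨hz, hzb⟩
    exact ⟨⟨z, hz⟩, htV (hδt hzb), rfl⟩

/-- Boundary bumping. -/
lemma exists_far_point {Z : Set ℂ} (hZ : IsCompact Z) {x p q : ℂ} {r R : ℝ} (hrR : r ≤ R)
    (hp : p ∈ connectedComponentIn Z x) (hq : q ∈ connectedComponentIn Z x)
    (hqD : q ∈ closedBall p R)
    (hpq : p ∉ connectedComponentIn (Z ∩ closedBall p R) q) :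
    ∃ y ∈ connectedComponentIn (Z ∩ closedBall p R) q, r ≤ ‖y - p‖ := by
  by_contra hcon
  push Not at hcon
  have hqT : q ∈ Z ∩ closedBall p R := ⟨connectedComponentIn_subset _ _ hq, hqD⟩
  obtain ⟨F, hFT, hF, hF', hFU, hqF⟩ := exists_clopen_piece
    (hZ.inter_right isClosed_closedBall) (isOpen_ball (x := p) (ε := r)) hqT
    (fun z hz => by rw [mem_ball, dist_eq_norm]; exact hcon z hz)
  -- the component of `Z` lies in `F`
  have hZF : IsClosed (Z \ ball p r ∪ (Z ∩ closedBall p R) \ F) :=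
    (hZ.isClosed.sdiff isOpen_ball).union hF'.isClosed
  have hsub : connectedComponentIn Z x ⊆ F := by
    refine subset_of_split (isPreconnected_connectedComponentIn (x := x) (F := Z))
      hF.isClosed hZF ?_ ?_ ⟨q, hq, hqF⟩
    · rw [Set.disjoint_left]
      rintro z hz (⟨_, h⟩ | ⟨_, h⟩)
      · exact h (hFU hz)
      · exact h hz
    · intro z hz
      have hzZ := connectedComponentIn_subset _ _ hz
      by_cases hzF : z ∈ F
      · exact Or.inl hzF
      · right
        by_cases hb : z ∈ ball p r
        · exact Or.inr ⟨⟨hzZ, closedBall_subset_closedBall hrR (ball_subset_closedBall hb)⟩, hzF⟩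
        · exact Or.inl ⟨hzZ, hb⟩
  exact hpq ((isPreconnected_connectedComponentIn (x := x) (F := Z)).subset_connectedComponentIn hq
    (hsub.trans hFT) hp)

theorem component_locallyConnected_complex (X Y : Set ℂ)
    (hX : IsCompact X) (hY : IsCompact Y)
    (hXlc : LocallyConnectedSpace X) (hYlc : LocallyConnectedSpace Y)
    (hXc : IsPreconnected Xᶜ) (hYc : IsPreconnected Yᶜ) (x : ℂ) :
    LocallyConnectedSpace ↥(connectedComponentIn (X ∩ Y) x) := by
  have hZ : IsCompact (X ∩ Y) := hX.inter hY
  rw [locallyConnectedSpace_iff_connected_subsets]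
  rintro ⟨p, hp⟩ U hU
  rw [nhds_subtype_eq_comap, mem_comap] at hU
  obtain ⟨t, ht, htU⟩ := hU
  obtain ⟨R₀, hR₀, hRt⟩ := Metric.mem_nhds_iff.1 ht
  obtain ⟨R, hR, hRR⟩ : ∃ R > 0, R < R₀ := ⟨R₀ / 2, by linarith, by linarith⟩
  have hpZ : p ∈ X ∩ Y := connectedComponentIn_subset _ _ hp
  have hpT : p ∈ (X ∩ Y) ∩ closedBall p R := ⟨hpZ, mem_closedBall_self hR.le⟩
  have hT : IsCompact ((X ∩ Y) ∩ closedBall p R) := hZ.inter_right isClosed_closedBall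
  set V₀ := connectedComponentIn ((X ∩ Y) ∩ closedBall p R) p with hV₀
  have hV₀T : V₀ ⊆ (X ∩ Y) ∩ closedBall p R := connectedComponentIn_subset _ _
  have hV₀C : V₀ ⊆ connectedComponentIn (X ∩ Y) x := by
    rw [connectedComponentIn_eq hp]
    exact connectedComponentIn_mono p inter_subset_left
  refine ⟨((↑) : ↥(connectedComponentIn (X ∩ Y) x) → ℂ) ⁻¹' V₀, ?_, ?_, ?_⟩
  rotate_left
  · rw [← IsInducing.subtypeVal.isPreconnected_image, Subtype.image_preimage_coe,
      inter_eq_right.2 hV₀C]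
    exact isPreconnected_connectedComponentIn
  · intro z hz
    refine htU (hRt ?_)
    exact closedBall_subset_ball hRR (hV₀T hz).2
  by_contra hnot
  have hseq : ∀ n : ℕ, ∃ q ∈ connectedComponentIn (X ∩ Y) x,
      q ∈ ball p (min R (1 / ((n : ℝ) + 1))) ∧ q ∉ V₀ := by
    intro n
    by_contra hcon
    push Not at hcon
    apply hnot
    rw [nhds_subtype_eq_comap, mem_comap]
    refine ⟨ball p (min R (1 / ((n : ℝ) + 1))), ball_mem_nhds _ (by positivity), ?_⟩
    intro z hz
    exact hcon z z.2 hz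
  choose q hqC hqb hqV using hseq
  have hqD : ∀ n, q n ∈ closedBall p R := fun n =>
    ball_subset_closedBall (ball_subset_ball (min_le_left _ _) (hqb n))
  have hqT : ∀ n, q n ∈ (X ∩ Y) ∩ closedBall p R := fun n =>
    ⟨connectedComponentIn_subset _ _ (hqC n), hqD n⟩
  have hpK : ∀ n, p ∉ connectedComponentIn ((X ∩ Y) ∩ closedBall p R) (q n) := by
    intro n h
    apply hqV n
    rw [hV₀, ← connectedComponentIn_eq h]
    exact mem_connectedComponentIn (hqT n)
  have hfar : ∀ n, ∃ y ∈ connectedComponentIn ((X ∩ Y) ∩ closedBall p R) (q n), R ≤ ‖y - p‖ :=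
    fun n => exists_far_point hZ le_rfl hp (hqC n) (hqD n) (hpK n)
  choose y hyK hyR using hfar
  have hyT : ∀ n, y n ∈ (X ∩ Y) ∩ closedBall p R := fun n =>
    connectedComponentIn_subset _ _ (hyK n)
  obtain ⟨y₀, hy₀T, φ, hφ, hylim⟩ := hT.tendsto_subseq hyT
  have hqlim : Tendsto q atTop (𝓝 p) := by
    rw [tendsto_iff_dist_tendsto_zero]
    refine squeeze_zero (fun n => dist_nonneg) (fun n => ?_) tendsto_one_div_add_atTop_nhds_zero_nat
    exact ((mem_ball.1 (hqb n)).trans_le (min_le_right _ _)).le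
  have hqlim' : Tendsto (fun n => q (φ n)) atTop (𝓝 p) := hqlim.comp hφ.tendsto_atTop
  have hy₀R : R ≤ ‖y₀ - p‖ :=
    ge_of_tendsto' ((hylim.sub_const p).norm) fun n => hyR (φ n)
  have hR2 : 0 < R / 2 := by linarith
  obtain ⟨AX, hAXX, hAX, hAXb, δ₁, hδ₁, hA₁⟩ := exists_small_connected hXlc hpZ.1 hR2
  obtain ⟨AY, hAYY, hAY, hAYb, δ₂, hδ₂, hA₂⟩ := exists_small_connected hYlc hpZ.2 hR2
  obtain ⟨BX, hBXX, hBX, hBXb, δ₃, hδ₃, hB₁⟩ := exists_small_connected hXlc hy₀T.1.1 hR2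
  obtain ⟨BY, hBYY, hBY, hBYb, δ₄, hδ₄, hB₂⟩ := exists_small_connected hYlc hy₀T.1.2 hR2
  have hev : ∀ᶠ n in atTop, q (φ n) ∈ AX ∧ q (φ n) ∈ AY ∧ y (φ n) ∈ BX ∧ y (φ n) ∈ BY := by
    filter_upwards [hqlim'.eventually (ball_mem_nhds p hδ₁),
      hqlim'.eventually (ball_mem_nhds p hδ₂), hylim.eventually (ball_mem_nhds y₀ hδ₃),
      hylim.eventually (ball_mem_nhds y₀ hδ₄)] with n h1 h2 h3 h4
    exact ⟨hA₁ ⟨(hqT _).1.1, h1⟩, hA₂ ⟨(hqT _).1.2, h2⟩, hB₁ ⟨(hyT _).1.1, h3⟩,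
      hB₂ ⟨(hyT _).1.2, h4⟩⟩
  obtain ⟨n, hn1, hn2, hn3, hn4⟩ := hev.exists
  obtain ⟨F, hFT, hF, hF', hFU, hqF⟩ := exists_clopen_piece hT
    (isOpen_compl_singleton (x := p)) (hqT (φ n))
    (fun z hz h => hpK (φ n) (by rw [mem_singleton_iff] at h; rwa [h] at hz))
  have hpF : p ∈ Fᶜ := fun h => hFU h rfl
  obtain ⟨m, ⟨hm1, hm2, hm3, hm4⟩, hmF⟩ :=
    (hev.and (hqlim'.eventually (hF.isClosed.isOpen_compl.mem_nhds hpF))).exists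
  have hdis : Disjoint F (((X ∩ Y) ∩ closedBall p R) \ F) := disjoint_sdiff_right
  have hun : F ∪ (((X ∩ Y) ∩ closedBall p R) \ F) = (X ∩ Y) ∩ closedBall p R :=
    union_sdiff_cancel hFT
  have hKF := subset_of_split isPreconnected_connectedComponentIn hF.isClosed hF'.isClosed hdis
    ((connectedComponentIn_subset ((X ∩ Y) ∩ closedBall p R) (q (φ n))).trans hun.superset)
    ⟨_, mem_connectedComponentIn (hqT (φ n)), hqF⟩
  have hLF := subset_of_split isPreconnected_connectedComponentIn hF'.isClosed hF.isClosed hdis.symm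
    ((connectedComponentIn_subset ((X ∩ Y) ∩ closedBall p R) (q (φ m))).trans
      ((union_comm _ _).trans hun).superset)
    ⟨_, mem_connectedComponentIn (hqT (φ m)), hqT (φ m), hmF⟩
  exact core_contradiction hX hY hXc hYc (p := p) (y := y₀) (r := R / 2) (R := R) (ρ := R / 2)
    hR2 (by linarith) (by linarith) hF hF' hdis hun
    isPreconnected_connectedComponentIn isPreconnected_connectedComponentIn hKF hLF
    (mem_connectedComponentIn (hqT (φ n))) (hyK (φ n))
    (mem_connectedComponentIn (hqT (φ m))) (hyK (φ m))
    hAX hAY hBX hBY hAXX hAYY hBXX hBYY hAXb hAYb hBXb hBYb hn1 hm1 hn2 hm2 hn3 hm3 hn4 hm4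

/-- If `X` and `Y` are locally connected continua in the plane neither of which separates
the plane, then every connected component of `X ∩ Y` is locally connected. -/
theorem component_of_inter_locallyConnected
    (X Y : Set (EuclideanSpace ℝ (Fin 2)))
    (hXcpt : IsCompact X) (hYcpt : IsCompact Y)
    (hXconn : IsConnected X) (hYconn : IsConnected Y)
    (hXlc : LocallyConnectedSpace X) (hYlc : LocallyConnectedSpace Y)
    (hXc : IsConnected Xᶜ) (hYc : IsConnected Yᶜ) :
    ∀ x ∈ X ∩ Y, LocallyConnectedSpace ↥(connectedComponentIn (X ∩ Y) x) := by
  intro x hx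
  let e : EuclideanSpace ℝ (Fin 2) ≃ₜ ℂ :=
    Complex.orthonormalBasisOneI.repr.symm.toHomeomorph
  have hlc : ∀ S : Set (EuclideanSpace ℝ (Fin 2)), LocallyConnectedSpace S →
      LocallyConnectedSpace ↥(e '' S) := fun S _ => (e.image S).symm.locallyConnectedSpace
  have hpc : ∀ S : Set (EuclideanSpace ℝ (Fin 2)), IsConnected Sᶜ →
      IsPreconnected (e '' S)ᶜ := fun S hS => by
    rw [← image_compl_eq e.bijective]
    exact hS.isPreconnected.image _ e.continuous.continuousOn
  have main := component_locallyConnected_complex (e '' X) (e '' Y)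
    (hXcpt.image e.continuous) (hYcpt.image e.continuous) (hlc X hXlc) (hlc Y hYlc)
    (hpc X hXc) (hpc Y hYc) (e x)
  rw [← image_inter e.injective, ← e.image_connectedComponentIn hx] at main
  exact (e.image _).locallyConnectedSpace
end
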